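/- arXiv:2012.01492 — 2 statements merged into one kernel-verified Lean document; each statement's English description precedes it below -/
import Mathlib

section
/- For all constants c > 0 and L ≥ 1 there exist constants C > 0 and δ > 0 with the following property. Let n, d be positive integers with dn even and d ≤ δn, let H be a graph on [n] with d_i^H ≤ d for every i and with dn − 2|H| ≥ c·dn, and let F be a set of at most L edges of the complete graph K_n that is disjoint from the edge set of H; suppose the set of d-regular graphs on [n] containing H is nonempty. Let λ_F = P(F ⊆ 𝒢(n,d)). Then P(F ⊆ 𝒢(n,d) | H ⊆ 𝒢(n,d)) ≤ λ_F·(1 + C·(1/n + |H|/(dn) + d²/n²)). -/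
open Filter

noncomputable section

/-- The degree of the vertex `v` in the simple graph `G` on `[n]`. -/
def deg {n : ℕ} (G : SimpleGraph (Fin n)) (v : Fin n) : ℕ := (G.neighborSet v).ncard

/-- The number of edges of `G`. -/
def nedges {n : ℕ} (G : SimpleGraph (Fin n)) : ℕ := G.edgeSet.ncard

/-- The probability that a graph chosen uniformly at random among all simple graphs on `[n]`
satisfying `base` also satisfies `Q`. -/
def prob {n : ℕ} (base Q : SimpleGraph (Fin n) → Prop) : ℝ :=
  (Nat.card {G : SimpleGraph (Fin n) // base G ∧ Q G} : ℝ) /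
    (Nat.card {G : SimpleGraph (Fin n) // base G} : ℝ)

/-!
If `uv` and `xw` are edges of a `d`-regular graph `G` outside `K`, while `uw` and `vx` are
non-edges, replace them by `uw` and `vx`. This switching is a bijection between two sets of pairs
(graph, switch), and weighting each switch by the reciprocal of the number of admissible `x` makes
the number of `d`-regular graphs above `K` through `uv` comparable, up to explicit loss terms, to
the number through `uw`, for every `w`. Averaging over `w` determines the number through `uv` up to
a relative error, because `u` has degree `d`. The losses come from codegrees in `G`, whose first two
moments are controlled by the crude bound `O(d / n)` for the probability of each further edge, which
is itself a consequence of the unweighted switching.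

The main terms for `K = H ⊔ F` and for `K = F` differ only in the favourable direction, since
`(d - k) / (n - 1 - k)` decreases in the degree `k` of `u` in `K`. Hence adding one edge to
`H ⊔ F` reduces the number of graphs at least as much as adding it to `F`, up to a factor `1 + O(ε)`
with `ε = 1 / n + |H| / (d n) + d² / n²`, and the theorem follows by multiplying over the edges.
-/

namespace RegularSwitching

open Finset

variable {V : Type*}

section Indicators

variable (G K : SimpleGraph V) (x y : V)

open Classical in
/-- The real-valued adjacency indicator of a graph. -/
def ind (G : SimpleGraph V) (x y : V) : ℝ := if G.Adj x y then 1 else 0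

lemma ind_of_adj {G : SimpleGraph V} {x y : V} (h : G.Adj x y) : ind G x y = 1 := if_pos h

lemma ind_of_not_adj {G : SimpleGraph V} {x y : V} (h : ¬G.Adj x y) : ind G x y = 0 := if_neg h

lemma ind_congr {G K : SimpleGraph V} {x y z t : V} (h : G.Adj x y ↔ K.Adj z t) :
    ind G x y = ind K z t := by
  classical exact if_congr h rfl rfl

lemma ind_comm : ind G x y = ind G y x := ind_congr (G.adj_comm x y)

lemma ind_self : ind G x x = 0 := ind_of_not_adj G.irrefl

lemma ind_nonneg : 0 ≤ ind G x y := by unfold ind; split_ifs <;> norm_num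

lemma ind_le_one : ind G x y ≤ 1 := by unfold ind; split_ifs <;> norm_num

lemma ind_mul_self : ind G x y * ind G x y = ind G x y := by unfold ind; split_ifs <;> norm_num

variable {G K}

lemma ind_mono (h : K ≤ G) : ind K x y ≤ ind G x y := by
  by_cases hK : K.Adj x y
  · rw [ind_of_adj hK, ind_of_adj (h hK)]
  · rw [ind_of_not_adj hK]
    exact ind_nonneg G x y

lemma ind_sdiff_eq_mul : ind (G \ K) x y = (1 - ind K x y) * ind G x y := by
  by_cases hG : G.Adj x y <;> by_cases hK : K.Adj x y <;> simp [ind, hG, hK]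

lemma ind_mul_of_le (h : K ≤ G) : ind K x y * ind G x y = ind K x y := by
  by_cases hK : K.Adj x y
  · rw [ind_of_adj (h hK), mul_one]
  · rw [ind_of_not_adj hK, zero_mul]

lemma ind_sdiff (h : K ≤ G) : ind (G \ K) x y = ind G x y - ind K x y := by
  have := ind_mul_of_le x y h
  rw [ind_sdiff_eq_mul]
  linarith

lemma ind_compl [DecidableEq V] : ind Gᶜ x y = 1 - ind G x y - if x = y then 1 else 0 := by
  by_cases hxy : x = y
  · subst hxy
    simp [ind]
  · by_cases hG : G.Adj x y <;> simp [ind, hG, hxy]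

end Indicators

section Walks

variable [Fintype V] (A B G K : SimpleGraph V) (v w : V)

/-- The degree of a vertex, as a real number. -/
def rdeg (G : SimpleGraph V) (v : V) : ℝ := ∑ y, ind G v y

lemma rdeg_nonneg : 0 ≤ rdeg G v := sum_nonneg fun _ _ => ind_nonneg _ _ _

lemma sum_ind_left : ∑ y, ind G y v = rdeg G v := sum_congr rfl fun y _ => ind_comm G y v

lemma rdeg_eq_ncard_neighborSet : rdeg G v = (G.neighborSet v).ncard := by
  classical
  rw [Set.ncard_eq_toFinset_card', rdeg]
  simp [ind]

lemma sum_rdeg : ∑ v, rdeg G v = 2 * G.edgeSet.ncard := by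
  classical
  simp_rw [rdeg_eq_ncard_neighborSet, Set.ncard_eq_toFinset_card']
  exact_mod_cast G.sum_degrees_eq_twice_card_edges

lemma rdeg_le_two_mul_ncard_edgeSet : rdeg G v ≤ 2 * G.edgeSet.ncard :=
  (sum_rdeg G).symm ▸ single_le_sum (fun v _ => rdeg_nonneg G v) (mem_univ v)

/-- The number of walks of length two from `v` to `w` with first step in `A` and second step
in `B`. For instance, `walks G G v w` is the number of common neighbours of `v` and `w`, and
`walks Gᶜ G v w` is the number of neighbours of `w` that are neither `v` nor adjacent to `v`. -/
def walks (A B : SimpleGraph V) (v w : V) : ℝ := ∑ x, ind A v x * ind B x w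

lemma walks_comm : walks A B v w = walks B A w v :=
  sum_congr rfl fun x _ => by rw [ind_comm A v x, ind_comm B x w, mul_comm]

lemma walks_nonneg : 0 ≤ walks A B v w :=
  sum_nonneg fun _ _ => mul_nonneg (ind_nonneg _ _ _) (ind_nonneg _ _ _)

lemma walks_le_rdeg_left : walks A B v w ≤ rdeg A v :=
  sum_le_sum fun _ _ => mul_le_of_le_one_right (ind_nonneg _ _ _) (ind_le_one _ _ _)

lemma walks_le_rdeg_right : walks A B v w ≤ rdeg B w :=
  walks_comm A B v w ▸ walks_le_rdeg_left B A w v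

lemma walks_compl_left : walks Gᶜ B v w = rdeg B w - walks G B v w - ind B v w := by
  classical
  simp only [walks, ind_compl, sub_mul, sum_sub_distrib, one_mul, sum_ind_left, ite_mul, zero_mul,
    sum_ite_eq, mem_univ, if_true]

lemma walks_compl_right : walks A Gᶜ v w = rdeg A v - walks A G v w - ind A v w := by
  rw [walks_comm, walks_compl_left, walks_comm, ind_comm]

lemma sum_walks_right : ∑ w, walks A B v w = ∑ x, ind A v x * rdeg B x := by
  simp only [walks, rdeg, mul_sum]
  exact sum_comm

variable {A B G K}

lemma rdeg_mono (h : K ≤ G) : rdeg K v ≤ rdeg G v := sum_le_sum fun y _ => ind_mono v y h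

lemma rdeg_sdiff (h : K ≤ G) : rdeg (G \ K) v = rdeg G v - rdeg K v := by
  simp only [rdeg, ind_sdiff _ _ h, sum_sub_distrib]

lemma rdeg_compl : rdeg Gᶜ v = Fintype.card V - 1 - rdeg G v := by
  classical
  simp only [rdeg, ind_compl, sum_sub_distrib, sum_const, sum_ite_eq, mem_univ, if_true,
    card_univ, nsmul_eq_mul, mul_one]
  ring

lemma walks_mono_right (h : K ≤ G) : walks A K v w ≤ walks A G v w :=
  sum_le_sum fun _ _ => mul_le_mul_of_nonneg_left (ind_mono _ _ h) (ind_nonneg _ _ _)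

lemma walks_sdiff_right (h : K ≤ G) : walks A (G \ K) v w = walks A G v w - walks A K v w := by
  simp only [walks, ind_sdiff _ _ h, mul_sub, sum_sub_distrib]

end Walks

section RegularAbove

variable [Fintype V]

open Classical in
/-- The `d`-regular graphs containing `K`. -/
def regularAbove (d : ℕ) (K : SimpleGraph V) : Finset (SimpleGraph V) :=
  univ.filter fun G => (∀ v, rdeg G v = d) ∧ K ≤ G

/-- The number of `d`-regular graphs containing `K`, as a real number. -/
def regularCount (d : ℕ) (K : SimpleGraph V) : ℝ := #(regularAbove d K)

variable {d : ℕ} {G K K' : SimpleGraph V}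

lemma mem_regularAbove : G ∈ regularAbove d K ↔ (∀ v, rdeg G v = d) ∧ K ≤ G := by
  simp only [regularAbove, mem_filter, mem_univ, true_and]

lemma le_of_mem (h : G ∈ regularAbove d K) : K ≤ G := (mem_regularAbove.1 h).2

lemma rdeg_of_mem (h : G ∈ regularAbove d K) (v : V) : rdeg G v = d := (mem_regularAbove.1 h).1 v

lemma rdeg_le_of_mem (h : G ∈ regularAbove d K) (v : V) : rdeg K v ≤ d :=
  rdeg_of_mem h v ▸ rdeg_mono v (le_of_mem h)

lemma regularCount_nonneg (d : ℕ) (K : SimpleGraph V) : 0 ≤ regularCount d K := Nat.cast_nonneg _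

lemma regularAbove_anti (d : ℕ) (h : K ≤ K') : regularAbove d K' ⊆ regularAbove d K :=
  fun _ hG => mem_regularAbove.2 ⟨rdeg_of_mem hG, h.trans (le_of_mem hG)⟩

lemma regularCount_anti (d : ℕ) (h : K ≤ K') : regularCount d K' ≤ regularCount d K :=
  Nat.cast_le.2 (card_le_card (regularAbove_anti d h))

lemma walks_compl_left_comm (h : G ∈ regularAbove d K) (v w : V) :
    walks Gᶜ G v w = walks Gᶜ G w v := by
  rw [walks_compl_left, walks_compl_left, rdeg_of_mem h, rdeg_of_mem h, walks_comm G G,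
    ind_comm G v w]

lemma walks_compl_left_of_mem (h : G ∈ regularAbove d K) (v w : V) :
    walks Gᶜ G v w = d - walks G G v w - ind G v w := by
  rw [walks_compl_left, rdeg_of_mem h]

end RegularAbove

section Switching

/-- The four-cycle on `u`, `v`, `x`, `w`, whose edges are exchanged by the switching that replaces
`uv`, `xw` by `uw`, `vx`. -/
def fourCycle (u v w x : V) : SimpleGraph V :=
  SimpleGraph.edge u v ⊔ SimpleGraph.edge x w ⊔ SimpleGraph.edge u w ⊔ SimpleGraph.edge v x

/-- The condition under which the edges `uv`, `xw` of `G`, none of them in `K`, can be replaced by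
the non-edges `uw`, `vx`. -/
def Switchable (K G : SimpleGraph V) (u v w x : V) : Prop :=
  (G \ K).Adj u v ∧ Gᶜ.Adj u w ∧ Gᶜ.Adj v x ∧ (G \ K).Adj x w

variable {d : ℕ} {G K : SimpleGraph V} {u v w x p q : V}

lemma fourCycle_swap (u v w x : V) : fourCycle u v w x = fourCycle u w v x := by
  simp only [fourCycle, SimpleGraph.edge_comm x w, SimpleGraph.edge_comm x v]
  ac_rfl

lemma fourCycle_reverse (u v w x : V) : fourCycle u v w x = fourCycle v u x w := by
  simp only [fourCycle, SimpleGraph.edge_comm x w, SimpleGraph.edge_comm u v]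
  ac_rfl

lemma Switchable.reverse (h : Switchable K G u v w x) : Switchable K G v u x w :=
  ⟨h.1.symm, h.2.2.1, h.2.1, h.2.2.2.symm⟩

lemma fourCycle_rotate (u v w x : V) : fourCycle u v w x = fourCycle w x u v := by
  simp only [fourCycle, SimpleGraph.edge_comm x w, SimpleGraph.edge_comm u v,
    SimpleGraph.edge_comm u w, SimpleGraph.edge_comm v x]
  ac_rfl

lemma Switchable.rotate (h : Switchable K G u v w x) : Switchable K G w x u v :=
  ⟨h.2.2.2.symm, h.2.1.symm, h.2.2.1.symm, h.1.symm⟩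

lemma Switchable.ne_diagonal (h : Switchable K G u v w x) : u ≠ x := by
  rintro rfl
  exact h.2.1.2 h.2.2.2.1

lemma fourCycle_adj_left (huv : u ≠ v) (huw : u ≠ w) (hux : u ≠ x) :
    (fourCycle u v w x).Adj u q ↔ q = v ∨ q = w := by
  simp only [fourCycle, SimpleGraph.sup_adj, SimpleGraph.edge_adj]
  grind

lemma not_fourCycle_adj (hu : p ≠ u) (hv : p ≠ v) (hw : p ≠ w) (hx : p ≠ x) :
    ¬(fourCycle u v w x).Adj p q := by
  simp only [fourCycle, SimpleGraph.sup_adj, SimpleGraph.edge_adj]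
  grind

lemma symmDiff_adj (G C : SimpleGraph V) (p q : V) :
    (symmDiff G C).Adj p q ↔ G.Adj p q ∧ ¬C.Adj p q ∨ C.Adj p q ∧ ¬G.Adj p q := by
  simp only [symmDiff, SimpleGraph.sup_adj, SimpleGraph.sdiff_adj]

lemma Switchable.symmDiff_adj_iff [DecidableEq V] (h : Switchable K G u v w x) (q : V) :
    (symmDiff G (fourCycle u v w x)).Adj u q ↔ G.Adj u (Equiv.swap v w q) := by
  have huv := h.1.1
  have huw := h.2.1.2
  rw [symmDiff_adj, fourCycle_adj_left huv.ne h.2.1.1 h.ne_diagonal, Equiv.swap_apply_def]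
  grind

lemma Switchable.ind_symmDiff [DecidableEq V] (h : Switchable K G u v w x) (q : V) :
    ind (symmDiff G (fourCycle u v w x)) u q = ind G u (Equiv.swap v w q) :=
  ind_congr (h.symmDiff_adj_iff q)

lemma Switchable.ind_compl_symmDiff [DecidableEq V] (h : Switchable K G u v w x) (q : V) :
    ind (symmDiff G (fourCycle u v w x))ᶜ u q = ind Gᶜ u (Equiv.swap v w q) := by
  have hne : u = q ↔ u = Equiv.swap v w q := by
    rw [eq_comm (b := Equiv.swap v w q), Equiv.swap_apply_eq_iff,
      Equiv.swap_apply_of_ne_of_ne h.1.1.ne h.2.1.1, eq_comm]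
  simp only [ind_compl, h.ind_symmDiff, hne]

lemma ind_symmDiff_fourCycle_of_ne (hu : p ≠ u) (hv : p ≠ v) (hw : p ≠ w) (hx : p ≠ x) (q : V) :
    ind (symmDiff G (fourCycle u v w x)) p q = ind G p q :=
  ind_congr (by simp [symmDiff_adj, not_fourCycle_adj hu hv hw hx])

lemma Switchable.switch (hK : K ≤ G) (h : Switchable K G u v w x) :
    Switchable K (symmDiff G (fourCycle u v w x)) u w v x := by
  classical
  have huv := h.symmDiff_adj_iff v
  have huw := h.symmDiff_adj_iff w
  have hvx := (fourCycle_reverse u v w x ▸ h.reverse.symmDiff_adj_iff x)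
  have hwx := (fourCycle_rotate u v w x ▸ h.rotate.symmDiff_adj_iff x)
  rw [Equiv.swap_apply_left] at huv hwx
  rw [Equiv.swap_apply_right] at huw hvx
  exact ⟨⟨huw.2 h.1.1, fun hk => h.2.1.2 (hK hk)⟩, ⟨h.1.1.ne, fun hc => h.2.1.2 (huv.1 hc)⟩,
    ⟨h.2.2.2.1.ne', fun hc => h.2.1.2 (hwx.1 hc).symm⟩,
    ⟨(hvx.2 h.1.1.symm).symm, fun hk => h.2.2.1.2 (hK hk).symm⟩⟩

lemma Switchable.le_symmDiff (hK : K ≤ G) (h : Switchable K G u v w x) :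
    K ≤ symmDiff G (fourCycle u v w x) := by
  have hdisj : Disjoint K (fourCycle u v w x) := by
    simp only [fourCycle, disjoint_sup_right, SimpleGraph.disjoint_edge]
    exact ⟨⟨⟨h.1.2, h.2.2.2.2⟩, fun hk => h.2.1.2 (hK hk)⟩, fun hk => h.2.2.1.2 (hK hk)⟩
  exact (le_sdiff.2 ⟨hK, hdisj⟩).trans le_sup_left

open Classical in
lemma ite_switchable (K G : SimpleGraph V) (u v w x : V) :
    (if Switchable K G u v w x then (1 : ℝ) else 0) =
      ind (G \ K) u v * ind Gᶜ u w * (ind Gᶜ v x * ind (G \ K) x w) := by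
  by_cases huv : (G \ K).Adj u v
  · by_cases huw : Gᶜ.Adj u w
    · by_cases hvx : Gᶜ.Adj v x <;> by_cases hxw : (G \ K).Adj x w <;>
        simp only [Switchable, ind, huv, huw, hvx, hxw, and_self, and_false, and_true, if_true,
          if_false, mul_one, mul_zero]
    · rw [ind_of_not_adj huw, if_neg fun h => huw h.2.1]
      ring
  · rw [ind_of_not_adj huv, if_neg fun h => huv h.1]
    ring

variable [Fintype V]

lemma Switchable.rdeg_symmDiff_left (h : Switchable K G u v w x) :
    rdeg (symmDiff G (fourCycle u v w x)) u = rdeg G u := by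
  classical
  simp only [rdeg, h.ind_symmDiff]
  exact Equiv.sum_comp (Equiv.swap v w) (ind G u)

lemma Switchable.rdeg_symmDiff (h : Switchable K G u v w x) (p : V) :
    rdeg (symmDiff G (fourCycle u v w x)) p = rdeg G p := by
  by_cases hu : p = u
  · exact hu ▸ h.rdeg_symmDiff_left
  by_cases hv : p = v
  · rw [hv, fourCycle_reverse, h.reverse.rdeg_symmDiff_left]
  by_cases hw : p = w
  · rw [hw, fourCycle_rotate, h.rotate.rdeg_symmDiff_left]
  by_cases hx : p = x
  · rw [hx, fourCycle_rotate, fourCycle_reverse, h.rotate.reverse.rdeg_symmDiff_left]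
  exact sum_congr rfl fun q _ => ind_symmDiff_fourCycle_of_ne hu hv hw hx q

lemma Switchable.walks_compl_symmDiff (h : Switchable K G u v w x) :
    walks (symmDiff G (fourCycle u v w x))ᶜ (symmDiff G (fourCycle u v w x)) v w =
      walks Gᶜ G v w := by
  classical
  have hv := h.reverse.ind_compl_symmDiff
  have hw := h.rotate.ind_symmDiff
  rw [← fourCycle_reverse] at hv
  rw [← fourCycle_rotate, Equiv.swap_comm] at hw
  simp only [walks, ind_comm _ _ w, hv, hw]
  exact Equiv.sum_comp (Equiv.swap u x) fun q => ind Gᶜ v q * ind G w q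

lemma Switchable.symmDiff_mem (hG : G ∈ regularAbove d K) (h : Switchable K G u v w x) :
    symmDiff G (fourCycle u v w x) ∈ regularAbove d K :=
  mem_regularAbove.2
    ⟨fun p => (h.rdeg_symmDiff p).trans (rdeg_of_mem hG p), h.le_symmDiff (le_of_mem hG)⟩

open Classical in
lemma sum_switchable (d : ℕ) (K : SimpleGraph V) (u v w x : V) (φ : ℝ → ℝ) :
    ∑ G ∈ regularAbove d K with Switchable K G u v w x, φ (walks Gᶜ G v w) =
      ∑ G ∈ regularAbove d K with Switchable K G u w v x, φ (walks Gᶜ G w v) := by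
  have hmaps : ∀ v w : V, ∀ G ∈ {G ∈ regularAbove d K | Switchable K G u v w x},
      symmDiff G (fourCycle u v w x) ∈ {G ∈ regularAbove d K | Switchable K G u w v x} := by
    intro v w G hG
    obtain ⟨hG, hS⟩ := mem_filter.1 hG
    exact mem_filter.2 ⟨hS.symmDiff_mem hG, hS.switch (le_of_mem hG)⟩
  refine sum_bij' (fun G _ => symmDiff G (fourCycle u v w x))
    (fun G _ => symmDiff G (fourCycle u w v x)) (hmaps v w) (hmaps w v) ?_ ?_ ?_
  · intro G _
    rw [fourCycle_swap u w v x, symmDiff_symmDiff_cancel_right]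
  · intro G _
    rw [fourCycle_swap u w v x, symmDiff_symmDiff_cancel_right]
  · intro G hG
    obtain ⟨hG, hS⟩ := mem_filter.1 hG
    rw [walks_compl_left_comm (hS.symmDiff_mem hG) w v, hS.walks_compl_symmDiff]

/-- Both sides count switchings at `u` between `v` and `w`, weighted by `φ`, from the graphs
containing `uv` and from the graphs containing `uw` respectively. -/
theorem sum_switch (d : ℕ) (K : SimpleGraph V) (u v w : V) (φ : ℝ → ℝ) :
    ∑ G ∈ regularAbove d K, ind (G \ K) u v * ind Gᶜ u w *
        (walks Gᶜ (G \ K) v w * φ (walks Gᶜ G v w)) =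
      ∑ G ∈ regularAbove d K, ind (G \ K) u w * ind Gᶜ u v *
        (walks Gᶜ (G \ K) w v * φ (walks Gᶜ G w v)) := by
  classical
  have hcount : ∀ v w : V,
      ∑ G ∈ regularAbove d K, ind (G \ K) u v * ind Gᶜ u w *
          (walks Gᶜ (G \ K) v w * φ (walks Gᶜ G v w)) =
        ∑ x, ∑ G ∈ regularAbove d K with Switchable K G u v w x, φ (walks Gᶜ G v w) := by
    intro v w
    simp_rw [sum_filter]
    rw [sum_comm]
    refine sum_congr rfl fun G _ => ?_
    rw [walks, sum_mul, mul_sum]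
    refine sum_congr rfl fun x _ => ?_
    rw [← mul_assoc, ← ite_switchable, ite_mul, one_mul, zero_mul]
  rw [hcount, hcount]
  exact sum_congr rfl fun x _ => sum_switchable d K u v w x φ

end Switching

section EdgeProbability

variable [Fintype V] {B : ℝ} {d j : ℕ} {G K : SimpleGraph V} {u v w : V}

lemma le_sum_ind_compl_mul (G : SimpleGraph V) (u : V) {f : V → ℝ} {M : ℝ} (hf : ∀ w, f w ≤ M) :
    ∑ w, f w - M * (rdeg G u + 1) ≤ ∑ w, ind Gᶜ u w * f w := by
  classical
  have hsplit : ∑ w, ind Gᶜ u w * f w = ∑ w, f w - ∑ w, ind G u w * f w - f u := by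
    simp only [ind_compl, sub_mul, sum_sub_distrib, one_mul, ite_mul, zero_mul, sum_ite_eq,
      mem_univ, if_true]
  have hnbr : ∑ w, ind G u w * f w ≤ rdeg G u * M := by
    rw [rdeg, sum_mul]
    exact sum_le_sum fun w _ => mul_le_mul_of_nonneg_left (hf w) (ind_nonneg _ _ _)
  linarith [hf u]

lemma sum_rdeg_sdiff (hG : G ∈ regularAbove d K) :
    ∑ x, rdeg (G \ K) x = d * Fintype.card V - 2 * K.edgeSet.ncard := by
  simp only [rdeg_sdiff _ (le_of_mem hG), rdeg_of_mem hG, sum_sub_distrib, sum_rdeg, sum_const,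
    card_univ, nsmul_eq_mul, mul_comm (d : ℝ)]

lemma rdeg_sdiff_le (hG : G ∈ regularAbove d K) (x : V) : rdeg (G \ K) x ≤ d := by
  rw [rdeg_sdiff _ (le_of_mem hG), rdeg_of_mem hG]
  linarith [rdeg_nonneg K x]

lemma le_sum_ind_compl_mul_walks (hG : G ∈ regularAbove d K) (u v : V) :
    (d * Fintype.card V - 2 * K.edgeSet.ncard - 2 * (d * (d + 1)) : ℝ) ≤
      ∑ w, ind Gᶜ u w * walks Gᶜ (G \ K) v w := by
  have hu := le_sum_ind_compl_mul G u (f := walks Gᶜ (G \ K) v) fun w =>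
    (walks_le_rdeg_right _ _ v w).trans (rdeg_sdiff_le hG w)
  have hv := le_sum_ind_compl_mul G v (rdeg_sdiff_le hG)
  rw [rdeg_of_mem hG] at hu hv
  rw [sum_walks_right] at hu
  rw [sum_rdeg_sdiff hG] at hv
  linarith

lemma sub_mul_sum_ind_sdiff_le (d : ℕ) (K : SimpleGraph V) (u v : V) :
    (d * Fintype.card V - 2 * K.edgeSet.ncard - 2 * (d * (d + 1))) *
        ∑ G ∈ regularAbove d K, ind (G \ K) u v ≤
      (d - rdeg K u) * d * regularCount d K := by
  calc (d * Fintype.card V - 2 * K.edgeSet.ncard - 2 * (d * (d + 1))) *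
        ∑ G ∈ regularAbove d K, ind (G \ K) u v
      ≤ ∑ G ∈ regularAbove d K, ∑ w, ind (G \ K) u v * ind Gᶜ u w * walks Gᶜ (G \ K) v w := by
        rw [mul_sum]
        refine sum_le_sum fun G hG => ?_
        simp_rw [mul_assoc, ← mul_sum]
        rw [mul_comm]
        exact mul_le_mul_of_nonneg_left (le_sum_ind_compl_mul_walks hG u v) (ind_nonneg _ _ _)
    _ = ∑ G ∈ regularAbove d K, ∑ w, ind (G \ K) u w * ind Gᶜ u v * walks Gᶜ (G \ K) w v := by
        rw [sum_comm, sum_comm (s := regularAbove d K)]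
        exact sum_congr rfl fun w _ => by simpa only [mul_one] using sum_switch d K u v w fun _ => 1
    _ ≤ ∑ _G ∈ regularAbove d K, (d - rdeg K u) * d := by
        refine sum_le_sum fun G hG => ?_
        rw [← rdeg_of_mem hG u, ← rdeg_sdiff u (le_of_mem hG), rdeg_of_mem hG, rdeg, sum_mul]
        refine sum_le_sum fun w _ => ?_
        rw [mul_assoc]
        refine mul_le_mul_of_nonneg_left ?_ (ind_nonneg _ _ _)
        exact (mul_le_of_le_one_left (walks_nonneg _ _ _ _) (ind_le_one _ _ _)).trans
          ((walks_le_rdeg_right _ _ _ _).trans (rdeg_sdiff_le hG v))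
    _ = (d - rdeg K u) * d * regularCount d K := by
        rw [sum_const, nsmul_eq_mul, regularCount]
        ring

/-- The graph `K` is sparse enough, with room for `j` more edges, that a `d`-regular graph
containing it has every prescribed edge with probability at most `B * d / n`, where `n` is the
number of vertices. -/
structure IsSparse (B : ℝ) (d : ℕ) (K : SimpleGraph V) (j : ℕ) : Prop where
  nonneg : 0 ≤ B
  pos : 0 < d
  le_mul : (d * Fintype.card V : ℝ) ≤
    B * (d * Fintype.card V - 2 * (K.edgeSet.ncard + j) - 2 * (d * (d + 1)))

namespace IsSparse

lemma mono {K' : SimpleGraph V} {j' : ℕ} (h : IsSparse B d K j)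
    (hK : K'.edgeSet.ncard + j' ≤ K.edgeSet.ncard + j) : IsSparse B d K' j' where
  nonneg := h.nonneg
  pos := h.pos
  le_mul := by
    have hK' : (K'.edgeSet.ncard + j' : ℝ) ≤ K.edgeSet.ncard + j := by exact_mod_cast hK
    refine h.le_mul.trans (mul_le_mul_of_nonneg_left ?_ h.nonneg)
    linarith

lemma cast_pos (h : IsSparse B d K j) : (0 : ℝ) < d := Nat.cast_pos.2 h.pos

lemma mul_sum_ind_sdiff_le (h : IsSparse B d K 0) (u v : V) :
    Fintype.card V * ∑ G ∈ regularAbove d K, ind (G \ K) u v ≤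
      B * (d - rdeg K u) * regularCount d K := by
  refine le_of_mul_le_mul_left ?_ h.cast_pos
  have hsum : 0 ≤ ∑ G ∈ regularAbove d K, ind (G \ K) u v := sum_nonneg fun _ _ => ind_nonneg _ _ _
  have hsparse := mul_le_mul_of_nonneg_right h.le_mul hsum
  have hbasic := mul_le_mul_of_nonneg_left (sub_mul_sum_ind_sdiff_le d K u v) h.nonneg
  rw [Nat.cast_zero, add_zero] at hsparse
  linarith

end IsSparse

end EdgeProbability

section PrescribedEdges

open Classical in
/-- The indicator that all edges in `S` are edges of `G`. -/
def indEdges (S : Finset (Sym2 V)) (G : SimpleGraph V) : ℝ :=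
  if (S : Set (Sym2 V)) ⊆ G.edgeSet then 1 else 0

variable {B : ℝ} {d j : ℕ} {G K : SimpleGraph V} {S : Finset (Sym2 V)} {u v z t : V}

lemma indEdges_nonneg (S : Finset (Sym2 V)) (G : SimpleGraph V) : 0 ≤ indEdges S G := by
  unfold indEdges
  split_ifs <;> norm_num

lemma indEdges_empty (G : SimpleGraph V) : indEdges ∅ G = 1 := by simp [indEdges]

lemma indEdges_insert [DecidableEq V] (S : Finset (Sym2 V)) (G : SimpleGraph V) (a b : V) :
    indEdges (insert s(a, b) S) G = ind G a b * indEdges S G := by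
  have hiff : (↑(insert s(a, b) S) : Set (Sym2 V)) ⊆ G.edgeSet ↔
      G.Adj a b ∧ (S : Set (Sym2 V)) ⊆ G.edgeSet := by
    rw [coe_insert, Set.insert_subset_iff, SimpleGraph.mem_edgeSet]
  by_cases hab : G.Adj a b
  · rw [ind_of_adj hab, one_mul]
    classical exact if_congr (by simp only [hiff, hab, true_and]) rfl rfl
  · rw [ind_of_not_adj hab, zero_mul]
    exact if_neg fun h => hab (hiff.1 h).1

lemma indEdges_singleton (G : SimpleGraph V) (a b : V) : indEdges {s(a, b)} G = ind G a b := by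
  classical
  rw [← insert_empty_eq, indEdges_insert, indEdges_empty, mul_one]

lemma indEdges_eq_zero_of_isDiag {e : Sym2 V} (he : e ∈ S) (hdiag : e.IsDiag) :
    indEdges S G = 0 :=
  if_neg fun h => G.not_isDiag_of_mem_edgeSet (h he) hdiag

lemma ind_compl_mul_indEdges_of_mem (h : s(u, v) ∈ S) : ind Gᶜ u v * indEdges S G = 0 := by
  by_cases hc : Gᶜ.Adj u v
  · rw [indEdges, if_neg fun hS => hc.2 (hS h), mul_zero]
  · rw [ind_of_not_adj hc, zero_mul]

lemma ncard_edgeSet_sup_le [Finite V] (G H : SimpleGraph V) :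
    (G ⊔ H).edgeSet.ncard ≤ G.edgeSet.ncard + H.edgeSet.ncard := by
  rw [SimpleGraph.edgeSet_sup]
  exact Set.ncard_union_le _ _

lemma ncard_edgeSet_fromEdgeSet_le (S : Finset (Sym2 V)) :
    (SimpleGraph.fromEdgeSet (S : Set (Sym2 V))).edgeSet.ncard ≤ #S := by
  rw [SimpleGraph.edgeSet_fromEdgeSet, ← Set.ncard_coe_finset S]
  exact Set.ncard_le_ncard Set.sdiff_subset S.finite_toSet

variable [Fintype V]

lemma sum_indEdges_mul (d : ℕ) (K : SimpleGraph V) (hS : ∀ e ∈ S, ¬e.IsDiag)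
    (f : SimpleGraph V → ℝ) :
    ∑ G ∈ regularAbove d K, indEdges S G * f G =
      ∑ G ∈ regularAbove d (K ⊔ SimpleGraph.fromEdgeSet S), f G := by
  classical
  simp_rw [indEdges, ite_mul, one_mul, zero_mul]
  rw [← sum_filter]
  congr 1
  ext G
  have hdiff : (S : Set (Sym2 V)) \ Sym2.diagSet = S :=
    sdiff_eq_left.2 (Set.disjoint_left.2 fun e he => hS e he)
  simp only [mem_filter, mem_regularAbove, sup_le_iff, SimpleGraph.fromEdgeSet_le, hdiff,
    and_assoc]

lemma IsSparse.mul_sum_indEdges_mul_ind_sdiff_le (h : IsSparse B d K j) (hS : #S ≤ j)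
    (hzt : s(z, t) ∉ S) :
    Fintype.card V * ∑ G ∈ regularAbove d K, indEdges S G * ind (G \ K) z t ≤
      B * (d - rdeg K z) * ∑ G ∈ regularAbove d K, indEdges S G := by
  by_cases hdiag : ∃ e ∈ S, e.IsDiag
  · obtain ⟨e, he, hdiag⟩ := hdiag
    simp only [indEdges_eq_zero_of_isDiag he hdiag, zero_mul, sum_const_zero, mul_zero, le_refl]
  push Not at hdiag
  set K' := K ⊔ SimpleGraph.fromEdgeSet (S : Set (Sym2 V)) with hK'
  have hsum : ∑ G ∈ regularAbove d K, indEdges S G = regularCount d K' := by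
    simpa [regularCount] using sum_indEdges_mul d K hdiag fun _ => 1
  have hind : ∀ G : SimpleGraph V, ind (G \ K) z t = ind (G \ K') z t := fun G =>
    ind_congr (by simp [hK', hzt])
  rw [sum_indEdges_mul d K hdiag, hsum]
  simp_rw [hind]
  have hsparse : IsSparse B d K' 0 :=
    h.mono ((ncard_edgeSet_sup_le _ _).trans
      (Nat.add_le_add_left ((ncard_edgeSet_fromEdgeSet_le S).trans hS) _))
  refine (hsparse.mul_sum_ind_sdiff_le z t).trans
    (mul_le_mul_of_nonneg_right ?_ (regularCount_nonneg _ _))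
  exact mul_le_mul_of_nonneg_left (sub_le_sub_left (rdeg_mono z le_sup_left) _) h.nonneg

end PrescribedEdges

section Exchangeable

variable [Fintype V] {B : ℝ} {d : ℕ} {G K : SimpleGraph V} {u v w : V}

/-- Prescribing the edge `uw` outside `K` and the non-edge `uv` costs a factor of at most
`B * (d - rdeg K u) / n` in the total of the statistic `f` over the `d`-regular graphs containing
`K`, where `n` is the number of vertices. -/
def Exchangeable (B : ℝ) (d : ℕ) (K : SimpleGraph V) (u v w : V) (f : SimpleGraph V → ℝ) : Prop :=
  Fintype.card V * ∑ G ∈ regularAbove d K, ind (G \ K) u w * ind Gᶜ u v * f G ≤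
    B * (d - rdeg K u) * ∑ G ∈ regularAbove d K, f G

namespace Exchangeable

lemma add {f g : SimpleGraph V → ℝ} (hf : Exchangeable B d K u v w f)
    (hg : Exchangeable B d K u v w g) : Exchangeable B d K u v w (fun G => f G + g G) := by
  unfold Exchangeable at *
  simp only [mul_add, sum_add_distrib]
  exact add_le_add hf hg

lemma const_mul {f : SimpleGraph V → ℝ} {a : ℝ} (ha : 0 ≤ a) (hf : Exchangeable B d K u v w f) :
    Exchangeable B d K u v w (fun G => a * f G) := by
  unfold Exchangeable at *
  simp only [mul_left_comm _ a, ← mul_sum]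
  exact mul_le_mul_of_nonneg_left hf ha

lemma sum {ι : Type*} {f : ι → SimpleGraph V → ℝ} {s : Finset ι}
    (hf : ∀ i ∈ s, Exchangeable B d K u v w (f i)) :
    Exchangeable B d K u v w (fun G => ∑ i ∈ s, f i G) := by
  unfold Exchangeable at *
  simp only [mul_sum] at *
  rw [sum_comm, sum_comm (s := regularAbove d K)]
  exact sum_le_sum hf

end Exchangeable

namespace IsSparse

lemma exchangeable_indEdges (h : IsSparse B d K j) (hS : #S ≤ j)
    (hexch : s(u, w) ∈ S → s(u, v) ∈ S) : Exchangeable B d K u v w (indEdges S) := by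
  by_cases huw : s(u, w) ∈ S
  · simp only [Exchangeable, mul_assoc, ind_compl_mul_indEdges_of_mem (hexch huw), mul_zero,
      sum_const_zero, mul_sum]
    refine sum_nonneg fun G hG => mul_nonneg h.nonneg (mul_nonneg ?_ (indEdges_nonneg S G))
    exact sub_nonneg.2 (rdeg_le_of_mem hG u)
  refine le_trans (mul_le_mul_of_nonneg_left (sum_le_sum fun G _ => ?_) (Nat.cast_nonneg _))
    (h.mul_sum_indEdges_mul_ind_sdiff_le hS huw)
  rw [mul_comm (indEdges S G)]
  exact mul_le_mul_of_nonneg_right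
    (mul_le_of_le_one_right (ind_nonneg _ _ _) (ind_le_one _ _ _)) (indEdges_nonneg _ _)

end IsSparse

end Exchangeable

section Losses

variable [Fintype V] {d : ℕ} {G K : SimpleGraph V}

/-- The proportion of the neighbours of `w` that are neither `v` nor adjacent to `v` whose edge to
`w` lies in `K`; the edges at `w` into them are the possible partners of an edge at `v` in a
switching, and this proportion is lost because edges of `K` may not be switched. -/
def loss (K G : SimpleGraph V) (v w : V) : ℝ := walks Gᶜ K v w / walks Gᶜ G v w

/-- An upper bound for `loss K G v w` without denominators depending on `G`; the quadratic term
accounts for the pairs `v`, `w` with many common neighbours. -/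
def penalty (d : ℕ) (K G : SimpleGraph V) (v w : V) : ℝ :=
  4 / d * rdeg K w + 32 / d ^ 2 * (walks G (G \ K) v w ^ 2 + ind G v w)

lemma penalty_nonneg (d : ℕ) (K G : SimpleGraph V) (v w : V) : 0 ≤ penalty d K G v w := by
  have := rdeg_nonneg K w
  have := ind_nonneg G v w
  unfold penalty
  positivity

lemma loss_nonneg (K G : SimpleGraph V) (v w : V) : 0 ≤ loss K G v w :=
  div_nonneg (walks_nonneg _ _ _ _) (walks_nonneg _ _ _ _)

lemma loss_le_one (h : K ≤ G) (v w : V) : loss K G v w ≤ 1 :=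
  div_le_one_of_le₀ (walks_mono_right v w h) (walks_nonneg _ _ _ _)

lemma one_le_penalty (hd : 0 < d) (hG : G ∈ regularAbove d K) {v w : V}
    (hfew : walks Gᶜ G v w < d / 2) : 1 ≤ penalty d K G v w := by
  have hd' : (0 : ℝ) < d := Nat.cast_pos.2 hd
  set q := walks G (G \ K) v w with hq
  set g := ind G v w with hg
  have hgg : g * g = g := ind_mul_self G v w
  have hmany : (d : ℝ) / 2 < q + rdeg K w + g := by
    rw [walks_compl_left_of_mem hG] at hfew
    have := walks_sdiff_right (A := G) v w (le_of_mem hG)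
    have := walks_le_rdeg_right G K v w
    linarith
  have hrest : 0 ≤ q ^ 2 + g := add_nonneg (sq_nonneg q) (ind_nonneg G v w)
  unfold penalty
  by_cases hK : (d : ℝ) / 4 ≤ rdeg K w
  · have hfirst : 1 ≤ 4 / d * rdeg K w := by
      rw [div_mul_eq_mul_div, one_le_div hd']
      linarith
    exact hfirst.trans (le_add_of_nonneg_right (mul_nonneg (by positivity) hrest))
  · have hsq : (d : ℝ) ^ 2 ≤ 32 * (q ^ 2 + g) := by
      nlinarith [sq_nonneg (q - g), walks_nonneg G (G \ K) v w, ind_nonneg G v w]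
    have hsecond : 1 ≤ 32 / d ^ 2 * (q ^ 2 + g) := by
      rw [div_mul_eq_mul_div, one_le_div (by positivity)]
      exact hsq
    exact hsecond.trans
      (le_add_of_nonneg_left (mul_nonneg (by positivity) (rdeg_nonneg K w)))

lemma loss_le_penalty (hd : 0 < d) (hG : G ∈ regularAbove d K) (v w : V) :
    loss K G v w ≤ penalty d K G v w := by
  by_cases hfew : walks Gᶜ G v w < d / 2
  · exact (loss_le_one (le_of_mem hG) v w).trans (one_le_penalty hd hG hfew)
  have hk := rdeg_nonneg K w
  calc loss K G v w ≤ rdeg K w / (d / 2) :=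
        div_le_div₀ hk (walks_le_rdeg_right _ _ v w) (by positivity) (not_lt.1 hfew)
    _ = 2 / d * rdeg K w := by field_simp
    _ ≤ 4 / d * rdeg K w := by gcongr; norm_num
    _ ≤ penalty d K G v w := le_add_of_nonneg_right
        (mul_nonneg (by positivity) (add_nonneg (sq_nonneg _) (ind_nonneg G v w)))

/-- To first order the loss is `rdeg K v / d`; the error comes from replacing the denominator
by `d`. -/
lemma loss_le_add_penalty (hd : 0 < d) (hG : G ∈ regularAbove d K) (v w : V) :
    loss K G w v ≤ rdeg K v / d +
      (2 * rdeg K v / d ^ 2 * (walks G G v w + ind G v w) + penalty d K G v w) := by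
  have hk := rdeg_nonneg K v
  have hcorr : 0 ≤ walks G G v w + ind G v w :=
    add_nonneg (walks_nonneg _ _ _ _) (ind_nonneg _ _ _)
  by_cases hfew : walks Gᶜ G v w < d / 2
  · have h1 := (loss_le_one (le_of_mem hG) w v).trans (one_le_penalty hd hG hfew)
    have h2 : 0 ≤ rdeg K v / d := by positivity
    have h3 : 0 ≤ 2 * rdeg K v / d ^ 2 * (walks G G v w + ind G v w) := by positivity
    linarith
  · rw [not_lt] at hfew
    set s := walks Gᶜ G v w with hs
    have hs0 : 0 < s := lt_of_lt_of_le (by positivity) hfew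
    have hcorr' : walks G G v w + ind G v w = d - s := by
      rw [hs, walks_compl_left_of_mem hG]
      ring
    calc loss K G w v ≤ rdeg K v / s := by
          rw [loss, walks_compl_left_comm hG w v]
          exact div_le_div_of_nonneg_right (walks_le_rdeg_right _ _ w v) hs0.le
      _ ≤ rdeg K v / d + 2 * rdeg K v / d ^ 2 * (d - s) := by
          have hgap : rdeg K v / d + 2 * rdeg K v / d ^ 2 * (d - s) - rdeg K v / s =
              rdeg K v * (d - s) * (2 * s - d) / (d ^ 2 * s) := by
            field_simp
            ring
          rw [hcorr'] at hcorr
          refine sub_nonneg.1 (hgap ▸ div_nonneg ?_ (by positivity))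
          exact mul_nonneg (mul_nonneg hk hcorr) (by linarith)
      _ ≤ _ := by
          rw [hcorr', ← add_assoc]
          exact le_add_of_nonneg_right (penalty_nonneg d K G v w)

lemma walks_div_le_loss (hG : G ∈ regularAbove d K) (v w : V) :
    walks Gᶜ K w v / d ≤ loss K G w v := by
  have hle := walks_mono_right (A := Gᶜ) w v (le_of_mem hG)
  have hnum := walks_nonneg Gᶜ K w v
  have hden : walks Gᶜ G w v ≤ d := rdeg_of_mem hG v ▸ walks_le_rdeg_right Gᶜ G w v
  rcases (hnum.trans hle).eq_or_lt with hzero | hpos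
  · rw [le_antisymm (hle.trans hzero.ge) hnum, zero_div]
    exact loss_nonneg K G w v
  · exact div_le_div_of_nonneg_left hnum hpos hden

end Losses

section SecondMoment

variable {B : ℝ} {d j : ℕ} {G K : SimpleGraph V} {S : Finset (Sym2 V)} {v : V}

lemma twoPaths_le_of_degenerate [DecidableEq V] {v w x y : V} (h : w = v ∨ x = y ∨ x = v) :
    ind G v x * (ind G v y * ind G y w) * ind (G \ K) x w ≤
      (if w = v then ind G v x * ind G v y else 0) +
        if x = y then ind G v y * ind G y w else 0 := by
  have h1 := ind_nonneg G v x
  have h2 := ind_nonneg G v y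
  have h3 := ind_nonneg G y w
  have hleft : 0 ≤ if w = v then ind G v x * ind G v y else 0 := by split_ifs <;> positivity
  have hright : 0 ≤ if x = y then ind G v y * ind G y w else 0 := by split_ifs <;> positivity
  have hlast : ind G v x * (ind G v y * ind G y w) * ind (G \ K) x w ≤
      ind G v x * (ind G v y * ind G y w) :=
    mul_le_of_le_one_right (by positivity) (ind_le_one _ _ _)
  refine hlast.trans ?_
  rcases h with rfl | rfl | rfl
  · rw [if_pos rfl, ← mul_assoc]
    exact (mul_le_of_le_one_right (by positivity) (ind_le_one _ _ _)).trans
      (le_add_of_nonneg_right hright)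
  · rw [if_pos rfl]
    exact (mul_le_of_le_one_left (by positivity) (ind_le_one _ _ _)).trans
      (le_add_of_nonneg_left hleft)
  · exact le_of_eq_of_le (by rw [ind_self, zero_mul]) (add_nonneg hleft hright)

variable [Fintype V]

lemma sq_walks_sdiff_le (K G : SimpleGraph V) (v w : V) :
    walks G (G \ K) v w ^ 2 ≤
      ∑ x, ∑ y, ind G v x * (ind G v y * ind G y w) * ind (G \ K) x w := by
  rw [sq, walks, sum_mul_sum]
  refine sum_le_sum fun x _ => sum_le_sum fun y _ => ?_
  calc ind G v x * ind (G \ K) x w * (ind G v y * ind (G \ K) y w)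
      = ind G v x * (ind G v y * ind (G \ K) y w) * ind (G \ K) x w := by ring
    _ ≤ ind G v x * (ind G v y * ind G y w) * ind (G \ K) x w := by
        gcongr
        · exact ind_nonneg _ _ _
        · exact ind_nonneg _ _ _
        · exact ind_nonneg _ _ _
        · exact ind_mono _ _ sdiff_le

lemma IsSparse.mul_sum_twoPaths_le_of_nondegenerate (h : IsSparse B d K j) (hS : #S + 3 ≤ j)
    (hv : ∀ e ∈ S, v ∈ e) {w x y : V} (hwv : w ≠ v) (hxy : x ≠ y) (hxv : x ≠ v) :
    Fintype.card V * ∑ G ∈ regularAbove d K,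
        indEdges S G * (ind G v x * (ind G v y * ind G y w) * ind (G \ K) x w) ≤
      B * d * ∑ G ∈ regularAbove d K, indEdges S G * (ind G v x * (ind G v y * ind G y w)) := by
  classical
  set T := insert s(v, x) (insert s(v, y) (insert s(y, w) S))
  have hmem : s(x, w) ∉ T := by
    have := hv s(x, w)
    grind
  have hcard : #T ≤ j := by
    have h1 := card_insert_le s(y, w) S
    have h2 := card_insert_le s(v, y) (insert s(y, w) S)
    have h3 : #T ≤ _ := card_insert_le s(v, x) (insert s(v, y) (insert s(y, w) S))
    omega
  have hT : ∀ G : SimpleGraph V,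
      indEdges S G * (ind G v x * (ind G v y * ind G y w)) = indEdges T G := fun G => by
    rw [indEdges_insert, indEdges_insert, indEdges_insert]
    ring
  simp_rw [← mul_assoc (indEdges S _) _ (ind _ x w), hT]
  refine (h.mul_sum_indEdges_mul_ind_sdiff_le hcard hmem).trans
    (mul_le_mul_of_nonneg_right ?_ (sum_nonneg fun G _ => indEdges_nonneg T G))
  exact mul_le_mul_of_nonneg_left (sub_le_self _ (rdeg_nonneg K x)) h.nonneg

lemma IsSparse.mul_sum_twoPaths_le [DecidableEq V] (h : IsSparse B d K j) (hS : #S + 3 ≤ j)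
    (hv : ∀ e ∈ S, v ∈ e) (w x y : V) :
    Fintype.card V * ∑ G ∈ regularAbove d K,
        indEdges S G * (ind G v x * (ind G v y * ind G y w) * ind (G \ K) x w) ≤
      ∑ G ∈ regularAbove d K, indEdges S G *
        (Fintype.card V * ((if w = v then ind G v x * ind G v y else 0) +
            if x = y then ind G v y * ind G y w else 0) +
          B * d * (ind G v x * (ind G v y * ind G y w))) := by
  have hn : (0 : ℝ) ≤ Fintype.card V := Nat.cast_nonneg _
  have hB : 0 ≤ B * d := mul_nonneg h.nonneg h.cast_pos.le
  have hpath : ∀ G : SimpleGraph V, 0 ≤ ind G v x * (ind G v y * ind G y w) := fun G =>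
    mul_nonneg (ind_nonneg _ _ _) (mul_nonneg (ind_nonneg _ _ _) (ind_nonneg _ _ _))
  by_cases hdeg : w = v ∨ x = y ∨ x = v
  · rw [mul_sum]
    refine sum_le_sum fun G _ => ?_
    rw [mul_left_comm]
    refine mul_le_mul_of_nonneg_left ?_ (indEdges_nonneg S G)
    exact le_add_of_le_of_nonneg (mul_le_mul_of_nonneg_left (twoPaths_le_of_degenerate hdeg) hn)
      (mul_nonneg hB (hpath G))
  · push Not at hdeg
    obtain ⟨hwv, hxy, hxv⟩ := hdeg
    simpa only [if_neg hwv, if_neg hxy, add_zero, mul_zero, zero_add, mul_sum,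
      mul_left_comm (B * d)] using h.mul_sum_twoPaths_le_of_nondegenerate hS hv hwv hxy hxv

lemma sum_twoPaths_bound [DecidableEq V] (hG : G ∈ regularAbove d K) (a b : ℝ) (v : V) :
    ∑ w, ∑ x, ∑ y, (a * ((if w = v then ind G v x * ind G v y else 0) +
        if x = y then ind G v y * ind G y w else 0) + b * (ind G v x * (ind G v y * ind G y w))) =
      a * (2 * d ^ 2) + b * d ^ 3 := by
  have hdeg : ∀ x, ∑ y, ind G x y = d := rdeg_of_mem hG
  have hloop : ∑ w, ∑ x, ∑ y, (if w = v then ind G v x * ind G v y else 0) = (d : ℝ) ^ 2 := by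
    rw [sum_eq_single_of_mem v (mem_univ v) fun w _ hw => by simp only [if_neg hw, sum_const_zero]]
    simp only [if_true, ← mul_sum, hdeg, ← sum_mul, sq]
  have hdiag : ∑ w, ∑ x, ∑ y, (if x = y then ind G v y * ind G y w else 0) = (d : ℝ) ^ 2 := by
    simp only [sum_ite_eq, mem_univ, if_true]
    rw [sum_comm]
    simp only [← mul_sum, hdeg, ← sum_mul, sq]
  have hpath : ∑ w, ∑ x, ∑ y, ind G v x * (ind G v y * ind G y w) = (d : ℝ) ^ 3 := by
    simp only [← mul_sum, ← sum_mul, hdeg]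
    rw [sum_comm]
    simp only [← mul_sum, hdeg, ← sum_mul]
    ring
  have hsplit : ∀ p q r : V → V → V → ℝ,
      ∑ w, ∑ x, ∑ y, (a * (p w x y + q w x y) + b * r w x y) =
        a * (∑ w, ∑ x, ∑ y, p w x y + ∑ w, ∑ x, ∑ y, q w x y) + b * ∑ w, ∑ x, ∑ y, r w x y :=
    fun p q r => by simp only [sum_add_distrib, mul_add, mul_sum]
  rw [hsplit, hloop, hdiag, hpath]
  ring

lemma IsSparse.mul_sum_sq_walks_le (h : IsSparse B d K j) (hS : #S + 3 ≤ j)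
    (hv : ∀ e ∈ S, v ∈ e) :
    Fintype.card V * ∑ G ∈ regularAbove d K, indEdges S G * ∑ w, walks G (G \ K) v w ^ 2 ≤
      (2 * d ^ 2 * Fintype.card V + B * d ^ 4) * ∑ G ∈ regularAbove d K, indEdges S G := by
  classical
  calc Fintype.card V * ∑ G ∈ regularAbove d K, indEdges S G * ∑ w, walks G (G \ K) v w ^ 2
      ≤ Fintype.card V * ∑ G ∈ regularAbove d K, indEdges S G *
          ∑ w, ∑ x, ∑ y, ind G v x * (ind G v y * ind G y w) * ind (G \ K) x w :=
        mul_le_mul_of_nonneg_left (sum_le_sum fun G _ => mul_le_mul_of_nonneg_left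
          (sum_le_sum fun w _ => sq_walks_sdiff_le K G v w) (indEdges_nonneg S G))
          (Nat.cast_nonneg _)
    _ = ∑ w, ∑ x, ∑ y, Fintype.card V * ∑ G ∈ regularAbove d K,
          indEdges S G * (ind G v x * (ind G v y * ind G y w) * ind (G \ K) x w) := by
        simp only [mul_sum, sum_comm (s := regularAbove d K)]
    _ ≤ ∑ w, ∑ x, ∑ y, ∑ G ∈ regularAbove d K, indEdges S G *
          (Fintype.card V * ((if w = v then ind G v x * ind G v y else 0) +
            if x = y then ind G v y * ind G y w else 0) +
          B * d * (ind G v x * (ind G v y * ind G y w))) :=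
        sum_le_sum fun w _ => sum_le_sum fun x _ => sum_le_sum fun y _ =>
          h.mul_sum_twoPaths_le hS hv w x y
    _ = ∑ G ∈ regularAbove d K, indEdges S G * (Fintype.card V * (2 * d ^ 2) + B * d * d ^ 3) := by
        simp only [← sum_comm (s := regularAbove d K), ← mul_sum]
        exact sum_congr rfl fun G hG => by rw [sum_twoPaths_bound hG]
    _ = (2 * d ^ 2 * Fintype.card V + B * d ^ 4) * ∑ G ∈ regularAbove d K, indEdges S G := by
        rw [← sum_mul]
        ring

/-- The bound on the total penalty at a vertex, on average over the regular graphs that contain `K`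
and a few prescribed edges. -/
def penaltyBound (B : ℝ) (d : ℕ) (K : SimpleGraph V) : ℝ :=
  8 * K.edgeSet.ncard / d + 96 + 32 * B * d ^ 2 / Fintype.card V

lemma IsSparse.sum_penalty_le (h : IsSparse B d K j) (hS : #S + 3 ≤ j) (hv : ∀ e ∈ S, v ∈ e) :
    ∑ G ∈ regularAbove d K, indEdges S G * ∑ w, penalty d K G v w ≤
      penaltyBound B d K * ∑ G ∈ regularAbove d K, indEdges S G := by
  have hd := h.cast_pos
  have hd1 : (1 : ℝ) ≤ d := Nat.one_le_cast.2 h.pos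
  have : Nonempty V := ⟨v⟩
  have hn : (0 : ℝ) < Fintype.card V := Nat.cast_pos.2 Fintype.card_pos
  set N := ∑ G ∈ regularAbove d K, indEdges S G with hN
  set Q := ∑ G ∈ regularAbove d K, indEdges S G * ∑ w, walks G (G \ K) v w ^ 2 with hQ
  have hN0 : 0 ≤ N := sum_nonneg fun G _ => indEdges_nonneg S G
  have hsecond : Q ≤ (2 * d ^ 2 + B * d ^ 4 / Fintype.card V) * N := by
    have := h.mul_sum_sq_walks_le hS hv
    rw [← hQ, ← hN] at this
    refine le_of_mul_le_mul_left (this.trans_eq ?_) hn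
    field_simp
  have hsplit : ∑ G ∈ regularAbove d K, indEdges S G * ∑ w, penalty d K G v w =
      4 / d * (2 * K.edgeSet.ncard) * N + 32 / d ^ 2 * (Q + d * N) := by
    rw [hQ, hN, mul_sum, mul_sum, ← sum_add_distrib, mul_sum, ← sum_add_distrib]
    refine sum_congr rfl fun G hG => ?_
    simp only [penalty, sum_add_distrib, ← mul_sum, sum_rdeg]
    rw [show ∑ w, ind G v w = d from rdeg_of_mem hG v]
    ring
  calc _ = 4 / d * (2 * K.edgeSet.ncard) * N + 32 / d ^ 2 * (Q + d * N) := hsplit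
    _ ≤ 4 / d * (2 * K.edgeSet.ncard) * N +
        32 / d ^ 2 * ((2 * d ^ 2 + B * d ^ 4 / Fintype.card V) * N + d ^ 2 * N) := by
        gcongr
        exact le_self_pow₀ hd1 two_ne_zero
    _ = penaltyBound B d K * N := by
        rw [penaltyBound]
        field_simp
        ring

lemma penaltyBound_nonneg (hB : 0 ≤ B) (d : ℕ) (K : SimpleGraph V) : 0 ≤ penaltyBound B d K := by
  unfold penaltyBound
  positivity

end SecondMoment

section Exchange

variable [Fintype V] {B : ℝ} {d j : ℕ} {G K : SimpleGraph V} {u v : V}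

namespace IsSparse

lemma exchangeable_const (h : IsSparse B d K j) {a : ℝ} (ha : 0 ≤ a) (u v w : V) :
    Exchangeable B d K u v w fun _ => a := by
  have hone := h.exchangeable_indEdges (S := ∅) (u := u) (v := v) (w := w) j.zero_le (by simp)
  simpa only [indEdges_empty, mul_one] using hone.const_mul ha

lemma exchangeable_ind (h : IsSparse B d K j) (hj : 1 ≤ j) (huv : u ≠ v) (w : V) :
    Exchangeable B d K u v w fun G => ind G v w := by
  simp only [← indEdges_singleton]
  exact h.exchangeable_indEdges (by rwa [card_singleton]) (by grind)

lemma exchangeable_walks (h : IsSparse B d K j) (hj : 2 ≤ j) (huv : u ≠ v) (w : V) :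
    Exchangeable B d K u v w fun G => walks G G v w := by
  classical
  refine Exchangeable.sum fun x _ => ?_
  simp only [← indEdges_singleton _ x w, ← indEdges_insert]
  exact h.exchangeable_indEdges (card_le_two.trans hj) (by grind)

lemma exchangeable_sq_walks_sdiff (h : IsSparse B d K j) (hj : 4 ≤ j) (huv : u ≠ v) (w : V) :
    Exchangeable B d K u v w fun G => walks G (G \ K) v w ^ 2 := by
  classical
  have hexpand : ∀ G : SimpleGraph V, walks G (G \ K) v w ^ 2 =
      ∑ x, ∑ y, (1 - ind K x w) * (1 - ind K y w) *
        indEdges {s(v, x), s(x, w), s(v, y), s(y, w)} G := fun G => by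
    rw [sq, walks, sum_mul_sum]
    refine sum_congr rfl fun x _ => sum_congr rfl fun y _ => ?_
    rw [indEdges_insert, indEdges_insert, indEdges_insert, indEdges_singleton,
      ind_sdiff_eq_mul, ind_sdiff_eq_mul]
    ring
  simp only [hexpand]
  refine Exchangeable.sum fun x _ => Exchangeable.sum fun y _ => Exchangeable.const_mul ?_ ?_
  · exact mul_nonneg (sub_nonneg.2 (ind_le_one _ _ _)) (sub_nonneg.2 (ind_le_one _ _ _))
  · exact h.exchangeable_indEdges (card_le_four.trans hj) (by grind)

lemma exchangeable_penalty (h : IsSparse B d K j) (hj : 4 ≤ j) (huv : u ≠ v) (w : V) :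
    Exchangeable B d K u v w fun G => penalty d K G v w :=
  (h.exchangeable_const (mul_nonneg (by positivity) (rdeg_nonneg K w)) u v w).add
    (((h.exchangeable_sq_walks_sdiff hj huv w).add
      (h.exchangeable_ind (by omega) huv w)).const_mul (by positivity))

end IsSparse

end Exchange

section EdgeBalance

variable [Fintype V] {d : ℕ} {G K : SimpleGraph V} {u v w : V}

/-- The total loss over the switchings that remove the edge `uv` from a `d`-regular graph
containing `K`. -/
def lossIn (d : ℕ) (K : SimpleGraph V) (u v : V) : ℝ :=
  ∑ G ∈ regularAbove d K, ∑ w, ind (G \ K) u v * ind Gᶜ u w * loss K G v w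

/-- The total loss over the switchings that create the edge `uv` in a `d`-regular graph
containing `K`. -/
def lossOut (d : ℕ) (K : SimpleGraph V) (u v : V) : ℝ :=
  ∑ G ∈ regularAbove d K, ∑ w, ind (G \ K) u w * ind Gᶜ u v * loss K G w v

lemma walks_compl_left_ne_zero (hG : G ∈ regularAbove d K) (huv : G.Adj u v) (huw : Gᶜ.Adj u w) :
    walks Gᶜ G v w ≠ 0 := by
  rw [walks_compl_left_comm hG]
  have hle : ind Gᶜ w u * ind G u v ≤ walks Gᶜ G w v :=
    single_le_sum (f := fun x => ind Gᶜ w x * ind G x v)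
      (fun x _ => mul_nonneg (ind_nonneg _ _ _) (ind_nonneg _ _ _)) (mem_univ u)
  rw [ind_of_adj huw.symm, ind_of_adj huv, mul_one] at hle
  linarith

lemma ind_mul_walks_mul_inv (hG : G ∈ regularAbove d K) (u v w : V) :
    ind (G \ K) u v * ind Gᶜ u w * (walks Gᶜ (G \ K) v w * (walks Gᶜ G v w)⁻¹) =
      ind (G \ K) u v * ind Gᶜ u w - ind (G \ K) u v * ind Gᶜ u w * loss K G v w := by
  by_cases huv : (G \ K).Adj u v
  · by_cases huw : Gᶜ.Adj u w
    · have hne := walks_compl_left_ne_zero hG huv.1 huw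
      rw [walks_sdiff_right _ _ (le_of_mem hG), loss]
      field_simp
    · simp only [ind_of_not_adj huw, mul_zero, zero_mul, sub_zero]
  · simp only [ind_of_not_adj huv, zero_mul, sub_zero]

/-- Weighting each switching by the inverse of the number of neighbours of `w` that are neither
`v` nor adjacent to `v` makes every pair `uv`, `uw` contribute exactly one up to its loss. -/
lemma edge_balance (d : ℕ) (huv : u ≠ v) (hK : ¬K.Adj u v) :
    (Fintype.card V - 1 - rdeg K u) * ∑ G ∈ regularAbove d K, ind G u v =
      (d - rdeg K u) * regularCount d K + lossIn d K u v - lossOut d K u v := by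
  classical
  have hswitch : ∑ G ∈ regularAbove d K, ∑ w, ind (G \ K) u v * ind Gᶜ u w *
        (walks Gᶜ (G \ K) v w * (walks Gᶜ G v w)⁻¹) =
      ∑ G ∈ regularAbove d K, ∑ w, ind (G \ K) u w * ind Gᶜ u v *
        (walks Gᶜ (G \ K) w v * (walks Gᶜ G w v)⁻¹) := by
    rw [sum_comm, sum_comm (s := regularAbove d K)]
    exact sum_congr rfl fun w _ => sum_switch d K u v w (·⁻¹)
  have hleft : ∑ G ∈ regularAbove d K, ∑ w, ind (G \ K) u v * ind Gᶜ u w *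
        (walks Gᶜ (G \ K) v w * (walks Gᶜ G v w)⁻¹) =
      (Fintype.card V - 1 - d) * ∑ G ∈ regularAbove d K, ind G u v - lossIn d K u v := by
    rw [lossIn, mul_sum, ← sum_sub_distrib]
    refine sum_congr rfl fun G hG => ?_
    have hfree : ∑ w, ind Gᶜ u w = Fintype.card V - 1 - d :=
      (rdeg_compl u).trans (by rw [rdeg_of_mem hG])
    simp only [ind_mul_walks_mul_inv hG, sum_sub_distrib, ← mul_sum, hfree]
    rw [ind_sdiff _ _ (le_of_mem hG), ind_of_not_adj hK]
    ring
  have hright : ∑ G ∈ regularAbove d K, ∑ w, ind (G \ K) u w * ind Gᶜ u v *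
        (walks Gᶜ (G \ K) w v * (walks Gᶜ G w v)⁻¹) =
      (d - rdeg K u) * (regularCount d K - ∑ G ∈ regularAbove d K, ind G u v) -
        lossOut d K u v := by
    rw [lossOut, regularCount, card_eq_sum_ones, Nat.cast_sum, ← sum_sub_distrib, mul_sum,
      ← sum_sub_distrib]
    refine sum_congr rfl fun G hG => ?_
    have hfree : ∑ w, ind (G \ K) u w = d - rdeg K u :=
      (rdeg_sdiff u (le_of_mem hG)).trans (by rw [rdeg_of_mem hG])
    simp only [ind_mul_walks_mul_inv hG, sum_sub_distrib, ← sum_mul, hfree]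
    simp only [ind_compl, if_neg huv]
    ring
  linarith

end EdgeBalance

section LossBounds

variable [Fintype V] {B : ℝ} {d j : ℕ} {G K : SimpleGraph V} {u v x : V}

namespace IsSparse

lemma mul_sum_ind_le (h : IsSparse B d K j) (hK : ¬K.Adj u v) :
    Fintype.card V * ∑ G ∈ regularAbove d K, ind G u v ≤
      B * (d - rdeg K u) * regularCount d K := by
  refine le_of_eq_of_le ?_ ((h.mono (Nat.le_add_right _ j)).mul_sum_ind_sdiff_le u v)
  congr 1
  refine sum_congr rfl fun G hG => ?_
  rw [ind_sdiff _ _ (le_of_mem hG), ind_of_not_adj hK, sub_zero]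

lemma lossIn_le (h : IsSparse B d K j) (hj : 4 ≤ j) (u v : V) :
    lossIn d K u v ≤ penaltyBound B d K * ∑ G ∈ regularAbove d K, ind G u v := by
  simp only [← indEdges_singleton _ u v]
  refine le_trans (sum_le_sum fun G hG => ?_)
    (h.sum_penalty_le (S := {s(u, v)}) (v := v) (by rwa [card_singleton]) (by simp))
  rw [indEdges_singleton, mul_sum]
  refine sum_le_sum fun w _ => mul_le_mul ?_ (loss_le_penalty h.pos hG v w) (loss_nonneg _ _ _ _)
    (ind_nonneg _ _ _)
  exact (mul_le_of_le_one_right (ind_nonneg _ _ _) (ind_le_one _ _ _)).trans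
    (ind_mono _ _ sdiff_le)

lemma sum_correction_le (h : IsSparse B d K j) (hj : 3 ≤ j) (v : V) :
    ∑ G ∈ regularAbove d K, ∑ w,
        (2 * rdeg K v / d ^ 2 * (walks G G v w + ind G v w) + penalty d K G v w) ≤
      (4 * rdeg K v + penaltyBound B d K) * regularCount d K := by
  have hk := rdeg_nonneg K v
  have hd := h.cast_pos
  have hd1 : (1 : ℝ) ≤ d := Nat.one_le_cast.2 h.pos
  have hpenalty : ∑ G ∈ regularAbove d K, ∑ w, penalty d K G v w ≤
      penaltyBound B d K * regularCount d K := by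
    simpa only [indEdges_empty, one_mul, sum_const, nsmul_eq_mul, mul_one, regularCount] using
      h.sum_penalty_le (S := ∅) (v := v) (by simpa using hj) (by simp)
  have hpoint : ∀ G ∈ regularAbove d K,
      ∑ w, (2 * rdeg K v / d ^ 2 * (walks G G v w + ind G v w) + penalty d K G v w) ≤
        4 * rdeg K v + ∑ w, penalty d K G v w := by
    intro G hG
    have hwalks : ∑ w, (walks G G v w + ind G v w) = (d ^ 2 + d : ℝ) := by
      rw [sum_add_distrib, sum_walks_right]
      simp only [rdeg_of_mem hG, ← sum_mul]
      rw [show ∑ w, ind G v w = d from rdeg_of_mem hG v, sq]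
    rw [sum_add_distrib, ← mul_sum, hwalks]
    refine add_le_add_left ?_ _
    calc 2 * rdeg K v / d ^ 2 * (d ^ 2 + d) ≤ 2 * rdeg K v / d ^ 2 * (d ^ 2 + d ^ 2) := by
          gcongr
          exact le_self_pow₀ hd1 two_ne_zero
      _ = 4 * rdeg K v := by
          field_simp
          ring
  refine (sum_le_sum hpoint).trans ?_
  rw [sum_add_distrib, sum_const, nsmul_eq_mul, ← regularCount]
  linarith

lemma mul_sum_correction_le (h : IsSparse B d K j) (hj : 4 ≤ j) (huv : u ≠ v)
    (hu : rdeg K u ≤ d) :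
    Fintype.card V * ∑ G ∈ regularAbove d K, ∑ w, ind (G \ K) u w * ind Gᶜ u v *
        (2 * rdeg K v / d ^ 2 * (walks G G v w + ind G v w) + penalty d K G v w) ≤
      B * (d - rdeg K u) * ((4 * rdeg K v + penaltyBound B d K) * regularCount d K) := by
  have hk := rdeg_nonneg K v
  have hexch : ∀ w, Exchangeable B d K u v w fun G =>
      2 * rdeg K v / d ^ 2 * (walks G G v w + ind G v w) + penalty d K G v w := fun w =>
    (((h.exchangeable_walks (by omega) huv w).add
      (h.exchangeable_ind (by omega) huv w)).const_mul (by positivity)).add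
        (h.exchangeable_penalty hj huv w)
  calc _ = ∑ w, (Fintype.card V : ℝ) * ∑ G ∈ regularAbove d K, ind (G \ K) u w * ind Gᶜ u v *
        (2 * rdeg K v / d ^ 2 * (walks G G v w + ind G v w) + penalty d K G v w) := by
        rw [sum_comm, mul_sum]
    _ ≤ ∑ w, B * (d - rdeg K u) * ∑ G ∈ regularAbove d K,
        (2 * rdeg K v / d ^ 2 * (walks G G v w + ind G v w) + penalty d K G v w) :=
        sum_le_sum fun w _ => hexch w
    _ ≤ _ := by
        rw [← mul_sum, sum_comm]
        exact mul_le_mul_of_nonneg_left (h.sum_correction_le (by omega) v)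
          (mul_nonneg h.nonneg (sub_nonneg.2 hu))

lemma mul_lossOut_le (h : IsSparse B d K j) (hj : 4 ≤ j) (huv : u ≠ v) (hu : rdeg K u ≤ d) :
    Fintype.card V * lossOut d K u v ≤ (d - rdeg K u) * regularCount d K *
      (Fintype.card V * (rdeg K v / d) + B * (4 * rdeg K v + penaltyBound B d K)) := by
  have hk : 0 ≤ rdeg K v / d := div_nonneg (rdeg_nonneg K v) h.cast_pos.le
  have hpartner : ∀ G : SimpleGraph V, ∀ w, 0 ≤ ind (G \ K) u w * ind Gᶜ u v := fun G w =>
    mul_nonneg (ind_nonneg _ _ _) (ind_nonneg _ _ _)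
  have hfirst : ∑ G ∈ regularAbove d K, ∑ w, ind (G \ K) u w * ind Gᶜ u v * (rdeg K v / d) ≤
      (d - rdeg K u) * regularCount d K * (rdeg K v / d) := by
    simp only [← sum_mul]
    refine mul_le_mul_of_nonneg_right ?_ hk
    rw [mul_comm ((d : ℝ) - _), regularCount, ← nsmul_eq_mul]
    refine sum_le_card_nsmul _ _ _ fun G hG => ?_
    rw [← rdeg_of_mem hG u, ← rdeg_sdiff u (le_of_mem hG)]
    exact mul_le_of_le_one_right (rdeg_nonneg _ _) (ind_le_one _ _ _)
  have hloss : lossOut d K u v ≤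
      ∑ G ∈ regularAbove d K, ∑ w, ind (G \ K) u w * ind Gᶜ u v * (rdeg K v / d) +
      ∑ G ∈ regularAbove d K, ∑ w, ind (G \ K) u w * ind Gᶜ u v *
        (2 * rdeg K v / d ^ 2 * (walks G G v w + ind G v w) + penalty d K G v w) := by
    simp only [lossOut, ← sum_add_distrib, ← mul_add]
    exact sum_le_sum fun G hG => sum_le_sum fun w _ =>
      mul_le_mul_of_nonneg_left (loss_le_add_penalty h.pos hG v w) (hpartner G w)
  have hn : (0 : ℝ) ≤ Fintype.card V := Nat.cast_nonneg _
  linarith [mul_le_mul_of_nonneg_left hloss hn, mul_le_mul_of_nonneg_left hfirst hn,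
    h.mul_sum_correction_le hj huv hu]

lemma mul_sum_walks_sdiff_le (h : IsSparse B d K j) (hj : 1 ≤ j) (hux : u ≠ x) :
    Fintype.card V * ∑ G ∈ regularAbove d K, walks (G \ K) G u x ≤
      B * (d - rdeg K u) * (d * regularCount d K) := by
  have hdeg : ∑ G ∈ regularAbove d K, ∑ w, ind G w x = d * regularCount d K := by
    rw [sum_congr rfl fun G hG => (sum_ind_left G x).trans (rdeg_of_mem hG x), sum_const,
      nsmul_eq_mul, regularCount, mul_comm]
  simp only [walks]
  rw [← hdeg, sum_comm, mul_sum, sum_comm (s := regularAbove d K), mul_sum]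
  refine sum_le_sum fun w _ => ?_
  simp only [mul_comm (ind (_ \ K) u w), ← indEdges_singleton _ w x]
  exact h.mul_sum_indEdges_mul_ind_sdiff_le (by rwa [card_singleton]) (by grind)

lemma le_mul_sum_ind_compl_mul_walks (h : IsSparse B d K j) (hj : 1 ≤ j) (huv : u ≠ v)
    (hK : ¬K.Adj u v) (hu : rdeg K u ≤ d) (hux : u ≠ x) :
    (d - rdeg K u) * regularCount d K * (Fintype.card V - 3 * B * d) ≤
      Fintype.card V * ∑ G ∈ regularAbove d K, ind Gᶜ u v * walks (G \ K) Gᶜ u x := by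
  classical
  have hn : (0 : ℝ) ≤ Fintype.card V := Nat.cast_nonneg _
  have hd1 : (1 : ℝ) ≤ d := Nat.one_le_cast.2 h.pos
  have hg : 0 ≤ d - rdeg K u := sub_nonneg.2 hu
  have hN := regularCount_nonneg d K
  have hpoint : ∀ G ∈ regularAbove d K,
      (d - rdeg K u) - walks (G \ K) G u x - ind (G \ K) u x - (d - rdeg K u) * ind G u v ≤
        ind Gᶜ u v * walks (G \ K) Gᶜ u x := by
    intro G hG
    have hdeg : rdeg (G \ K) u = d - rdeg K u := by rw [rdeg_sdiff u (le_of_mem hG), rdeg_of_mem hG]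
    have hle := mul_le_mul_of_nonneg_left (walks_le_rdeg_left (G \ K) Gᶜ u x) (ind_nonneg G u v)
    rw [ind_compl, if_neg huv, sub_zero, one_sub_mul]
    rw [walks_compl_right, hdeg] at *
    linarith
  have hsum := mul_le_mul_of_nonneg_left (sum_le_sum hpoint) hn
  simp only [sum_sub_distrib, ← mul_sum, sum_const, nsmul_eq_mul] at hsum
  have hedge := mul_le_mul_of_nonneg_left (h.mul_sum_ind_le hK) hg
  have hedge' : (d - rdeg K u) * (B * (d - rdeg K u) * regularCount d K) ≤
      B * (d - rdeg K u) * (d * regularCount d K) := by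
    have := mul_le_mul_of_nonneg_right (sub_le_self (d : ℝ) (rdeg_nonneg K u))
      (mul_nonneg (mul_nonneg h.nonneg hg) hN)
    linarith
  have hlast : B * (d - rdeg K u) * regularCount d K ≤
      B * (d - rdeg K u) * (d * regularCount d K) :=
    mul_le_mul_of_nonneg_left (le_mul_of_one_le_left hN hd1) (mul_nonneg h.nonneg hg)
  have hpair := (h.mono (Nat.le_add_right _ j)).mul_sum_ind_sdiff_le u x
  rw [← regularCount] at hsum
  linarith [h.mul_sum_walks_sdiff_le hj hux]

lemma sum_mul_sum_ind_compl_mul_walks_le (hd : 0 < d) (K : SimpleGraph V) (u v : V) :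
    ∑ x, ind K x v * ∑ G ∈ regularAbove d K, ind Gᶜ u v * walks (G \ K) Gᶜ u x ≤
      d * lossOut d K u v := by
  have hd' : (0 : ℝ) < d := Nat.cast_pos.2 hd
  calc _ = ∑ G ∈ regularAbove d K, ∑ w, ind (G \ K) u w * ind Gᶜ u v * walks Gᶜ K w v := by
        simp only [walks, mul_sum]
        rw [sum_comm]
        refine sum_congr rfl fun G _ => ?_
        rw [sum_comm]
        exact sum_congr rfl fun w _ => sum_congr rfl fun x _ => by ring
    _ ≤ ∑ G ∈ regularAbove d K, ∑ w,
        ind (G \ K) u w * ind Gᶜ u v * (d * loss K G w v) := by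
        refine sum_le_sum fun G hG => sum_le_sum fun w _ => mul_le_mul_of_nonneg_left ?_
          (mul_nonneg (ind_nonneg _ _ _) (ind_nonneg _ _ _))
        rw [← div_le_iff₀' hd']
        exact walks_div_le_loss hG v w
    _ = d * lossOut d K u v := by
        simp only [lossOut, mul_sum, mul_left_comm (d : ℝ)]

lemma le_mul_lossOut (h : IsSparse B d K j) (hj : 1 ≤ j) (huv : u ≠ v) (hK : ¬K.Adj u v)
    (hu : rdeg K u ≤ d) :
    (d - rdeg K u) * regularCount d K * ((Fintype.card V - 3 * B * d) * (rdeg K v / d)) ≤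
      Fintype.card V * lossOut d K u v := by
  have hd := h.cast_pos
  have hsum : (d - rdeg K u) * regularCount d K * (Fintype.card V - 3 * B * d) * rdeg K v ≤
      Fintype.card V * ∑ x, ind K x v *
        ∑ G ∈ regularAbove d K, ind Gᶜ u v * walks (G \ K) Gᶜ u x := by
    rw [← sum_ind_left K v, mul_sum, mul_sum]
    refine sum_le_sum fun x _ => ?_
    by_cases hxv : K.Adj x v
    · rw [ind_of_adj hxv, mul_one, one_mul]
      exact h.le_mul_sum_ind_compl_mul_walks hj huv hK hu (by rintro rfl; exact hK hxv)
    · rw [ind_of_not_adj hxv, mul_zero, zero_mul, mul_zero]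
  refine le_of_mul_le_mul_left ?_ hd
  calc _ = (d - rdeg K u) * regularCount d K * (Fintype.card V - 3 * B * d) * rdeg K v := by
        field_simp
    _ ≤ _ := hsum
    _ ≤ Fintype.card V * (d * lossOut d K u v) := mul_le_mul_of_nonneg_left
        (sum_mul_sum_ind_compl_mul_walks_le h.pos K u v) (Nat.cast_nonneg _)
    _ = _ := mul_left_comm _ _ _

end IsSparse

end LossBounds

section EdgeBounds

variable [Fintype V] {B : ℝ} {d j : ℕ} {K : SimpleGraph V} {u v : V}

lemma IsSparse.mul_sum_ind_upper (h : IsSparse B d K j) (hj : 4 ≤ j) (huv : u ≠ v)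
    (hK : ¬K.Adj u v) (hu : rdeg K u ≤ d) :
    (Fintype.card V - 1 - rdeg K u) * ∑ G ∈ regularAbove d K, ind G u v ≤
      (d - rdeg K u) * regularCount d K *
        (1 - (1 - 3 * B * d / Fintype.card V) * (rdeg K v / d) +
          B * penaltyBound B d K / Fintype.card V) := by
  have : Nonempty V := ⟨v⟩
  have hn : (0 : ℝ) < Fintype.card V := Nat.cast_pos.2 Fintype.card_pos
  have hin : Fintype.card V * lossIn d K u v ≤
      (d - rdeg K u) * regularCount d K * (B * penaltyBound B d K) := by
    have hloss := mul_le_mul_of_nonneg_left (h.lossIn_le hj u v) hn.le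
    have hedge := mul_le_mul_of_nonneg_left (h.mul_sum_ind_le hK) (penaltyBound_nonneg h.nonneg d K)
    linarith
  have hout := h.le_mul_lossOut (by omega) huv hK hu
  rw [edge_balance d huv hK]
  refine le_of_mul_le_mul_left ?_ hn
  calc _ = (d - rdeg K u) * regularCount d K * Fintype.card V +
        Fintype.card V * lossIn d K u v - Fintype.card V * lossOut d K u v := by ring
    _ ≤ (d - rdeg K u) * regularCount d K * Fintype.card V +
        (d - rdeg K u) * regularCount d K * (B * penaltyBound B d K) -
        (d - rdeg K u) * regularCount d K *
          ((Fintype.card V - 3 * B * d) * (rdeg K v / d)) := by gcongr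
    _ = _ := by
        field_simp
        ring

lemma IsSparse.mul_sum_ind_lower (h : IsSparse B d K j) (hj : 4 ≤ j) (huv : u ≠ v)
    (hK : ¬K.Adj u v) (hu : rdeg K u ≤ d) :
    (d - rdeg K u) * regularCount d K *
        (1 - (1 + 4 * B * d / Fintype.card V) * (rdeg K v / d) -
          B * penaltyBound B d K / Fintype.card V) ≤
      (Fintype.card V - 1 - rdeg K u) * ∑ G ∈ regularAbove d K, ind G u v := by
  have : Nonempty V := ⟨v⟩
  have hn : (0 : ℝ) < Fintype.card V := Nat.cast_pos.2 Fintype.card_pos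
  have hd := h.cast_pos
  have hin : 0 ≤ lossIn d K u v := sum_nonneg fun G _ => sum_nonneg fun w _ =>
    mul_nonneg (mul_nonneg (ind_nonneg _ _ _) (ind_nonneg _ _ _)) (loss_nonneg _ _ _ _)
  rw [edge_balance d huv hK]
  refine le_of_mul_le_mul_left ?_ hn
  calc _ = (d - rdeg K u) * regularCount d K * Fintype.card V -
        (d - rdeg K u) * regularCount d K *
          (Fintype.card V * (rdeg K v / d) + B * (4 * rdeg K v + penaltyBound B d K)) := by
        field_simp
        ring
    _ ≤ (d - rdeg K u) * regularCount d K * Fintype.card V +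
        Fintype.card V * lossIn d K u v - Fintype.card V * lossOut d K u v := by
        linarith [h.mul_lossOut_le hj huv hu, mul_nonneg hn.le hin]
    _ = _ := by ring

end EdgeBounds

section EdgeRatio

variable [Fintype V] {B : ℝ} {d j L : ℕ} {F G H K : SimpleGraph V} {u v : V}

/-- The order of magnitude of the relative error when an edge is added to `H`. -/
def relError (d : ℕ) (H : SimpleGraph V) : ℝ :=
  1 / Fintype.card V + H.edgeSet.ncard / (d * Fintype.card V) + d ^ 2 / Fintype.card V ^ 2

/-- The constant in front of `relError` in the bounds for the number of regular graphs
containing one more edge, when at most `L` edges have been added so far. -/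
def edgeConst (B : ℝ) (L : ℕ) : ℝ := B * (16 * L + 96 + 32 * B)

lemma relError_nonneg (d : ℕ) (H : SimpleGraph V) : 0 ≤ relError d H := by
  unfold relError
  positivity

lemma relError_mono (d : ℕ) (h : K ≤ H) : relError d K ≤ relError d H := by
  have := Set.ncard_le_ncard (SimpleGraph.edgeSet_mono h)
  unfold relError
  gcongr

lemma inv_card_le_relError (d : ℕ) (H : SimpleGraph V) :
    1 / (Fintype.card V : ℝ) ≤ relError d H := by
  rw [relError, add_assoc]
  exact le_add_of_nonneg_right (by positivity)

lemma edgeConst_nonneg (hB : 0 ≤ B) (L : ℕ) : 0 ≤ edgeConst B L := by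
  unfold edgeConst
  positivity

lemma sum_ind_eq_regularCount (d : ℕ) (K : SimpleGraph V) (huv : u ≠ v) :
    ∑ G ∈ regularAbove d K, ind G u v = regularCount d (K ⊔ SimpleGraph.edge u v) := by
  have := sum_indEdges_mul d K (S := {s(u, v)}) (by simpa using huv) fun _ => 1
  simpa [indEdges_singleton, regularCount, SimpleGraph.edge] using this

lemma penaltyBound_div_le [Nonempty V] (hB : 0 ≤ B) (hd : 0 < d)
    (hK : K.edgeSet.ncard ≤ H.edgeSet.ncard + L) :
    penaltyBound B d K / Fintype.card V ≤ (8 * L + 96 + 32 * B) * relError d H := by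
  have hd1 : (1 : ℝ) ≤ d := Nat.one_le_cast.2 hd
  have hK' : (K.edgeSet.ncard : ℝ) ≤ H.edgeSet.ncard + L := by exact_mod_cast hK
  have hn : (0 : ℝ) < Fintype.card V := Nat.cast_pos.2 Fintype.card_pos
  have hedges : (K.edgeSet.ncard : ℝ) / (d * Fintype.card V) ≤
      H.edgeSet.ncard / (d * Fintype.card V) + L / Fintype.card V :=
    calc (K.edgeSet.ncard : ℝ) / (d * Fintype.card V)
        ≤ (H.edgeSet.ncard + L) / (d * Fintype.card V) := by gcongr
      _ ≤ _ := by
        rw [add_div]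
        gcongr
        exact le_mul_of_one_le_left hn.le hd1
  have hsplit : penaltyBound B d K / Fintype.card V = 8 * (K.edgeSet.ncard / (d * Fintype.card V)) +
      96 * (1 / Fintype.card V) + 32 * B * (d ^ 2 / Fintype.card V ^ 2) := by
    rw [penaltyBound]
    field_simp
  have hterms : 0 ≤ (8 * L + 88 + 32 * B) * (H.edgeSet.ncard / (d * Fintype.card V)) +
      32 * B * (1 / Fintype.card V) + (8 * L + 96) * (d ^ 2 / Fintype.card V ^ 2) := by positivity
  rw [hsplit, relError]
  linarith [mul_one_div (L : ℝ) (Fintype.card V)]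

lemma rdeg_div_card_le [Nonempty V] (hF : F.edgeSet.ncard ≤ L) (H : SimpleGraph V) (v : V) :
    rdeg F v / Fintype.card V ≤ 2 * L * relError d H := by
  have hF' : (F.edgeSet.ncard : ℝ) ≤ L := Nat.cast_le.2 hF
  rw [← mul_one_div]
  exact mul_le_mul ((rdeg_le_two_mul_ncard_edgeSet F v).trans (by linarith))
    (inv_card_le_relError d H) (by positivity) (by positivity)

namespace IsSparse

lemma regularCount_sup_edge_le (h : IsSparse B d H (L + 4)) (hF : F.edgeSet.ncard ≤ L)
    (hsmall : 3 * B * d ≤ Fintype.card V) (huv : u ≠ v) (hK : ¬(H ⊔ F).Adj u v)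
    (hu : rdeg (H ⊔ F) u ≤ d) :
    (Fintype.card V - 1 - rdeg (H ⊔ F) u) * regularCount d (H ⊔ F ⊔ SimpleGraph.edge u v) ≤
      (d - rdeg (H ⊔ F) u) * regularCount d (H ⊔ F) *
        (1 - rdeg F v / d + edgeConst B L * relError d H) := by
  have : Nonempty V := ⟨v⟩
  have hn : (0 : ℝ) < Fintype.card V := Nat.cast_pos.2 Fintype.card_pos
  have hd := h.cast_pos
  have hB := h.nonneg
  have hK' : (H ⊔ F).edgeSet.ncard ≤ H.edgeSet.ncard + L :=
    (ncard_edgeSet_sup_le H F).trans (Nat.add_le_add_left hF _)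
  have hupper := (h.mono (j' := 4) (by omega)).mul_sum_ind_upper le_rfl huv hK hu
  rw [sum_ind_eq_regularCount d _ huv] at hupper
  refine hupper.trans (mul_le_mul_of_nonneg_left ?_
    (mul_nonneg (sub_nonneg.2 hu) (regularCount_nonneg _ _)))
  have hdeg : (1 - 3 * B * d / Fintype.card V) * (rdeg F v / d) ≤
      (1 - 3 * B * d / Fintype.card V) * (rdeg (H ⊔ F) v / d) := by
    refine mul_le_mul_of_nonneg_left ?_ (sub_nonneg.2 ((div_le_one hn).2 hsmall))
    exact div_le_div_of_nonneg_right (rdeg_mono v le_sup_right) hd.le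
  have hfirst : 3 * B * d / Fintype.card V * (rdeg F v / d) ≤ 3 * B * (2 * L * relError d H) := by
    refine le_of_eq_of_le ?_ (mul_le_mul_of_nonneg_left (rdeg_div_card_le (d := d) hF H v)
      (by positivity : 0 ≤ 3 * B))
    field_simp
  have hsecond := mul_le_mul_of_nonneg_left (penaltyBound_div_le hB h.pos hK') hB
  have hspare : 0 ≤ 2 * B * L * relError d H :=
    mul_nonneg (by positivity) (relError_nonneg d H)
  rw [edgeConst]
  rw [← mul_div_assoc] at hsecond
  linarith

lemma le_regularCount_sup_edge (h : IsSparse B d F 4) (hF : F.edgeSet.ncard ≤ L) (huv : u ≠ v)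
    (hadj : ¬F.Adj u v) (hu : rdeg F u ≤ d) :
    (d - rdeg F u) * regularCount d F *
        (1 - rdeg F v / d - edgeConst B L * relError d (⊥ : SimpleGraph V)) ≤
      (Fintype.card V - 1 - rdeg F u) * regularCount d (F ⊔ SimpleGraph.edge u v) := by
  have : Nonempty V := ⟨v⟩
  have hd := h.cast_pos
  have hB := h.nonneg
  have hlower := h.mul_sum_ind_lower le_rfl huv hadj hu
  rw [sum_ind_eq_regularCount d _ huv] at hlower
  refine le_trans (mul_le_mul_of_nonneg_left ?_
    (mul_nonneg (sub_nonneg.2 hu) (regularCount_nonneg _ _))) hlower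
  have hfirst : 4 * B * d / Fintype.card V * (rdeg F v / d) ≤
      4 * B * (2 * L * relError d (⊥ : SimpleGraph V)) := by
    refine le_of_eq_of_le ?_ (mul_le_mul_of_nonneg_left (rdeg_div_card_le (d := d) hF ⊥ v)
      (by positivity : 0 ≤ 4 * B))
    field_simp
  have hsecond := mul_le_mul_of_nonneg_left
    (penaltyBound_div_le (H := ⊥) hB h.pos (hF.trans (Nat.le_add_left _ _))) hB
  rw [edgeConst]
  rw [← mul_div_assoc] at hsecond
  linarith

end IsSparse

end EdgeRatio

section Ratio

lemma one_le_mul_one_sub_div {f a : ℝ} {L : ℕ} (hf : f ≤ 2 * L) (hfa : f + 1 ≤ a) (ha : 0 < a) :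
    1 ≤ (2 * L + 1) * (1 - f / a) := by
  have hgap : 2 * L * 1 ≤ 2 * L * (a - f) := by
    gcongr
    linarith
  rw [one_sub_div ha.ne', ← mul_div_assoc, one_le_div ha]
  linarith

lemma mul_sub_comparison {a m k f : ℝ} (hfk : f ≤ k) (ham : a ≤ m) :
    (a - k) * (m - f) ≤ (a - f) * (m - k) := by
  linarith [mul_nonneg (sub_nonneg.2 hfk) (sub_nonneg.2 ham)]

variable [Fintype V] {B : ℝ} {d j L : ℕ} {F G H K : SimpleGraph V} {u v : V}

lemma rdeg_add_one_le (hG : G ∈ regularAbove d K) (huv : G.Adj u v) (hK : ¬K.Adj u v) :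
    rdeg K u + 1 ≤ d := by
  have hadj : (G \ K).Adj u v := ⟨huv, hK⟩
  have hone : 1 ≤ rdeg (G \ K) u :=
    (ind_of_adj hadj).symm.trans_le
      (single_le_sum (f := ind (G \ K) u) (fun _ _ => ind_nonneg _ _ _) (mem_univ v))
  rw [rdeg_sdiff u (le_of_mem hG), rdeg_of_mem hG] at hone
  linarith

lemma IsSparse.two_mul_add_lt [Nonempty V] (h : IsSparse B d K j) :
    (2 * (K.edgeSet.ncard + j) + 2 * (d * (d + 1)) : ℝ) < d * Fintype.card V := by
  have hpos : (0 : ℝ) < d * Fintype.card V :=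
    mul_pos h.cast_pos (Nat.cast_pos.2 Fintype.card_pos)
  linarith [pos_of_mul_pos_right (hpos.trans_le h.le_mul) h.nonneg]

/-- The factor by which the error of a single comparison grows when the two bounds for the effect
of a new edge are divided by each other. -/
def stepConst (B : ℝ) (L : ℕ) : ℝ := 4 * (2 * L + 1) * edgeConst B L

/-- The degree `d` and the graph `H` are small enough for comparing, up to `L` times, the effect of
a new edge in the presence of `H` with its effect in the absence of `H`. -/
structure InRegime (B : ℝ) (L d : ℕ) (H : SimpleGraph V) : Prop where
  isSparse : IsSparse B d H (L + 4)
  mul_le_card : 3 * B * d ≤ Fintype.card V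
  stepConst_mul_bot_le : stepConst B L * relError d (⊥ : SimpleGraph V) ≤ 2

lemma stepConst_nonneg (hB : 0 ≤ B) (L : ℕ) : 0 ≤ stepConst B L :=
  mul_nonneg (by positivity) (edgeConst_nonneg hB L)

namespace InRegime

lemma add_one_le_card [Nonempty V] (h : InRegime B L d H) : (d + 1 : ℝ) ≤ Fintype.card V := by
  have hlt := h.isSparse.two_mul_add_lt
  refine le_of_mul_le_mul_left ?_ h.isSparse.cast_pos
  have hprod : (0 : ℝ) ≤ d * (d + 1) := by positivity
  linarith

lemma one_le_mul_lower (h : InRegime B L d H) (hF : F.edgeSet.ncard ≤ L)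
    (hv : rdeg F v + 1 ≤ d) :
    1 ≤ 2 * (2 * L + 1) *
      (1 - rdeg F v / d - edgeConst B L * relError d (⊥ : SimpleGraph V)) := by
  have hF' : (F.edgeSet.ncard : ℝ) ≤ L := Nat.cast_le.2 hF
  have hmain := one_le_mul_one_sub_div
    ((rdeg_le_two_mul_ncard_edgeSet F v).trans (by linarith : _ ≤ 2 * (L : ℝ))) hv
    h.isSparse.cast_pos
  have hbot := h.stepConst_mul_bot_le
  unfold stepConst at hbot
  linarith

lemma upper_le_lower_mul (h : InRegime B L d H) (hF : F.edgeSet.ncard ≤ L)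
    (hv : rdeg F v + 1 ≤ d) :
    1 - rdeg F v / d + edgeConst B L * relError d H ≤
      (1 - rdeg F v / d - edgeConst B L * relError d (⊥ : SimpleGraph V)) *
        (1 + stepConst B L * relError d H) := by
  have hR := edgeConst_nonneg h.isSparse.nonneg L
  have hbot := mul_le_mul_of_nonneg_left (relError_mono d (bot_le (a := H))) hR
  have hgain := mul_le_mul_of_nonneg_right (h.one_le_mul_lower hF hv)
    (mul_nonneg zero_le_two (mul_nonneg hR (relError_nonneg d H)))
  rw [stepConst]
  linarith

lemma mul_mul_regularCount_le (h : InRegime B L d H) (hF : F.edgeSet.ncard ≤ L) (huv : u ≠ v)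
    (hadj : ¬(H ⊔ F).Adj u v) (hu : rdeg (H ⊔ F) u ≤ d) (hv : rdeg F v + 1 ≤ d) :
    (d - rdeg F u) * (Fintype.card V - 1 - rdeg (H ⊔ F) u) *
        (regularCount d (H ⊔ F ⊔ SimpleGraph.edge u v) * regularCount d F) ≤
      (d - rdeg (H ⊔ F) u) * (Fintype.card V - 1 - rdeg F u) * ((1 + stepConst B L * relError d H) *
        (regularCount d (F ⊔ SimpleGraph.edge u v) * regularCount d (H ⊔ F))) := by
  have : Nonempty V := ⟨v⟩
  have hfk : rdeg F u ≤ rdeg (H ⊔ F) u := rdeg_mono u le_sup_right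
  have hr := mul_nonneg (stepConst_nonneg h.isSparse.nonneg L) (relError_nonneg d H)
  have hK := regularCount_nonneg d (H ⊔ F)
  have hF0 := regularCount_nonneg d F
  have hp : 0 ≤ (d : ℝ) - rdeg (H ⊔ F) u := sub_nonneg.2 hu
  have hq : 0 ≤ (d : ℝ) - rdeg F u := sub_nonneg.2 (hfk.trans hu)
  have hupper := h.isSparse.regularCount_sup_edge_le hF h.mul_le_card huv hadj hu
  have hlower := (h.isSparse.mono (by omega)).le_regularCount_sup_edge hF huv
    (fun hadjF => hadj (Or.inr hadjF)) (hfk.trans hu)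
  have hratio := h.upper_le_lower_mul hF hv
  have hx := h.one_le_mul_lower hF hv
  set x := 1 - rdeg F v / d - edgeConst B L * relError d (⊥ : SimpleGraph V)
  have hx0 : 0 < x := pos_of_mul_pos_right (one_pos.trans_le hx) (by positivity)
  have hupper' := hupper.trans (mul_le_mul_of_nonneg_left hratio (mul_nonneg hp hK))
  refine le_of_mul_le_mul_right ?_ hx0
  have hmul := mul_le_mul hupper' hlower (by positivity) (by positivity)
  linarith

lemma regularCount_sup_edge_mul_le (h : InRegime B L d H) (hF : F.edgeSet.ncard ≤ L) (huv : u ≠ v)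
    (hadj : ¬(H ⊔ F).Adj u v) :
    regularCount d (H ⊔ F ⊔ SimpleGraph.edge u v) * regularCount d F ≤
      (1 + stepConst B L * relError d H) *
        (regularCount d (F ⊔ SimpleGraph.edge u v) * regularCount d (H ⊔ F)) := by
  have : Nonempty V := ⟨v⟩
  have hr := mul_nonneg (stepConst_nonneg h.isSparse.nonneg L) (relError_nonneg d H)
  have hK := regularCount_nonneg d (H ⊔ F)
  have hF' := regularCount_nonneg d (F ⊔ SimpleGraph.edge u v)
  rcases (regularAbove d (H ⊔ F ⊔ SimpleGraph.edge u v)).eq_empty_or_nonempty with hempty | ⟨G, hG⟩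
  · rw [regularCount, hempty, card_empty, Nat.cast_zero, zero_mul]
    positivity
  have hGK := regularAbove_anti d (le_sup_left : H ⊔ F ≤ _) hG
  have hGuv : G.Adj u v := le_of_mem hG (Or.inr (by simp [SimpleGraph.edge_adj, huv]))
  have hu := rdeg_add_one_le hGK hGuv hadj
  have hv := rdeg_add_one_le hGK hGuv.symm fun hvu => hadj hvu.symm
  have hfk (x : V) : rdeg F x ≤ rdeg (H ⊔ F) x := rdeg_mono x le_sup_right
  have hcard := h.add_one_le_card
  have hprod : 0 < (d - rdeg F u) * (Fintype.card V - 1 - rdeg (H ⊔ F) u) :=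
    mul_pos (by linarith [hfk u]) (by linarith)
  refine le_of_mul_le_mul_left ((h.mul_mul_regularCount_le hF huv hadj (by linarith)
    (by linarith [hfk v])).trans ?_) hprod
  exact mul_le_mul_of_nonneg_right (mul_sub_comparison (hfk u) (by linarith)) (by positivity)

lemma regularCount_sup_fromEdgeSet_mul_le (h : InRegime B L d H) (S : Finset (Sym2 V))
    (hS : #S ≤ L) (hdiag : ∀ e ∈ S, ¬e.IsDiag) (hdisj : ∀ e ∈ S, e ∉ H.edgeSet) :
    regularCount d (H ⊔ SimpleGraph.fromEdgeSet S) * regularCount d (⊥ : SimpleGraph V) ≤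
      (1 + stepConst B L * relError d H) ^ #S *
        (regularCount d (SimpleGraph.fromEdgeSet (S : Set (Sym2 V))) * regularCount d H) := by
  classical
  have hr := mul_nonneg (stepConst_nonneg h.isSparse.nonneg L) (relError_nonneg d H)
  induction S using Finset.induction with
  | empty => simp [mul_comm]
  | insert e S he ih =>
    obtain ⟨u, v⟩ := e
    rw [card_insert_of_notMem he] at hS ⊢
    have ih' := ih (by omega) (fun e hmem => hdiag e (mem_insert_of_mem hmem))
      (fun e hmem => hdisj e (mem_insert_of_mem hmem))
    have hinsert : SimpleGraph.fromEdgeSet ((insert s(u, v) S : Finset (Sym2 V)) : Set (Sym2 V)) =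
        SimpleGraph.fromEdgeSet S ⊔ SimpleGraph.edge u v := by
      rw [coe_insert, Set.insert_eq, SimpleGraph.fromEdgeSet_union, sup_comm, SimpleGraph.edge]
    set F := SimpleGraph.fromEdgeSet (S : Set (Sym2 V))
    have hadj : ¬(H ⊔ F).Adj u v := by
      rintro (hH | hF)
      · exact hdisj _ (mem_insert_self _ _) hH
      · exact he (by simpa using hF.1)
    have hstep := h.regularCount_sup_edge_mul_le
      ((ncard_edgeSet_fromEdgeSet_le S).trans (by omega)) (hdiag _ (mem_insert_self _ _)) hadj
    rw [hinsert, ← sup_assoc]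
    have hK' := regularCount_nonneg d (H ⊔ F ⊔ SimpleGraph.edge u v)
    have hF' := regularCount_nonneg d (F ⊔ SimpleGraph.edge u v)
    have hbot := regularCount_nonneg d (⊥ : SimpleGraph V)
    have hH := regularCount_nonneg d H
    rcases (regularCount_nonneg d F).eq_or_lt with hzero | hpos
    · rw [le_antisymm ((regularCount_anti d (le_sup_right.trans le_sup_left)).trans hzero.ge) hK',
        zero_mul]
      positivity
    · refine le_of_mul_le_mul_left ?_ hpos
      have hmul := mul_le_mul_of_nonneg_right hstep hbot
      have ih'' := mul_le_mul_of_nonneg_left ih' (mul_nonneg (add_nonneg zero_le_one hr) hF')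
      rw [pow_succ]
      linarith

end InRegime

end Ratio

section MainComparison

variable [Fintype V] {B c : ℝ} {d L : ℕ} {F H : SimpleGraph V}

lemma one_add_pow_le {x X : ℝ} (hx : 0 ≤ x) (hxX : x ≤ X) (m : ℕ) :
    (1 + x) ^ m ≤ 1 + m * (1 + X) ^ (m - 1) * x := by
  have hpow := (le_abs_self _).trans (abs_pow_sub_pow_le (1 + x) 1 m)
  rw [add_sub_cancel_left, abs_of_nonneg hx, abs_one, abs_of_nonneg (by positivity),
    max_eq_left (by linarith), one_pow] at hpow
  have hmono : x * m * (1 + x) ^ (m - 1) ≤ x * m * (1 + X) ^ (m - 1) := by gcongr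
  linarith

/-- The constant in front of `relError` in the comparison of the probabilities of a set of at most
`L` edges with and without conditioning on `H`. -/
def ratioConst (B : ℝ) (L : ℕ) : ℝ := L * (1 + 3 * stepConst B L) ^ (L - 1) * stepConst B L

lemma ratioConst_pos (hB : 0 < B) (hL : 0 < L) : 0 < ratioConst B L := by
  unfold ratioConst stepConst edgeConst
  positivity

/-- How small `d / n` has to be for `InRegime` to hold when `d * n - 2 * |H| ≥ c * d * n`. -/
def densityBound (c : ℝ) (L : ℕ) : ℝ := min (c / (4 * L + 24)) (1 / (1 + stepConst (2 / c) L))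

lemma densityBound_pos (hc : 0 < c) (L : ℕ) : 0 < densityBound c L := by
  have := stepConst_nonneg (B := 2 / c) (by positivity) L
  unfold densityBound
  positivity

lemma isSparse_of_le (hc : 0 < c) (hd : 0 < d) (hdn : (4 * L + 24) * d ≤ c * Fintype.card V)
    (hH : c * (d * Fintype.card V) ≤ d * Fintype.card V - 2 * H.edgeSet.ncard) :
    IsSparse (2 / c) d H (L + 4) where
  nonneg := by positivity
  pos := hd
  le_mul := by
    have hd1 : (1 : ℝ) ≤ d := Nat.one_le_cast.2 hd
    have hdeg : (d : ℝ) ≤ d * d := le_mul_of_one_le_left (by positivity) hd1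
    have hedges : (L + 4 : ℝ) ≤ (L + 4) * (d * d) :=
      le_mul_of_one_le_right (by positivity) (hd1.trans hdeg)
    have hsmall := mul_le_mul_of_nonneg_left hdn (Nat.cast_nonneg (α := ℝ) d)
    rw [div_mul_eq_mul_div, le_div_iff₀ hc]
    push_cast
    linarith

lemma relError_bot_le (hd : 0 < d) (hdn : (d : ℝ) ≤ Fintype.card V) :
    relError d (⊥ : SimpleGraph V) ≤ 2 * (d / Fintype.card V) := by
  have hd1 : (1 : ℝ) ≤ d := Nat.one_le_cast.2 hd
  have hinv : 1 / (Fintype.card V : ℝ) ≤ d / Fintype.card V := by gcongr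
  have hsq : (d / Fintype.card V : ℝ) ^ 2 ≤ d / Fintype.card V :=
    pow_le_of_le_one (by positivity) (div_le_one_of_le₀ hdn (by positivity)) two_ne_zero
  rw [relError, SimpleGraph.edgeSet_bot, Set.ncard_empty, Nat.cast_zero, zero_div, ← div_pow]
  linarith

namespace InRegime

lemma of_le_densityBound_mul (hc : 0 < c) (hd : 0 < d)
    (hdn : d ≤ densityBound c L * Fintype.card V)
    (hH : c * (d * Fintype.card V) ≤ d * Fintype.card V - 2 * H.edgeSet.ncard) :
    InRegime (2 / c) L d H := by
  have hs := stepConst_nonneg (B := 2 / c) (by positivity) L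
  have hsparse : (4 * L + 24) * d ≤ c * Fintype.card V := by
    have := hdn.trans (mul_le_mul_of_nonneg_right (min_le_left _ _) (Nat.cast_nonneg _))
    rwa [div_mul_eq_mul_div, le_div_iff₀ (by positivity), mul_comm] at this
  have hstep : (1 + stepConst (2 / c) L) * d ≤ Fintype.card V := by
    have := hdn.trans (mul_le_mul_of_nonneg_right (min_le_right _ _) (Nat.cast_nonneg _))
    rwa [div_mul_eq_mul_div, one_mul, le_div_iff₀ (by positivity), mul_comm] at this
  have hsd : 0 ≤ stepConst (2 / c) L * d := by positivity
  refine ⟨isSparse_of_le hc hd hsparse hH, ?_, ?_⟩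
  · have hLd : (0 : ℝ) ≤ (4 * L + 18) * d := by positivity
    rw [mul_div_assoc', div_mul_eq_mul_div, div_le_iff₀ hc]
    linarith
  · have hratio : stepConst (2 / c) L * (d / Fintype.card V) ≤ 1 := by
      rw [mul_div_assoc']
      exact div_le_one_of_le₀ (by linarith [Nat.cast_nonneg (α := ℝ) d]) (by positivity)
    have hbot := mul_le_mul_of_nonneg_left
      (relError_bot_le (V := V) hd (by linarith)) hs
    linarith

lemma relError_le_three [Nonempty V] (h : InRegime B L d H) : relError d H ≤ 3 := by
  have hlt := h.isSparse.two_mul_add_lt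
  have hcard := h.add_one_le_card
  have hn : (1 : ℝ) ≤ Fintype.card V := Nat.one_le_cast.2 Fintype.card_pos
  have hinv : 1 / (Fintype.card V : ℝ) ≤ 1 := div_le_one_of_le₀ hn (by positivity)
  have hedges : H.edgeSet.ncard / (d * Fintype.card V : ℝ) ≤ 1 := by
    refine div_le_one_of_le₀ ?_ (by positivity)
    have : (0 : ℝ) ≤ H.edgeSet.ncard + 2 * (L + 4 : ℕ) + 2 * (d * (d + 1)) := by positivity
    linarith
  have hsq : (d : ℝ) ^ 2 / Fintype.card V ^ 2 ≤ 1 :=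
    div_le_one_of_le₀ (pow_le_pow_left₀ (by positivity) (by linarith) 2) (by positivity)
  rw [relError]
  linarith

lemma regularCount_sup_mul_le [Nonempty V] (h : InRegime B L d H) (hF : F.edgeSet.ncard ≤ L)
    (hdisj : Disjoint F.edgeSet H.edgeSet) :
    regularCount d (H ⊔ F) * regularCount d (⊥ : SimpleGraph V) ≤
      regularCount d F * (1 + ratioConst B L * relError d H) * regularCount d H := by
  classical
  have hs := stepConst_nonneg h.isSparse.nonneg L
  have hr := mul_nonneg hs (relError_nonneg d H)
  have hF0 := regularCount_nonneg d F
  have hH0 := regularCount_nonneg d H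
  have hcard : #F.edgeFinset ≤ L := by
    rwa [SimpleGraph.edgeFinset, ← Set.ncard_eq_toFinset_card']
  have hedges := h.regularCount_sup_fromEdgeSet_mul_le F.edgeFinset hcard
    (fun e he => F.not_isDiag_of_mem_edgeFinset he)
    (fun e he => Set.disjoint_left.1 hdisj (SimpleGraph.mem_edgeFinset.1 he))
  rw [SimpleGraph.coe_edgeFinset, SimpleGraph.fromEdgeSet_edgeSet] at hedges
  have hpow : (1 + stepConst B L * relError d H) ^ #F.edgeFinset ≤
      1 + ratioConst B L * relError d H :=
    calc (1 + stepConst B L * relError d H) ^ #F.edgeFinset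
        ≤ (1 + stepConst B L * relError d H) ^ L := by
          gcongr
          linarith
      _ ≤ 1 + L * (1 + stepConst B L * 3) ^ (L - 1) * (stepConst B L * relError d H) :=
        one_add_pow_le hr (mul_le_mul_of_nonneg_left h.relError_le_three hs) L
      _ = 1 + ratioConst B L * relError d H := by
        rw [ratioConst]
        ring
  linarith [mul_le_mul_of_nonneg_right hpow (mul_nonneg hF0 hH0)]

end InRegime

end MainComparison

section Probability

variable {n d : ℕ} {K : SimpleGraph (Fin n)} {base : SimpleGraph (Fin n) → Prop}

lemma natCard_eq_regularCount (h : ∀ G, base G ↔ (∀ i, deg G i = d) ∧ K ≤ G) :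
    (Nat.card {G : SimpleGraph (Fin n) // base G} : ℝ) = regularCount d K := by
  rw [regularCount, Nat.subtype_card (regularAbove d K)]
  intro G
  simp only [h, mem_regularAbove, rdeg_eq_ncard_neighborSet, Nat.cast_inj, deg]

lemma prob_eq_div (h : ∀ G, base G ↔ (∀ i, deg G i = d) ∧ K ≤ G) (F : SimpleGraph (Fin n)) :
    prob base (fun G => F ≤ G) = regularCount d (K ⊔ F) / regularCount d K := by
  rw [prob, natCard_eq_regularCount h,
    natCard_eq_regularCount (K := K ⊔ F) fun G => by rw [h, and_assoc, sup_le_iff]]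

lemma regularCount_pos {G : SimpleGraph (Fin n)} (hG : (∀ i, deg G i = d) ∧ K ≤ G) :
    0 < regularCount d K := by
  rw [← natCard_eq_regularCount fun _ => Iff.rfl]
  have : Nonempty {G : SimpleGraph (Fin n) // (∀ i, deg G i = d) ∧ K ≤ G} := ⟨⟨G, hG⟩⟩
  exact Nat.cast_pos.2 Nat.card_pos

end Probability

end RegularSwitching

/-- Upper bound for the conditional probability of a bounded set of edges `F`,
given the subgraph `H`, in the random `d`-regular graph. -/
theorem stmt3 (c L : ℝ) (hc : 0 < c) (hL : 1 ≤ L) :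
    ∃ C δ : ℝ, 0 < C ∧ 0 < δ ∧
      ∀ n d : ℕ, 0 < n → 0 < d → Even (d * n) → (d : ℝ) ≤ δ * n →
      ∀ H F : SimpleGraph (Fin n),
      (∀ i, deg H i ≤ d) →
      c * ((d : ℝ) * n) ≤ (d : ℝ) * n - 2 * nedges H →
      (nedges F : ℝ) ≤ L →
      Disjoint F.edgeSet H.edgeSet →
      (∃ G : SimpleGraph (Fin n), (∀ i, deg G i = d) ∧ H ≤ G) →
      prob (fun G => (∀ i, deg G i = d) ∧ H ≤ G) (fun G => F ≤ G)
        ≤ prob (fun G => ∀ i, deg G i = d) (fun G => F ≤ G)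
          * (1 + C * (1 / (n : ℝ) + (nedges H : ℝ) / ((d : ℝ) * n)
              + (d : ℝ) ^ 2 / (n : ℝ) ^ 2)) := by
  have hB : 0 < 2 / c := by positivity
  refine ⟨RegularSwitching.ratioConst (2 / c) ⌊L⌋₊, RegularSwitching.densityBound c ⌊L⌋₊,
    RegularSwitching.ratioConst_pos hB (Nat.floor_pos.2 hL),
    RegularSwitching.densityBound_pos hc _, ?_⟩
  rintro n d hn hd - hdn H F - hH hF hdisj ⟨G, hG⟩
  have : Nonempty (Fin n) := ⟨⟨0, hn⟩⟩
  have hregime : RegularSwitching.InRegime (2 / c) ⌊L⌋₊ d H :=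
    .of_le_densityBound_mul hc hd (by rwa [Fintype.card_fin]) (by rwa [Fintype.card_fin])
  have hcompare := hregime.regularCount_sup_mul_le (Nat.le_floor hF) hdisj
  rw [RegularSwitching.prob_eq_div (fun _ => Iff.rfl) F,
    RegularSwitching.prob_eq_div (K := ⊥) (d := d) (fun _ => by simp) F, bot_sup_eq,
    div_mul_eq_mul_div, div_le_div_iff₀ (RegularSwitching.regularCount_pos hG)
      (RegularSwitching.regularCount_pos ⟨hG.1, bot_le⟩)]
  rwa [RegularSwitching.relError, Fintype.card_fin] at hcompare
end
end

section
/- Let H be a fixed graph with t vertices, h ≥ 1 edges, and maximum degree Δ_H. There exist real constants A_H and B_H and constants C > 0, δ > 0, depending only on H, such that for all positive integers n, d with dn even, Δ_H ≤ d ≤ δn: the expected number μ_H of subgraphs of 𝒢(n,d) isomorphic to H satisfies μ_H = ((n)_t/aut(H))·(Π_{v∈V(H)} (d)_{d_v^H})/(dn)^h·(1 − (A_H·d + B_H)/(dn) + θ) for some real θ with |θ| ≤ C·d²/n². -/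
open Filter

noncomputable section

/-- The maximum degree of `G`. -/
def maxDeg {n : ℕ} (G : SimpleGraph (Fin n)) : ℕ := Finset.univ.sup (deg G)

/-- The expectation of `X` for a graph chosen uniformly at random among all simple graphs
on `[n]` satisfying `base`. -/
def expect {n : ℕ} (base : SimpleGraph (Fin n) → Prop) (X : SimpleGraph (Fin n) → ℝ) : ℝ :=
  (∑ᶠ G ∈ {G : SimpleGraph (Fin n) | base G}, X G) /
    (Nat.card {G : SimpleGraph (Fin n) // base G} : ℝ)

/-- The number of embeddings of `H` into `G` as a (not necessarily induced) subgraph. -/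
def embCount {t n : ℕ} (H : SimpleGraph (Fin t)) (G : SimpleGraph (Fin n)) : ℕ :=
  Nat.card {f : Fin t ↪ Fin n // ∀ i j, H.Adj i j → G.Adj (f i) (f j)}

/-- The number of subgraphs of `G` isomorphic to `H`, i.e. the number of embeddings
divided by the number of automorphisms of `H`. -/
def copyCount {t n : ℕ} (H : SimpleGraph (Fin t)) (G : SimpleGraph (Fin n)) : ℝ :=
  (embCount H G : ℝ) / (Nat.card (H ≃g H) : ℝ)

/-!
For a finite set `X` of edges let `ρ X` be the probability that the random `d`-regular graph on
`n` vertices contains `X`, divided by `(d / n) ^ #X`, and let `P X` be its expected limit, the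
product of `(d)_k / d ^ k` over the degrees `k` of `X`.

Counting the edges at `v` in all `d`-regular graphs containing `X` expresses
`(1 - deg v / d) * ρ X` exactly through `ρ (X + vu)` for a new vertex `u`, up to terms with a
factor `1 / n`. Switching along the 4-cycle `vw`, `wy`, `yx`, `xv` with new vertices `x`, `y` shows
that `ρ (X + vw + xy)` and `ρ (X + vx + wy)` differ by a combination of values of `ρ` with a factor
`d / n`. Hence an edge `vw` can be added to `X` by attaching `vx` and `wy`, switching, and removing
`xy`. The two relations first give `ρ = O(1)`. Inserting an approximation `ρ = P + O((d / n) ^ k)`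
into their error terms then yields a next order expansion with error `O((d / n) ^ (k + 1))`, and
two rounds starting from `k = 0` are enough.
-/

open Finset Asymptotics
open scoped Topology symmDiff

section EdgeSets

variable {V V' : Type*} [DecidableEq V] [DecidableEq V']

/-- The vertices covered by the edges of `X`. -/
def verts (X : Finset (Sym2 V)) : Finset V := X.biUnion Sym2.toFinset

/-- The degree of `v` in the graph with edge set `X`. -/
def degIn (X : Finset (Sym2 V)) (v : V) : ℕ := #{e ∈ X | v ∈ e}

/-- The edge set `X` contains no loop, i.e. it is the edge set of a simple graph. -/
def Loopless (X : Finset (Sym2 V)) : Prop := ∀ e ∈ X, ¬ e.IsDiag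

/-- The covered vertices other than `v` that are not joined to `v` in `X`. -/
def nonNbrs (X : Finset (Sym2 V)) (v : V) : Finset V := {z ∈ verts X | z ≠ v ∧ s(v, z) ∉ X}

theorem mem_verts {X : Finset (Sym2 V)} {v : V} : v ∈ verts X ↔ ∃ e ∈ X, v ∈ e := by
  simp [verts]

theorem mk_notMem_of_notMem_verts {X : Finset (Sym2 V)} {x : V} (hx : x ∉ verts X) (v : V) :
    s(v, x) ∉ X :=
  fun h => hx (mem_verts.2 ⟨_, h, Sym2.mem_mk_right v x⟩)

theorem verts_insert (X : Finset (Sym2 V)) (v w : V) :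
    verts (insert s(v, w) X) = insert v (insert w (verts X)) := by
  ext z
  simp [mem_verts, or_assoc]

theorem verts_map (X : Finset (Sym2 V)) (f : V ↪ V') :
    verts (X.map f.sym2Map) = (verts X).map f := by
  ext z
  simp only [mem_verts, Finset.mem_map, Function.Embedding.sym2Map_apply, exists_exists_and_eq_and,
    Sym2.mem_map]
  exact ⟨fun ⟨e, he, w, hw, h⟩ => ⟨w, ⟨e, he, hw⟩, h⟩,
    fun ⟨w, ⟨e, he, hw⟩, h⟩ => ⟨e, he, w, hw, h⟩⟩

theorem degIn_insert {X : Finset (Sym2 V)} {v w : V} (h : s(v, w) ∉ X) (z : V) :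
    degIn (insert s(v, w) X) z = degIn X z + if z = v ∨ z = w then 1 else 0 := by
  rw [degIn, filter_insert]
  split_ifs with h₁ h₂ h₂ <;> simp_all [degIn]

theorem degIn_eq_zero {X : Finset (Sym2 V)} {v : V} (h : v ∉ verts X) : degIn X v = 0 :=
  card_eq_zero.2 <| filter_eq_empty_iff.2 fun e he hv => h <| mem_verts.2 ⟨e, he, hv⟩

theorem degIn_map (X : Finset (Sym2 V)) (f : V ↪ V') (v : V) :
    degIn (X.map f.sym2Map) (f v) = degIn X v := by
  rw [degIn, filter_map, card_map, degIn]
  congr! 2 with e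
  simp [Sym2.mem_map]

theorem card_filter_mk_mem (X : Finset (Sym2 V)) (v : V) :
    #{z ∈ verts X | s(v, z) ∈ X} = degIn X v := by
  refine card_bij (fun z _ => s(v, z)) (by simp) (fun _ _ _ _ => Sym2.congr_right.1) fun e he => ?_
  obtain ⟨he, z, rfl⟩ := mem_filter.1 he
  exact ⟨z, mem_filter.2 ⟨mem_verts.2 ⟨_, he, Sym2.mem_mk_right v z⟩, he⟩, rfl⟩

theorem nonNbrs_subset (X : Finset (Sym2 V)) (v : V) : nonNbrs X v ⊆ verts X :=
  filter_subset _ _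

theorem Loopless.insert {X : Finset (Sym2 V)} (hX : Loopless X) {v w : V} (hvw : v ≠ w) :
    Loopless (insert s(v, w) X) := by
  simpa [Loopless, hvw] using hX

end EdgeSets

section RegularExtensions

variable {V V' : Type*}

/-- The graph `G` is `d`-regular with vertex set `W`: the remaining elements of the ambient type
are isolated. -/
structure IsRegularOn (G : SimpleGraph V) (W : Finset V) (d : ℕ) : Prop where
  support_subset : G.support ⊆ W
  ncard_neighborSet : ∀ v ∈ W, (G.neighborSet v).ncard = d

theorem finite_isRegularOn (W : Finset V) (d : ℕ) :
    {G : SimpleGraph V | IsRegularOn G W d}.Finite := by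
  refine Set.Finite.of_finite_image (f := SimpleGraph.edgeSet)
    (W.sym2.finite_toSet.finite_subsets.subset ?_) SimpleGraph.edgeSet_injective.injOn
  rintro _ ⟨G, hG, rfl⟩ e he
  rw [mem_coe, mem_sym2_iff]
  intro v hv
  obtain ⟨w, rfl⟩ := hv
  exact hG.support_subset ⟨w, he⟩

/-- The `d`-regular graphs on `W` that contain all edges of `X`. -/
def regularExtensions (W : Finset V) (d : ℕ) (X : Finset (Sym2 V)) : Finset (SimpleGraph V) :=
  ((finite_isRegularOn W d).subset (Set.inter_subset_left (t := {G | ↑X ⊆ G.edgeSet}))).toFinset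

theorem mem_regularExtensions {W : Finset V} {d : ℕ} {X : Finset (Sym2 V)} {G : SimpleGraph V} :
    G ∈ regularExtensions W d X ↔ IsRegularOn G W d ∧ ∀ e ∈ X, e ∈ G.edgeSet := by
  simp [regularExtensions, Set.subset_def]

theorem isRegularOn_map_iff {G : SimpleGraph V} {W : Finset V} {d : ℕ} (f : V ↪ V') :
    IsRegularOn (G.map f) (W.map f) d ↔ IsRegularOn G W d := by
  have hncard (v : V) : ((G.map f).neighborSet (f v)).ncard = (G.neighborSet v).ncard := by
    rw [SimpleGraph.neighborSet_map, Set.ncard_image_of_injective _ f.injective]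
  constructor
  · rintro ⟨hsupp, hcard⟩
    rw [SimpleGraph.support_map, coe_map, Set.image_subset_image_iff f.injective] at hsupp
    exact ⟨hsupp, fun v hv => by rw [← hncard, hcard _ (mem_map_of_mem f hv)]⟩
  · rintro ⟨hsupp, hcard⟩
    refine ⟨?_, fun v hv => ?_⟩
    · rw [SimpleGraph.support_map, coe_map]
      exact Set.image_mono hsupp
    · obtain ⟨w, hw, rfl⟩ := Finset.mem_map.1 hv
      rw [hncard, hcard w hw]

theorem card_regularExtensions_map (f : V ↪ V') (W : Finset V) (d : ℕ) (X : Finset (Sym2 V)) :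
    #(regularExtensions (W.map f) d (X.map f.sym2Map)) = #(regularExtensions W d X) := by
  symm
  have hmem (G : SimpleGraph V) : G.map f ∈ regularExtensions (W.map f) d (X.map f.sym2Map) ↔
      G ∈ regularExtensions W d X := by
    simp only [mem_regularExtensions, isRegularOn_map_iff, forall_mem_map, SimpleGraph.edgeSet_map,
      f.sym2Map.injective.mem_set_image]
  refine card_bij (fun G _ => G.map f) (fun G hG => (hmem G).2 hG)
    (fun G _ G' _ h => SimpleGraph.map_injective f h) fun G hG => ?_
  have hG' : (G.comap f).map f = G := by
    refine le_antisymm (SimpleGraph.map_comap_le f G) fun u v huv => ?_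
    have hsupp := (mem_regularExtensions.1 hG).1.support_subset
    obtain ⟨u, -, rfl⟩ := Finset.mem_map.1 (hsupp ⟨v, huv⟩)
    obtain ⟨v, -, rfl⟩ := Finset.mem_map.1 (hsupp ⟨_, huv.symm⟩)
    exact SimpleGraph.map_adj_apply.2 huv
  exact ⟨G.comap f, (hmem _).1 (hG'.symm ▸ hG), hG'⟩

open scoped Classical in
theorem regularExtensions_insert [DecidableEq V] (W : Finset V) (d : ℕ) (e : Sym2 V)
    (X : Finset (Sym2 V)) :
    regularExtensions W d (insert e X) = {G ∈ regularExtensions W d X | e ∈ G.edgeSet} := by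
  ext G
  simp only [mem_regularExtensions, forall_mem_insert, mem_filter]
  tauto

theorem regularExtensions_eq_empty {W : Finset V} {d : ℕ} {X : Finset (Sym2 V)} {v : V}
    (h : s(v, v) ∈ X) : regularExtensions W d X = ∅ :=
  eq_empty_of_forall_notMem fun G hG => by simpa using (mem_regularExtensions.1 hG).2 _ h

variable [DecidableEq V]

theorem sum_card_regularExtensions_insert {W : Finset V} {v : V} (hv : v ∈ W) (d : ℕ)
    (X : Finset (Sym2 V)) :
    ∑ z ∈ W, #(regularExtensions W d (insert s(v, z) X)) = d * #(regularExtensions W d X) := by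
  classical
  simp_rw [regularExtensions_insert]
  have hdeg : ∀ G ∈ regularExtensions W d X, #{z ∈ W | s(v, z) ∈ G.edgeSet} = d := by
    intro G hG
    obtain ⟨hsupp, hcard⟩ := (mem_regularExtensions.1 hG).1
    rw [← hcard v hv, ← Set.ncard_coe_finset]
    congr 1
    ext z
    simpa using fun h : G.Adj v z => hsupp ⟨v, h.symm⟩
  calc
    _ = ∑ G ∈ regularExtensions W d X, #{z ∈ W | s(v, z) ∈ G.edgeSet} := by
        simp_rw [card_filter]
        exact sum_comm
    _ = d * #(regularExtensions W d X) := by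
        rw [sum_congr rfl hdeg, sum_const, smul_eq_mul, mul_comm]

theorem card_regularExtensions_insert_fresh {W : Finset V} {d : ℕ} {X : Finset (Sym2 V)}
    {v u u' : V} (hu : u ∈ W \ insert v (verts X)) (hu' : u' ∈ W \ insert v (verts X)) :
    #(regularExtensions W d (insert s(v, u') X)) = #(regularExtensions W d (insert s(v, u) X)) := by
  simp only [Finset.mem_sdiff, Finset.mem_insert, not_or] at hu hu'
  set σ : V ↪ V := (Equiv.swap u u').toEmbedding with hσ
  have hW : W.map σ = W := by
    ext z
    rw [mem_map_equiv, Equiv.symm_swap]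
    by_cases hzu : z = u <;> by_cases hzu' : z = u' <;>
      simp_all [Equiv.swap_apply_of_ne_of_ne]
  have hX : X.map σ.sym2Map = X := by
    have hfix : ∀ e ∈ X, σ.sym2Map e = e := by
      intro e he
      refine (Sym2.map_congr (g := id) fun z hz => ?_).trans (congrFun Sym2.map_id e)
      have hz' : z ∈ verts X := mem_verts.2 ⟨e, he, hz⟩
      exact Equiv.swap_apply_of_ne_of_ne (ne_of_mem_of_not_mem hz' hu.2.2)
        (ne_of_mem_of_not_mem hz' hu'.2.2)
    rw [map_eq_image, image_congr hfix, image_id']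
  have hmap := card_regularExtensions_map σ W d (insert s(v, u) X)
  rw [map_insert, hW, hX] at hmap
  simpa [hσ, Equiv.swap_apply_of_ne_of_ne (Ne.symm hu.2.1) (Ne.symm hu'.2.1)] using hmap

theorem mul_card_regularExtensions {W : Finset V} (d : ℕ) {X : Finset (Sym2 V)} {v u : V}
    (hX : insert v (verts X) ⊆ W) (hu : u ∈ W \ insert v (verts X)) :
    d * #(regularExtensions W d X) =
      #(W \ insert v (verts X)) * #(regularExtensions W d (insert s(v, u) X)) +
        degIn X v * #(regularExtensions W d X) +
        ∑ z ∈ nonNbrs X v, #(regularExtensions W d (insert s(v, z) X)) := by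
  have hv : v ∈ W := hX (mem_insert_self _ _)
  set N : V → ℕ := fun z => #(regularExtensions W d (insert s(v, z) X)) with hN
  have hself : N v = 0 := by simp [hN, regularExtensions_eq_empty (mem_insert_self s(v, v) X)]
  have hfresh : ∑ z ∈ W \ insert v (verts X), N z = #(W \ insert v (verts X)) * N u :=
    sum_const_nat fun z hz => card_regularExtensions_insert_fresh hu hz
  have hnbrs : ∑ z ∈ verts X with s(v, z) ∈ X, N z = degIn X v * #(regularExtensions W d X) := by
    rw [← card_filter_mk_mem]
    exact sum_const_nat fun z hz => by simp only [hN, insert_eq_of_mem (mem_filter.1 hz).2]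
  have hrest : ∑ z ∈ verts X with s(v, z) ∉ X, N z = ∑ z ∈ nonNbrs X v, N z := by
    refine (sum_subset (fun z => ?_) fun z hz hz' => ?_).symm
    · simp only [nonNbrs, mem_filter]
      tauto
    · have : z = v := by
        simp only [nonNbrs, mem_filter] at hz hz'
        tauto
      rw [this, hself]
  rw [← sum_card_regularExtensions_insert hv, ← sum_sdiff hX, hfresh,
    sum_insert_of_eq_zero_if_notMem fun _ => hself,
    ← sum_filter_add_sum_filter_not (verts X) (s(v, ·) ∈ X), hnbrs, hrest, add_assoc]

end RegularExtensions

section Switching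

variable {V : Type*} {G : SimpleGraph V} {v w x y : V}

/-- The cycle with edges `vw`, `xy`, `vx`, `wy`. Its symmetric difference with a graph is the
switching operation on these edges. -/
def fourCycle (v w x y : V) : SimpleGraph V :=
  SimpleGraph.fromEdgeSet {s(v, w), s(x, y), s(v, x), s(w, y)}

/-- The edges of the cycle `fourCycle v w x y` belong alternately to `G` (the edges `vw`, `xy`)
and to its complement (the edges `vx`, `wy`). -/
structure Alternating (G : SimpleGraph V) (v w x y : V) : Prop where
  adj_left : G.Adj v w
  adj_right : G.Adj x y
  not_adj_fst : ¬ G.Adj v x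
  not_adj_snd : ¬ G.Adj w y
  ne_fst : v ≠ x
  ne_snd : w ≠ y

theorem fourCycle_flip (v w x y : V) : fourCycle w v y x = fourCycle v w x y := by
  unfold fourCycle
  congr 1
  grind

theorem fourCycle_swap (v w x y : V) : fourCycle x y v w = fourCycle v w x y := by
  unfold fourCycle
  congr 1
  grind

theorem symmDiff_adj_iff (G G' : SimpleGraph V) (a b : V) :
    (G ∆ G').Adj a b ↔ ¬ (G.Adj a b ↔ G'.Adj a b) := by
  simp only [symmDiff_def, SimpleGraph.sup_adj, SimpleGraph.sdiff_adj]
  tauto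

namespace Alternating

theorem flip (h : Alternating G v w x y) : Alternating G w v y x :=
  ⟨h.1.symm, h.2.symm, h.4, h.3, h.6, h.5⟩

theorem swap (h : Alternating G v w x y) : Alternating G x y v w :=
  ⟨h.2, h.1, fun h' => h.3 h'.symm, fun h' => h.4 h'.symm, h.5.symm, h.6.symm⟩

theorem ne_diag (h : Alternating G v w x y) : v ≠ y :=
  fun e => h.not_adj_fst (e ▸ h.adj_right.symm)

theorem symmDiff (h : Alternating G v w x y) :
    Alternating (G ∆ fourCycle v w x y) v x w y := by
  have := h.ne_fst
  have := h.ne_snd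
  have := h.adj_left.ne
  have := h.adj_right.ne
  constructor <;> simp_all [symmDiff_adj_iff, fourCycle, h.1, h.2, h.3, h.4]

theorem neighborSet_symmDiff (h : Alternating G v w x y) :
    (G ∆ fourCycle v w x y).neighborSet v = insert x (G.neighborSet v \ {w}) := by
  obtain ⟨hvw, hxy, hvx, hwy, hnvx, hnwy⟩ := id h
  have hvy := h.ne_diag
  have hvw' := hvw.ne
  ext z
  have hcycle : (fourCycle v w x y).Adj v z ↔ z = w ∨ z = x := by
    simp only [fourCycle, SimpleGraph.fromEdgeSet_adj]
    aesop
  rw [SimpleGraph.mem_neighborSet, symmDiff_adj_iff, hcycle]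
  rcases eq_or_ne z w with rfl | hzw
  · simp_all [h.swap.ne_diag.symm]
  · rcases eq_or_ne z x with rfl | hzx <;> simp_all

theorem ncard_neighborSet_symmDiff (h : Alternating G v w x y) :
    ((G ∆ fourCycle v w x y).neighborSet v).ncard = (G.neighborSet v).ncard := by
  rw [h.neighborSet_symmDiff, Set.ncard_exchange (s := G.neighborSet v) h.not_adj_fst h.adj_left]

theorem isRegularOn_symmDiff {W : Finset V} {d : ℕ} (h : Alternating G v w x y)
    (hG : IsRegularOn G W d) : IsRegularOn (G ∆ fourCycle v w x y) W d := by
  have hother {z : V} (hz : ¬ (z = v ∨ z = w ∨ z = x ∨ z = y)) :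
      (G ∆ fourCycle v w x y).neighborSet z = G.neighborSet z := by
    ext u
    simp only [SimpleGraph.mem_neighborSet, symmDiff_adj_iff, fourCycle,
      SimpleGraph.fromEdgeSet_adj]
    aesop
  constructor
  · rintro z ⟨u, hu⟩
    by_cases hz : z = v ∨ z = w ∨ z = x ∨ z = y
    · rcases hz with rfl | rfl | rfl | rfl
      exacts [hG.support_subset ⟨_, h.adj_left⟩, hG.support_subset ⟨_, h.adj_left.symm⟩,
        hG.support_subset ⟨_, h.adj_right⟩, hG.support_subset ⟨_, h.adj_right.symm⟩]
    · exact hG.support_subset ⟨u, (hother hz).le hu⟩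
  · intro z hz
    rw [← hG.ncard_neighborSet z hz]
    by_cases hz : z = v ∨ z = w ∨ z = x ∨ z = y
    · rcases hz with rfl | rfl | rfl | rfl
      · exact h.ncard_neighborSet_symmDiff
      · rw [← fourCycle_flip, h.flip.ncard_neighborSet_symmDiff]
      · rw [← fourCycle_swap, h.swap.ncard_neighborSet_symmDiff]
      · rw [← fourCycle_swap, ← fourCycle_flip, h.swap.flip.ncard_neighborSet_symmDiff]
    · rw [hother hz]

end Alternating

variable [DecidableEq V]

open scoped Classical in
theorem card_filter_notMem_add (W : Finset V) (d : ℕ) (X : Finset (Sym2 V)) (e e' : Sym2 V) :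
    #{G ∈ regularExtensions W d X | e ∉ G.edgeSet ∧ e' ∉ G.edgeSet} +
        #(regularExtensions W d (insert e X)) + #(regularExtensions W d (insert e' X)) =
      #(regularExtensions W d X) + #(regularExtensions W d (insert e' (insert e X))) := by
  simp only [regularExtensions_insert, filter_filter]
  set R := regularExtensions W d X
  have hunion := card_union_add_card_inter {G ∈ R | e ∈ G.edgeSet} {G ∈ R | e' ∈ G.edgeSet}
  rw [← filter_or, ← filter_and] at hunion
  have hcompl := card_filter_add_card_filter_not (s := R) (fun G => e ∈ G.edgeSet ∨ e' ∈ G.edgeSet)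
  simp only [not_or] at hcompl
  lia

open scoped Classical in
theorem card_filter_alternating_le (W : Finset V) (d : ℕ) {X : Finset (Sym2 V)}
    (hX : Disjoint X {s(v, w), s(x, y), s(v, x), s(w, y)}) (hvx : v ≠ x) (hwy : w ≠ y) :
    #{G ∈ regularExtensions W d (insert s(v, w) (insert s(x, y) X)) |
        s(v, x) ∉ G.edgeSet ∧ s(w, y) ∉ G.edgeSet} ≤
      #{G ∈ regularExtensions W d (insert s(v, x) (insert s(w, y) X)) |
        s(v, w) ∉ G.edgeSet ∧ s(x, y) ∉ G.edgeSet} := by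
  refine card_le_card_of_injOn (· ∆ fourCycle v w x y) ?_
    (symmDiff_left_injective _).injOn
  intro G hG
  simp only [coe_filter, Set.mem_ofPred_eq, mem_regularExtensions, forall_mem_insert,
    SimpleGraph.mem_edgeSet] at hG ⊢
  obtain ⟨⟨hreg, hvw, hxy, hXG⟩, hnvx, hnwy⟩ := hG
  have h : Alternating G v w x y := ⟨hvw, hxy, hnvx, hnwy, hvx, hwy⟩
  obtain ⟨hvx', hwy', hvw', hxy', -, -⟩ := h.symmDiff
  refine ⟨⟨h.isRegularOn_symmDiff hreg, hvx', hwy', ?_⟩, hvw', hxy'⟩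
  intro e he
  have he' := disjoint_left.1 hX he
  induction e with | _ a b
  rw [SimpleGraph.mem_edgeSet, symmDiff_adj_iff]
  have hcycle : ¬ (fourCycle v w x y).Adj a b := fun hab => he' (by simpa using hab.1)
  simpa [hcycle] using hXG _ he

theorem card_regularExtensions_switch (W : Finset V) (d : ℕ) {X Y Z : Finset (Sym2 V)}
    (hX : Disjoint X {s(v, w), s(x, y), s(v, x), s(w, y)})
    (hvw : v ≠ w) (hxy : x ≠ y) (hvx : v ≠ x) (hwy : w ≠ y)
    (hY : Y = insert s(v, w) (insert s(x, y) X)) (hZ : Z = insert s(v, x) (insert s(w, y) X)) :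
    #(regularExtensions W d Y) + #(regularExtensions W d (insert s(v, w) Z)) +
        #(regularExtensions W d (insert s(x, y) Z)) =
      #(regularExtensions W d Z) + #(regularExtensions W d (insert s(v, x) Y)) +
        #(regularExtensions W d (insert s(w, y) Y)) := by
  classical
  have hX' : Disjoint X {s(v, x), s(w, y), s(v, w), s(x, y)} := by
    convert hX using 1
    grind
  have hbij := (card_filter_alternating_le W d hX hvx hwy).antisymm
    (card_filter_alternating_le W d hX' hvw hxy)
  rw [← hY, ← hZ] at hbij
  have hfour : insert s(w, y) (insert s(v, x) Y) = insert s(x, y) (insert s(v, w) Z) := by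
    grind
  have hYcount := card_filter_notMem_add W d Y s(v, x) s(w, y)
  have hZcount := card_filter_notMem_add W d Z s(v, w) s(x, y)
  rw [hbij, hfour] at hYcount
  lia

end Switching

section Existence

theorem ncard_neighborSet_compl {V : Type*} [Finite V] (G : SimpleGraph V) (v : V) :
    (Gᶜ.neighborSet v).ncard = Nat.card V - 1 - (G.neighborSet v).ncard := by
  have h : Gᶜ.neighborSet v = (insert v (G.neighborSet v))ᶜ := by
    ext w
    simp [SimpleGraph.neighborSet_compl, and_comm]
  rw [h, Set.ncard_compl, Set.ncard_insert_of_notMem (s := G.neighborSet v) G.irrefl, add_comm,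
    Nat.sub_sub]

theorem exists_ncard_neighborSet_eq_two_mul {n k : ℕ} (h : 2 * k < n) :
    ∃ G : SimpleGraph (ZMod n), ∀ v, (G.neighborSet v).ncard = 2 * k := by
  have : NeZero n := ⟨by lia⟩
  let S : Finset ℤ := Icc (-k) k
  let G : SimpleGraph (ZMod n) := SimpleGraph.circulantGraph ((↑) '' (S : Set ℤ))
  refine ⟨G, fun v => ?_⟩
  have hneg {a : ℤ} (ha : a ∈ S) : -a ∈ S := by
    simp only [S, mem_Icc] at ha ⊢
    lia
  have hinj : Set.InjOn (fun a : ℤ => v + (a : ZMod n)) S := by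
    intro a ha b hb hab
    have hdvd := (ZMod.intCast_eq_intCast_iff_dvd_sub b a n).1 (add_left_cancel hab).symm
    simp only [S, coe_Icc, Set.mem_Icc] at ha hb
    exact sub_eq_zero.1 (Int.eq_zero_of_abs_lt_dvd hdvd (by grind))
  have hnbrs : insert v (G.neighborSet v) = (fun a : ℤ => v + (a : ZMod n)) '' S := by
    ext w
    simp only [Set.mem_insert_iff, SimpleGraph.mem_neighborSet, SimpleGraph.circulantGraph_adj, G,
      Set.mem_image]
    constructor
    · rintro (rfl | ⟨-, ⟨a, ha, hw⟩ | ⟨a, ha, hw⟩⟩)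
      · exact ⟨0, by simp [S], by simp⟩
      · exact ⟨-a, hneg ha, by simp [hw]⟩
      · exact ⟨a, ha, by simp [hw]⟩
    · rintro ⟨a, ha, rfl⟩
      exact or_iff_not_imp_left.2 fun hne => ⟨Ne.symm hne, Or.inr ⟨a, ha, by simp⟩⟩
  have hcard : (G.neighborSet v).ncard + 1 = #S := by
    rw [← Set.ncard_insert_of_notMem (s := G.neighborSet v) G.irrefl, hnbrs, hinj.ncard_image,
      Set.ncard_coe_finset]
  rw [Int.card_Icc] at hcard
  lia

theorem exists_ncard_neighborSet_eq {n d : ℕ} (hd : d < n) (h : Even (d * n)) :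
    ∃ G : SimpleGraph (ZMod n), ∀ v, (G.neighborSet v).ncard = d := by
  have : NeZero n := ⟨by lia⟩
  rcases Nat.even_or_odd d with hd_even | hd_odd
  · obtain ⟨k, rfl⟩ := hd_even.two_dvd
    exact exists_ncard_neighborSet_eq_two_mul hd
  · have hn : Even n := (Nat.even_mul.1 h).resolve_left (Nat.not_even_iff_odd.2 hd_odd)
    obtain ⟨k, hk⟩ : 2 ∣ n - 1 - d := by grind
    obtain ⟨G, hG⟩ := exists_ncard_neighborSet_eq_two_mul (n := n) (k := k) (by lia)
    refine ⟨Gᶜ, fun v => ?_⟩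
    rw [ncard_neighborSet_compl, hG, Nat.card_zmod]
    lia

theorem isRegularOn_univ_iff {V : Type*} [Fintype V] {G : SimpleGraph V} {d : ℕ} :
    IsRegularOn G univ d ↔ ∀ v, (G.neighborSet v).ncard = d :=
  ⟨fun h v => h.ncard_neighborSet v (mem_univ v), fun h => ⟨by simp, fun v _ => h v⟩⟩

theorem regularExtensions_empty_nonempty {V : Type*} {W : Finset V} {d : ℕ} (hd : d < #W)
    (h : Even (d * #W)) : (regularExtensions W d ∅).Nonempty := by
  obtain ⟨n, hn⟩ : ∃ n, #W = n := ⟨_, rfl⟩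
  rw [hn] at hd h
  have : NeZero n := ⟨by lia⟩
  obtain ⟨G, hG⟩ := exists_ncard_neighborSet_eq hd h
  let e : ZMod n ≃ W := Fintype.equivOfCardEq (by simp [ZMod.card, hn])
  let f : ZMod n ↪ V := e.toEmbedding.trans (.subtype (· ∈ W))
  have hf : univ.map f = W := by
    rw [← Finset.map_map, map_univ_equiv, univ_eq_attach, attach_map_val]
  have hfG : IsRegularOn (G.map f) (univ.map f) d :=
    (isRegularOn_map_iff f).2 (isRegularOn_univ_iff.2 hG)
  exact ⟨G.map f, mem_regularExtensions.2 ⟨hf ▸ hfG, by simp⟩⟩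

end Existence

section Copies

theorem map_sym2Map_trans {U V W : Type*} (X : Finset (Sym2 U)) (f : U ↪ V) (g : V ↪ W) :
    X.map (f.trans g).sym2Map = (X.map f.sym2Map).map g.sym2Map := by
  rw [Finset.map_map]
  congr 1
  ext e
  simp [Sym2.map_map]

theorem card_regularExtensions_map_embedding {U V : Type*} [Finite U] [Fintype V] (d : ℕ)
    (X : Finset (Sym2 U)) (f g : U ↪ V) :
    #(regularExtensions univ d (X.map f.sym2Map)) =
      #(regularExtensions univ d (X.map g.sym2Map)) := by
  obtain ⟨σ, hσ⟩ := Equiv.Perm.exists_extending_pair g f g.injective f.injective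
  have hf : f = g.trans σ.toEmbedding := by
    ext u
    exact (hσ u).symm
  rw [hf, map_sym2Map_trans, ← card_regularExtensions_map σ.toEmbedding univ d (X.map g.sym2Map),
    map_univ_equiv]

theorem card_regularExtensions_fin {n : ℕ} (d : ℕ) (X : Finset (Sym2 (Fin n))) :
    #(regularExtensions univ d X) =
      #(regularExtensions (range n) d (X.map Fin.valEmbedding.sym2Map)) := by
  rw [← Nat.Iio_eq_range, ← Fin.map_valEmbedding_univ, card_regularExtensions_map]

variable {t : ℕ} (H : SimpleGraph (Fin t)) [DecidableRel H.Adj]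

/-- The edges of `H`, with the vertices regarded as natural numbers. -/
def natEdges : Finset (Sym2 ℕ) := H.edgeFinset.map Fin.valEmbedding.sym2Map

theorem card_regularExtensions_map_fin {n : ℕ} (d : ℕ) (f : Fin t ↪ Fin n) :
    #(regularExtensions univ d (H.edgeFinset.map f.sym2Map)) =
      #(regularExtensions (range n) d (natEdges H)) := by
  have htn : t ≤ n := by simpa using Fintype.card_le_of_embedding f
  have hval : (Fin.castLEEmb htn).trans Fin.valEmbedding = Fin.valEmbedding := rfl
  rw [card_regularExtensions_map_embedding d _ f (Fin.castLEEmb htn),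
    card_regularExtensions_fin, ← map_sym2Map_trans, hval, natEdges]

theorem sum_embCount (n d : ℕ) :
    ∑ G ∈ regularExtensions (univ : Finset (Fin n)) d ∅, embCount H G =
      n.descFactorial t * #(regularExtensions (range n) d (natEdges H)) := by
  classical
  have hext (f : Fin t ↪ Fin n) :
      #{G ∈ regularExtensions univ d ∅ | ∀ i j, H.Adj i j → G.Adj (f i) (f j)} =
        #(regularExtensions (range n) d (natEdges H)) := by
    rw [← card_regularExtensions_map_fin H d f]
    congr 1
    ext G
    simp only [mem_filter, mem_regularExtensions, forall_mem_map, SimpleGraph.mem_edgeFinset,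
      Sym2.forall]
    simp
  calc
    _ = ∑ G ∈ regularExtensions univ d ∅,
        #{f : Fin t ↪ Fin n | ∀ i j, H.Adj i j → G.Adj (f i) (f j)} := by
      simp_rw [embCount, Nat.card_eq_fintype_card, Fintype.card_subtype]
    _ = ∑ f : Fin t ↪ Fin n,
        #{G ∈ regularExtensions univ d ∅ | ∀ i j, H.Adj i j → G.Adj (f i) (f j)} := by
      simp_rw [card_filter]
      exact sum_comm
    _ = _ := by simp [hext, Fintype.card_embedding_eq]

theorem expect_copyCount (n d : ℕ) :
    expect (fun G : SimpleGraph (Fin n) => ∀ i, deg G i = d) (copyCount H) =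
      (n.descFactorial t : ℝ) / (Nat.card (H ≃g H) : ℝ) *
        (#(regularExtensions (range n) d (natEdges H)) / #(regularExtensions (range n) d ∅)) := by
  have hmem (G : SimpleGraph (Fin n)) :
      (∀ i, deg G i = d) ↔ G ∈ regularExtensions univ d ∅ := by
    simp [mem_regularExtensions, isRegularOn_univ_iff, deg]
  have hcard : Nat.card {G : SimpleGraph (Fin n) // ∀ i, deg G i = d} =
      #(regularExtensions (range n) d ∅) := by
    rw [← map_empty (Function.Embedding.sym2Map Fin.valEmbedding), ← card_regularExtensions_fin]
    exact Nat.subtype_card _ fun G => (hmem G).symm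
  have hsum : ∑ᶠ G ∈ {G : SimpleGraph (Fin n) | ∀ i, deg G i = d}, copyCount H G =
      n.descFactorial t * #(regularExtensions (range n) d (natEdges H)) / Nat.card (H ≃g H) := by
    simp only [Set.mem_ofPred_eq, hmem, ← mem_coe, copyCount]
    rw [finsum_mem_coe_finset, ← sum_div, ← Nat.cast_sum, sum_embCount, Nat.cast_mul]
  rw [_root_.expect, hsum, hcard]
  ring

end Copies

section DegreeProduct

/-- The product of `(d)_k / d ^ k` over the vertices covered by `X`, where `k` is the degree in `X`.
The probability that a random `d`-regular graph contains `X` is asymptotically this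
product times `(d / n) ^ #X`. -/
def degProd {V : Type*} [DecidableEq V] (X : Finset (Sym2 V)) (d : ℕ) : ℝ :=
  ∏ v ∈ verts X, (d.descFactorial (degIn X v) : ℝ) / d ^ degIn X v

theorem descFactorial_succ_div_pow {d : ℕ} (hd : 0 < d) (k : ℕ) :
    (d.descFactorial (k + 1) : ℝ) / d ^ (k + 1) = d.descFactorial k / d ^ k * (1 - k / d) := by
  rcases le_or_gt k d with hk | hk
  · rw [Nat.descFactorial_succ]
    push_cast [hk]
    field_simp
    ring
  · simp [Nat.descFactorial_of_lt hk, Nat.descFactorial_succ]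

theorem pow_le_pow_mul_descFactorial {d k : ℕ} (hk : k ≤ d) :
    d ^ k ≤ k ^ k * d.descFactorial k := by
  rcases k.eq_zero_or_pos with rfl | hk₀
  · simp
  have hle : d ≤ k * (d + 1 - k) := by
    obtain ⟨m, rfl⟩ := Nat.exists_eq_add_of_le hk
    rw [show k + m + 1 - k = m + 1 by lia]
    nlinarith
  calc
    d ^ k ≤ (k * (d + 1 - k)) ^ k := Nat.pow_le_pow_left hle k
    _ = k ^ k * (d + 1 - k) ^ k := mul_pow _ _ _
    _ ≤ k ^ k * d.descFactorial k := Nat.mul_le_mul_left _ (Nat.pow_sub_le_descFactorial d k)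

variable {V V' : Type*} [DecidableEq V] [DecidableEq V']

theorem degProd_empty (d : ℕ) : degProd (∅ : Finset (Sym2 V)) d = 1 := by
  simp [degProd, verts]

theorem degProd_nonneg (X : Finset (Sym2 V)) (d : ℕ) : 0 ≤ degProd X d :=
  prod_nonneg fun _ _ => by positivity

theorem degProd_le_one (X : Finset (Sym2 V)) (d : ℕ) : degProd X d ≤ 1 := by
  refine prod_le_one (fun _ _ => by positivity) fun v _ => div_le_one_of_le₀ ?_ (by positivity)
  exact_mod_cast Nat.descFactorial_le_pow d (degIn X v)

theorem degProd_eq_prod {X : Finset (Sym2 V)} {S : Finset V} (hS : verts X ⊆ S) (d : ℕ) :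
    degProd X d = ∏ v ∈ S, (d.descFactorial (degIn X v) : ℝ) / d ^ degIn X v :=
  prod_subset hS fun v _ hv => by simp [degIn_eq_zero hv]

theorem degProd_map (X : Finset (Sym2 V)) (f : V ↪ V') (d : ℕ) :
    degProd (X.map f.sym2Map) d = degProd X d := by
  simp only [degProd, verts_map, prod_map, degIn_map]

theorem degProd_insert {X : Finset (Sym2 V)} {v w : V} (hvw : v ≠ w) (h : s(v, w) ∉ X) {d : ℕ}
    (hd : 0 < d) :
    degProd (insert s(v, w) X) d =
      degProd X d * (1 - degIn X v / d) * (1 - degIn X w / d) := by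
  have hS : verts X ⊆ verts (insert s(v, w) X) := by
    rw [verts_insert]
    exact (subset_insert _ _).trans (subset_insert _ _)
  have hfactor (z : V) : (d.descFactorial (degIn (insert s(v, w) X) z) : ℝ) /
      d ^ degIn (insert s(v, w) X) z = d.descFactorial (degIn X z) / d ^ degIn X z *
        ((if z = v then 1 - (degIn X v : ℝ) / d else 1) *
          if z = w then 1 - (degIn X w : ℝ) / d else 1) := by
    rw [degIn_insert h]
    rcases eq_or_ne z v with rfl | hzv
    · simp only [hvw, true_or, if_true, if_false, mul_one, descFactorial_succ_div_pow hd]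
    · rcases eq_or_ne z w with rfl | hzw
      · simp only [hzv, or_true, if_true, if_false, one_mul, descFactorial_succ_div_pow hd]
      · simp [hzv, hzw]
  rw [degProd, prod_congr rfl fun z _ => hfactor z, prod_mul_distrib, prod_mul_distrib,
    prod_ite_eq', prod_ite_eq', ← degProd_eq_prod hS, if_pos (by simp [verts_insert]),
    if_pos (by simp [verts_insert]), mul_assoc]

theorem exists_pos_le_degProd (X : Finset (Sym2 V)) :
    ∃ c > 0, ∀ d : ℕ, 0 < d → (∀ v, degIn X v ≤ d) → c ≤ degProd X d := by
  refine ⟨∏ v ∈ verts X, 1 / ((degIn X v) ^ degIn X v : ℝ),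
    prod_pos fun v _ => one_div_pos.2 ?_, fun d hd hX => ?_⟩
  · exact_mod_cast Nat.pow_self_pos
  · refine prod_le_prod (fun _ _ => by positivity) fun v _ => ?_
    rw [div_le_div_iff₀ (by exact_mod_cast Nat.pow_self_pos) (by positivity), one_mul, mul_comm]
    exact_mod_cast pow_le_pow_mul_descFactorial (hX v)

end DegreeProduct

section NatEdges

variable {t : ℕ} (H : SimpleGraph (Fin t)) [DecidableRel H.Adj]

theorem loopless_natEdges : Loopless (natEdges H) := by
  simp only [Loopless, natEdges, forall_mem_map, Function.Embedding.sym2Map_apply,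
    Sym2.isDiag_map Fin.valEmbedding.injective]
  exact fun e he => H.not_isDiag_of_mem_edgeFinset he

theorem card_natEdges : #(natEdges H) = nedges H := by
  rw [natEdges, card_map, nedges, ← SimpleGraph.coe_edgeFinset, Set.ncard_coe_finset]

theorem deg_eq_degree (v : Fin t) : deg H v = H.degree v :=
  Set.ncard_eq_toFinset_card' _

theorem degIn_edgeFinset (v : Fin t) : degIn H.edgeFinset v = deg H v := by
  rw [degIn, ← SimpleGraph.incidenceFinset_eq_filter, SimpleGraph.card_incidenceFinset_eq_degree,
    deg_eq_degree]

theorem degIn_natEdges_le (v : ℕ) : degIn (natEdges H) v ≤ maxDeg H := by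
  by_cases hv : v ∈ verts (natEdges H)
  · rw [natEdges, verts_map] at hv
    obtain ⟨i, -, rfl⟩ := Finset.mem_map.1 hv
    rw [natEdges, degIn_map, degIn_edgeFinset]
    exact le_sup (mem_univ i)
  · simp [degIn_eq_zero hv]

theorem prod_descFactorial_deg {d : ℕ} (hd : 0 < d) :
    ∏ v, (d.descFactorial (deg H v) : ℝ) = degProd (natEdges H) d * d ^ (2 * nedges H) := by
  have hsum : ∑ v, deg H v = 2 * nedges H := by
    simp_rw [deg_eq_degree, H.sum_degrees_eq_twice_card_edges, ← card_natEdges, natEdges, card_map]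
  rw [natEdges, degProd_map, degProd_eq_prod (subset_univ _), ← hsum, ← prod_pow_eq_pow_sum,
    ← prod_mul_distrib]
  refine prod_congr rfl fun v _ => ?_
  rw [degIn_edgeFinset, div_mul_cancel₀ _ (by positivity)]

end NatEdges

section Switchable

variable {V : Type*} [DecidableEq V] {X : Finset (Sym2 V)} {v w x y : V}

@[elab_as_elim]
theorem loopless_induction {motive : Finset (Sym2 V) → Prop} (empty : motive ∅)
    (insert_edge : ∀ X v w, Loopless X → v ≠ w → s(v, w) ∉ X → motive X →
      motive (insert s(v, w) X))
    (hX : Loopless X) : motive X := by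
  induction X using Finset.induction_on with
  | empty => exact empty
  | insert e X he ih =>
    have hX' : Loopless X := fun e' he' => hX e' (mem_insert_of_mem he')
    have hvw := hX e (mem_insert_self e X)
    induction e with | _ v w
    exact insert_edge X v w hX' (by simpa using hvw) he (ih hX')

/-- The missing edge `vw` of `X` can be created by a switching that uses the new vertices
`x` and `y`. -/
structure Switchable (X : Finset (Sym2 V)) (v w x y : V) : Prop where
  left_ne : v ≠ w
  left_notMem : s(v, w) ∉ X
  right_ne : x ≠ y
  fst_notMem : x ∉ insert v (insert w (verts X))
  snd_notMem : y ∉ insert v (insert w (verts X))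

theorem exists_switchable [Infinite V] (hvw : v ≠ w) (h : s(v, w) ∉ X) :
    ∃ x y, Switchable X v w x y := by
  obtain ⟨x, hx⟩ := Infinite.exists_notMem_finset (insert v (insert w (verts X)))
  obtain ⟨y, hy⟩ := Infinite.exists_notMem_finset (insert x (insert v (insert w (verts X))))
  rw [mem_insert, not_or] at hy
  exact ⟨x, y, hvw, h, Ne.symm hy.1, hx, hy.2⟩

namespace Switchable

theorem flip (h : Switchable X v w x y) : Switchable X w v y x where
  left_ne := h.left_ne.symm
  left_notMem := Sym2.eq_swap ▸ h.left_notMem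
  right_ne := h.right_ne.symm
  fst_notMem := Finset.insert_comm v w _ ▸ h.snd_notMem
  snd_notMem := Finset.insert_comm v w _ ▸ h.fst_notMem

theorem fst_fresh (h : Switchable X v w x y) : x ≠ v ∧ x ≠ w ∧ x ∉ verts X := by
  simpa using h.fst_notMem

theorem snd_fresh (h : Switchable X v w x y) : y ≠ v ∧ y ≠ w ∧ y ∉ verts X :=
  let ⟨hw, hv, hX⟩ := h.flip.fst_fresh; ⟨hv, hw, hX⟩

theorem mk_fst_notMem (h : Switchable X v w x y) (z : V) : s(z, x) ∉ X :=
  mk_notMem_of_notMem_verts h.fst_fresh.2.2 z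

theorem mk_snd_notMem (h : Switchable X v w x y) (z : V) : s(z, y) ∉ X :=
  mk_notMem_of_notMem_verts h.snd_fresh.2.2 z

theorem left_notMem_insert (h : Switchable X v w x y) : s(v, w) ∉ insert s(x, y) X := by
  have := h.fst_fresh
  grind [h.left_notMem]

theorem fst_notMem_insert (h : Switchable X v w x y) : s(v, x) ∉ insert s(w, y) X := by
  have := h.fst_fresh
  grind [h.mk_fst_notMem v, h.right_ne]

theorem degIn_left (h : Switchable X v w x y) (z : V) :
    degIn (insert s(v, w) (insert s(x, y) X)) z =
      degIn X z + if z = v ∨ z = w ∨ z = x ∨ z = y then 1 else 0 := by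
  have := h.fst_fresh
  have := h.snd_fresh
  rw [degIn_insert h.left_notMem_insert, degIn_insert (h.mk_snd_notMem x)]
  grind

theorem degIn_right (h : Switchable X v w x y) (z : V) :
    degIn (insert s(v, x) (insert s(w, y) X)) z =
      degIn X z + if z = v ∨ z = w ∨ z = x ∨ z = y then 1 else 0 := by
  have := h.left_ne
  have := h.right_ne
  have := h.fst_fresh
  have := h.snd_fresh
  rw [degIn_insert h.fst_notMem_insert, degIn_insert (h.mk_snd_notMem w)]
  grind

theorem fst_notMem_left (h : Switchable X v w x y) :
    s(v, x) ∉ insert s(v, w) (insert s(x, y) X) := by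
  have := h.fst_fresh
  have := h.snd_fresh
  grind [h.mk_fst_notMem v]

theorem left_notMem_right (h : Switchable X v w x y) :
    s(v, w) ∉ insert s(v, x) (insert s(w, y) X) := by
  have := h.fst_fresh
  have := h.snd_fresh
  grind [h.left_notMem]

theorem right_notMem_right (h : Switchable X v w x y) :
    s(x, y) ∉ insert s(v, x) (insert s(w, y) X) := by
  have := h.fst_fresh
  have := h.snd_fresh
  grind [h.mk_snd_notMem x]

variable {d : ℕ}

theorem degProd_left (h : Switchable X v w x y) (hd : 0 < d) :
    degProd (insert s(v, w) (insert s(x, y) X)) d =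
      degProd X d * (1 - degIn X v / d) * (1 - degIn X w / d) := by
  have := h.fst_fresh
  have := h.snd_fresh
  simp_all [degProd_insert h.left_ne h.left_notMem_insert hd, degIn_insert (h.mk_snd_notMem x),
    degProd_insert h.right_ne (h.mk_snd_notMem x) hd, degIn_eq_zero, eq_comm]

theorem degProd_right (h : Switchable X v w x y) (hd : 0 < d) :
    degProd (insert s(v, x) (insert s(w, y) X)) d =
      degProd (insert s(v, w) (insert s(x, y) X)) d := by
  obtain ⟨hxv, hxw, hxX⟩ := h.fst_fresh
  obtain ⟨hyv, hyw, hyX⟩ := h.snd_fresh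
  rw [h.degProd_left hd, degProd_insert hxv.symm h.fst_notMem_insert hd,
    degProd_insert hyw.symm (h.mk_snd_notMem w) hd, degIn_insert (h.mk_snd_notMem w),
    degIn_insert (h.mk_snd_notMem w), degIn_eq_zero hxX, degIn_eq_zero hyX]
  simp only [h.left_ne, hyv.symm, hxw, h.right_ne, or_self, if_false, add_zero, Nat.cast_zero,
    zero_div, sub_zero, mul_one]
  ring

theorem degProd_insert_fst_left (h : Switchable X v w x y) (hd : 0 < d) :
    degProd (insert s(v, x) (insert s(v, w) (insert s(x, y) X))) d =
      degProd (insert s(v, w) (insert s(x, y) X)) d *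
        (1 - (degIn X v + 1) / d) * (1 - 1 / d) := by
  rw [degProd_insert h.fst_fresh.1.symm h.fst_notMem_left hd, h.degIn_left, h.degIn_left,
    degIn_eq_zero h.fst_fresh.2.2]
  simp

theorem degProd_insert_left_right (h : Switchable X v w x y) (hd : 0 < d) :
    degProd (insert s(v, w) (insert s(v, x) (insert s(w, y) X))) d =
      degProd (insert s(v, x) (insert s(w, y) X)) d *
        (1 - (degIn X v + 1) / d) * (1 - (degIn X w + 1) / d) := by
  rw [degProd_insert h.left_ne h.left_notMem_right hd, h.degIn_right, h.degIn_right]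
  simp

theorem degProd_insert_right_right (h : Switchable X v w x y) (hd : 0 < d) :
    degProd (insert s(x, y) (insert s(v, x) (insert s(w, y) X))) d =
      degProd (insert s(v, x) (insert s(w, y) X)) d * (1 - 1 / d) * (1 - 1 / d) := by
  rw [degProd_insert h.right_ne h.right_notMem_right hd, h.degIn_right, h.degIn_right,
    degIn_eq_zero h.fst_fresh.2.2, degIn_eq_zero h.snd_fresh.2.2]
  simp

theorem card_regularExtensions (h : Switchable X v w x y) (W : Finset V) (d : ℕ) :
    #(regularExtensions W d (insert s(v, w) (insert s(x, y) X))) +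
        #(regularExtensions W d (insert s(v, w) (insert s(v, x) (insert s(w, y) X)))) +
        #(regularExtensions W d (insert s(x, y) (insert s(v, x) (insert s(w, y) X)))) =
      #(regularExtensions W d (insert s(v, x) (insert s(w, y) X))) +
        #(regularExtensions W d (insert s(v, x) (insert s(v, w) (insert s(x, y) X)))) +
        #(regularExtensions W d (insert s(w, y) (insert s(v, w) (insert s(x, y) X)))) := by
  refine card_regularExtensions_switch W d ?_ h.left_ne h.right_ne h.fst_fresh.1.symm
    h.snd_fresh.2.1.symm rfl rfl
  simp [h.left_notMem, h.mk_fst_notMem, h.mk_snd_notMem]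

end Switchable

end Switchable

section NormProb

/-- The density `d / n` of a `d`-regular graph on `n` vertices, where `p = (n, d)`. -/
def density (p : ℕ × ℕ) : ℝ := p.2 / p.1

/-- The probability that a random `d`-regular graph on `range n` contains `X`, divided by
`(d / n) ^ #X`, where `p = (n, d)`. -/
def normProb (X : Finset (Sym2 ℕ)) (p : ℕ × ℕ) : ℝ :=
  #(regularExtensions (range p.1) p.2 X) / #(regularExtensions (range p.1) p.2 ∅) / density p ^ #X

theorem density_nonneg (p : ℕ × ℕ) : 0 ≤ density p := by
  unfold density
  positivity

theorem density_pos {p : ℕ × ℕ} (hn : 0 < p.1) (hd : 0 < p.2) : 0 < density p := by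
  unfold density
  positivity

variable {X : Finset (Sym2 ℕ)} {v w x y u : ℕ} {p : ℕ × ℕ}

theorem normProb_nonneg (X : Finset (Sym2 ℕ)) (p : ℕ × ℕ) : 0 ≤ normProb X p :=
  div_nonneg (by positivity) (pow_nonneg (density_nonneg p) _)

theorem normProb_empty (hd : p.2 < p.1) (h : Even (p.2 * p.1)) : normProb ∅ p = 1 := by
  have hne : (#(regularExtensions (range p.1) p.2 ∅) : ℝ) ≠ 0 := by
    have := regularExtensions_empty_nonempty (W := range p.1) (by simpa using hd) (by simpa using h)
    exact_mod_cast this.card_ne_zero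
  rw [normProb, card_empty, pow_zero, div_one, div_self hne]

theorem density_mul_normProb_insert {e : Sym2 ℕ} (he : e ∉ X) (hp : density p ≠ 0) :
    density p * normProb (insert e X) p =
      #(regularExtensions (range p.1) p.2 (insert e X)) /
        #(regularExtensions (range p.1) p.2 ∅) / density p ^ #X := by
  rw [normProb, card_insert_of_notMem he, pow_succ]
  field_simp

theorem normProb_attach (hn : 0 < p.1) (hd : 0 < p.2) (hX : insert v (verts X) ⊆ range p.1)
    (hu : u ∈ range p.1 \ insert v (verts X)) :
    (1 - (degIn X v : ℝ) / p.2) * normProb X p =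
      (1 - (#(insert v (verts X)) : ℝ) / p.1) * normProb (insert s(v, u) X) p +
        (∑ z ∈ nonNbrs X v, normProb (insert s(v, z) X) p) / p.1 := by
  have hε := (density_pos hn hd).ne'
  have hux : u ∉ verts X := fun h => (Finset.mem_sdiff.1 hu).2 (mem_insert_of_mem h)
  have hcard := mul_card_regularExtensions p.2 hX hu
  rw [card_sdiff_of_subset hX, card_range] at hcard
  have hle : #(insert v (verts X)) ≤ p.1 := by simpa using card_le_card hX
  have hsum : density p * ∑ z ∈ nonNbrs X v, normProb (insert s(v, z) X) p =
      (∑ z ∈ nonNbrs X v, (#(regularExtensions (range p.1) p.2 (insert s(v, z) X)) : ℝ)) /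
        #(regularExtensions (range p.1) p.2 ∅) / density p ^ #X := by
    rw [mul_sum, sum_div, sum_div]
    exact sum_congr rfl fun z hz => density_mul_normProb_insert (mem_filter.1 hz).2.2 hε
  have hnew := density_mul_normProb_insert (mk_notMem_of_notMem_verts hux v) hε
  have hscaled : (p.2 : ℝ) * normProb X p =
      (p.1 - #(insert v (verts X))) * (density p * normProb (insert s(v, u) X) p) +
        degIn X v * normProb X p +
        density p * ∑ z ∈ nonNbrs X v, normProb (insert s(v, z) X) p := by
    rw [hsum, hnew, normProb, ← Nat.cast_sub hle]
    simp only [← mul_div_assoc, ← add_div]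
    congr 2
    exact_mod_cast hcard
  have hn' : (p.1 : ℝ) ≠ 0 := by exact_mod_cast hn.ne'
  have hd' : (p.2 : ℝ) ≠ 0 := by exact_mod_cast hd.ne'
  rw [density] at hscaled
  field_simp at hscaled ⊢
  linear_combination hscaled

theorem Switchable.normProb_sub (h : Switchable X v w x y) (hn : 0 < p.1) (hd : 0 < p.2) :
    normProb (insert s(v, w) (insert s(x, y) X)) p -
        density p * (normProb (insert s(v, x) (insert s(v, w) (insert s(x, y) X))) p +
          normProb (insert s(w, y) (insert s(v, w) (insert s(x, y) X))) p) =
      normProb (insert s(v, x) (insert s(w, y) X)) p -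
        density p * (normProb (insert s(v, w) (insert s(v, x) (insert s(w, y) X))) p +
          normProb (insert s(x, y) (insert s(v, x) (insert s(w, y) X))) p) := by
  have hε := (density_pos hn hd).ne'
  have hsnd : s(w, y) ∉ insert s(v, w) (insert s(x, y) X) := by
    have := h.flip.fst_notMem_left
    rwa [Sym2.eq_swap (a := w), Sym2.eq_swap (a := y)] at this
  have hcard : #(insert s(v, w) (insert s(x, y) X)) = #(insert s(v, x) (insert s(w, y) X)) := by
    rw [card_insert_of_notMem h.left_notMem_insert, card_insert_of_notMem h.fst_notMem_insert,
      card_insert_of_notMem (h.mk_snd_notMem x), card_insert_of_notMem (h.mk_snd_notMem w)]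
  rw [mul_add, mul_add, density_mul_normProb_insert h.fst_notMem_left hε,
    density_mul_normProb_insert hsnd hε, density_mul_normProb_insert h.left_notMem_right hε,
    density_mul_normProb_insert h.right_notMem_right hε, normProb, normProb, hcard]
  simp only [← add_div, ← sub_div]
  congr 2
  have hcount := h.card_regularExtensions (range p.1) p.2
  rify at hcount
  linear_combination hcount

end NormProb

section Sparse

/-- The filter on pairs `(n, d)` of positive integers with `d * n` even that expresses
`d / n → 0`. -/
def sparse : Filter (ℕ × ℕ) :=
  comap density (𝓝 0) ⊓ 𝓟 {p | 0 < p.1 ∧ 0 < p.2 ∧ Even (p.2 * p.1)}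

theorem tendsto_density : Tendsto density sparse (𝓝 0) :=
  tendsto_comap.mono_left inf_le_left

theorem eventually_sparse : ∀ᶠ p in sparse, 0 < p.1 ∧ 0 < p.2 ∧ Even (p.2 * p.1) :=
  mem_inf_of_right (mem_principal_self _)

theorem exists_of_eventually_sparse {P : ℕ × ℕ → Prop} (h : ∀ᶠ p in sparse, P p) :
    ∃ δ : ℝ, 0 < δ ∧ ∀ n d : ℕ, 0 < n → 0 < d → Even (d * n) → (d : ℝ) ≤ δ * n → P (n, d) := by
  rw [sparse, eventually_inf_principal,
    (Metric.nhds_basis_closedBall.comap density).eventually_iff] at h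
  obtain ⟨δ, hδ, h⟩ := h
  refine ⟨δ, hδ, fun n d hn hd hev hle => h ?_ ⟨hn, hd, hev⟩⟩
  have hn' : (0 : ℝ) < n := by exact_mod_cast hn
  rw [Set.mem_preimage, mem_closedBall_zero_iff, Real.norm_of_nonneg (density_nonneg _)]
  exact (div_le_iff₀ hn').2 hle

theorem isBigO_inv_density : (fun p : ℕ × ℕ => (p.1 : ℝ)⁻¹) =O[sparse] density := by
  refine IsBigO.of_bound' ?_
  filter_upwards [eventually_sparse] with p hp
  have hd : (1 : ℝ) ≤ p.2 := by exact_mod_cast hp.2.1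
  rw [Real.norm_of_nonneg (by positivity), Real.norm_of_nonneg (density_nonneg p), density,
    inv_eq_one_div]
  gcongr

theorem tendsto_inv_fst : Tendsto (fun p : ℕ × ℕ => (p.1 : ℝ)⁻¹) sparse (𝓝 0) :=
  isBigO_inv_density.trans_tendsto tendsto_density

theorem tendsto_fst : Tendsto (fun p : ℕ × ℕ => p.1) sparse atTop := by
  have hpos : ∀ᶠ p : ℕ × ℕ in sparse, (p.1 : ℝ)⁻¹ ∈ Set.Ioi (0 : ℝ) := by
    filter_upwards [eventually_sparse] with p hp
    simpa using hp.1
  have hinv := tendsto_inv_nhdsGT_zero.comp (tendsto_nhdsWithin_iff.2 ⟨tendsto_inv_fst, hpos⟩)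
  simpa [Function.comp_def, tendsto_natCast_atTop_iff] using hinv

theorem eventually_subset_range (S : Finset ℕ) : ∀ᶠ p in sparse, S ⊆ range p.1 := by
  filter_upwards [tendsto_fst.eventually_gt_atTop (S.sup id)] with p hp z hz
  exact mem_range.2 ((le_sup (f := id) hz).trans_lt hp)

theorem eventually_normProb_empty : ∀ᶠ p in sparse, normProb ∅ p = 1 := by
  filter_upwards [eventually_sparse, tendsto_density.eventually_lt_const one_pos] with p hp hε
  rw [density, div_lt_one (by exact_mod_cast hp.1)] at hε
  exact normProb_empty (by exact_mod_cast hε) hp.2.2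

theorem isBigO_const_div_snd (a : ℝ) :
    (fun p : ℕ × ℕ => a / p.2) =O[sparse] (fun _ => (1 : ℝ)) := by
  refine IsBigO.of_bound |a| ?_
  filter_upwards [eventually_sparse] with p hp
  have hd : (1 : ℝ) ≤ p.2 := by exact_mod_cast hp.2.1
  rw [norm_one, mul_one, norm_div, Real.norm_eq_abs, Real.norm_of_nonneg (by linarith)]
  exact div_le_self (abs_nonneg a) hd

theorem eventually_normProb_attach {X : Finset (Sym2 ℕ)} {v u : ℕ}
    (hu : u ∉ insert v (verts X)) :
    ∀ᶠ p in sparse, (1 - (degIn X v : ℝ) / p.2) * normProb X p =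
      (1 - (#(insert v (verts X)) : ℝ) / p.1) * normProb (insert s(v, u) X) p +
        (∑ z ∈ nonNbrs X v, normProb (insert s(v, z) X) p) / p.1 := by
  filter_upwards [eventually_sparse, eventually_subset_range (insert v (verts X)),
    eventually_subset_range {u}] with p hp hX hup
  exact normProb_attach hp.1 hp.2.1 hX
    (Finset.mem_sdiff.2 ⟨singleton_subset_iff.1 hup, hu⟩)

end Sparse

section Bounded

variable {X : Finset (Sym2 ℕ)} {v w x y u : ℕ}

theorem isBigO_normProb_attach (hu : u ∉ insert v (verts X)) :
    normProb (insert s(v, u) X) =O[sparse] normProb X := by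
  have hsmall : ∀ᶠ p : ℕ × ℕ in sparse, #(insert v (verts X)) * (p.1 : ℝ)⁻¹ < 1 / 2 := by
    have htendsto := tendsto_inv_fst.const_mul (#(insert v (verts X)) : ℝ)
    exact htendsto.eventually_lt_const (by norm_num)
  refine IsBigO.of_bound 2 ?_
  filter_upwards [eventually_normProb_attach hu, hsmall] with p hp hS
  have hsum : 0 ≤ (∑ z ∈ nonNbrs X v, normProb (insert s(v, z) X) p) / p.1 :=
    div_nonneg (sum_nonneg fun z _ => normProb_nonneg _ p) (by positivity)
  have hdeg : 0 ≤ (degIn X v : ℝ) / p.2 * normProb X p :=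
    mul_nonneg (by positivity) (normProb_nonneg X p)
  have hρ := normProb_nonneg (insert s(v, u) X) p
  rw [Real.norm_of_nonneg hρ, Real.norm_of_nonneg (normProb_nonneg X p)]
  rw [← div_eq_mul_inv] at hS
  nlinarith

theorem isLittleO_normProb_sub_attach (hx : x ∉ verts X) (hy : y ∉ insert x (verts X)) :
    (fun p => normProb X p - normProb (insert s(x, y) X) p) =o[sparse] normProb X := by
  have hsum : (fun p => ∑ z ∈ nonNbrs X x, normProb (insert s(x, z) X) p) =O[sparse]
      normProb X := by
    refine IsBigO.fun_sum fun z hz => ?_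
    rw [Sym2.eq_swap]
    refine isBigO_normProb_attach ?_
    rwa [insert_eq_of_mem (nonNbrs_subset X x hz)]
  have hdiff := hsum.sub ((isBigO_normProb_attach hy).const_mul_left #(insert x (verts X)))
  have hinv : (fun p : ℕ × ℕ => (p.1 : ℝ)⁻¹) =o[sparse] (fun _ => (1 : ℝ)) :=
    (isLittleO_one_iff ℝ).2 tendsto_inv_fst
  refine (hinv.mul_isBigO hdiff).congr' ?_ (by simp)
  filter_upwards [eventually_normProb_attach hy] with p hp
  rw [degIn_eq_zero hx] at hp
  linear_combination -hp

theorem Switchable.isLittleO_normProb_left_sub (h : Switchable X v w x y) :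
    (fun p => normProb (insert s(v, w) X) p -
      (normProb (insert s(v, w) (insert s(x, y) X)) p -
        density p * (normProb (insert s(v, x) (insert s(v, w) (insert s(x, y) X))) p +
          normProb (insert s(w, y) (insert s(v, w) (insert s(x, y) X))) p)))
      =o[sparse] normProb (insert s(v, w) X) := by
  obtain ⟨hxv, hxw, hxX⟩ := h.fst_fresh
  obtain ⟨hyv, hyw, hyX⟩ := h.snd_fresh
  have hxy := h.right_ne
  have hx : normProb (insert s(v, x) (insert s(v, w) (insert s(x, y) X))) =O[sparse]
      normProb (insert s(v, w) X) := by
    have hcomm : insert s(v, x) (insert s(v, w) (insert s(x, y) X)) =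
        insert s(x, y) (insert s(v, x) (insert s(v, w) X)) := by grind
    rw [hcomm]
    refine (isBigO_normProb_attach ?_).trans (isBigO_normProb_attach ?_) <;>
      simp [verts_insert, *, hxy.symm]
  have hy : normProb (insert s(w, y) (insert s(v, w) (insert s(x, y) X))) =O[sparse]
      normProb (insert s(v, w) X) := by
    have hcomm : insert s(w, y) (insert s(v, w) (insert s(x, y) X)) =
        insert s(y, x) (insert s(w, y) (insert s(v, w) X)) := by grind
    rw [hcomm]
    refine (isBigO_normProb_attach ?_).trans (isBigO_normProb_attach ?_) <;>
      simp [verts_insert, *]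
  have hadd : (fun p => density p *
      (normProb (insert s(v, x) (insert s(v, w) (insert s(x, y) X))) p +
        normProb (insert s(w, y) (insert s(v, w) (insert s(x, y) X))) p)) =o[sparse]
      normProb (insert s(v, w) X) := by
    simpa using ((isLittleO_one_iff ℝ).2 tendsto_density).mul_isBigO (hx.add hy)
  have hsub := isLittleO_normProb_sub_attach (X := insert s(v, w) X) (x := x) (y := y)
    (by simp [verts_insert, *]) (by simp [verts_insert, *, hxy.symm])
  rw [Finset.insert_comm] at hsub
  refine (hsub.add hadd).congr_left fun p => ?_
  ring

/-- After attaching the isolated edge `xy`, which costs a factor `1 + o(1)`, the edge `vw` can be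
switched away, and the graph so obtained arises from `X` by attaching two pendant edges. -/
theorem Switchable.isBigO_normProb (h : Switchable X v w x y) :
    normProb (insert s(v, w) X) =O[sparse] normProb X := by
  have hright : normProb (insert s(v, x) (insert s(w, y) X)) =O[sparse] normProb X := by
    obtain ⟨hxv, hxw, hxX⟩ := h.fst_fresh
    obtain ⟨-, hyw, hyX⟩ := h.snd_fresh
    refine (isBigO_normProb_attach ?_).trans (isBigO_normProb_attach ?_) <;>
      simp [verts_insert, *, h.right_ne]
  refine IsBigO.trans (IsBigO.of_bound 2 ?_) hright
  filter_upwards [h.isLittleO_normProb_left_sub.bound one_half_pos, eventually_sparse]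
    with p hp hpos
  have hloss : 0 ≤ density p * (normProb (insert s(v, w) (insert s(v, x) (insert s(w, y) X))) p +
      normProb (insert s(x, y) (insert s(v, x) (insert s(w, y) X))) p) :=
    mul_nonneg (density_nonneg p) (add_nonneg (normProb_nonneg _ p) (normProb_nonneg _ p))
  rw [h.normProb_sub hpos.1 hpos.2.1, Real.norm_of_nonneg (normProb_nonneg _ p)] at hp
  rw [Real.norm_of_nonneg (normProb_nonneg _ p), Real.norm_of_nonneg (normProb_nonneg _ p)]
  linarith [(le_abs_self _).trans hp]

theorem isBigO_normProb_insert (hvw : v ≠ w) (h : s(v, w) ∉ X) :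
    normProb (insert s(v, w) X) =O[sparse] normProb X :=
  let ⟨_, _, hxy⟩ := exists_switchable hvw h
  hxy.isBigO_normProb

theorem isBigO_one_normProb (hX : Loopless X) : normProb X =O[sparse] (fun _ => (1 : ℝ)) := by
  refine loopless_induction ?_ (fun X v w _ hvw h ih => ?_) hX
  · exact EventuallyEq.isBigO eventually_normProb_empty
  · exact (isBigO_normProb_insert hvw h).trans ih

end Bounded

section Expansion

variable {X Y : Finset (Sym2 ℕ)} {v w x y u k : ℕ}

/-- The error of the zeroth-order approximation `degProd X d` to `normProb X (n, d)`. -/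
def probError (X : Finset (Sym2 ℕ)) (p : ℕ × ℕ) : ℝ := normProb X p - degProd X p.2

/-- `normProb X (n, d) = degProd X d + O((d / n) ^ k)` for every simple graph `X`. -/
def ApproxToOrder (k : ℕ) : Prop :=
  ∀ X, Loopless X → probError X =O[sparse] fun p => density p ^ k

/-- `normProb X (n, d) = degProd X d * (1 + (A + B / d) / n) + O((d / n) ^ k)` for some constants
`A` and `B`. -/
def HasExpansion (k : ℕ) (X : Finset (Sym2 ℕ)) : Prop :=
  ∃ A B : ℝ, (fun p : ℕ × ℕ => normProb X p - degProd X p.2 * (1 + (A + B / p.2) / p.1))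
    =O[sparse] fun p => density p ^ k

theorem isBigO_degProd (X : Finset (Sym2 ℕ)) :
    (fun p : ℕ × ℕ => degProd X p.2) =O[sparse] (fun _ => (1 : ℝ)) :=
  IsBigO.of_norm_le fun p => by
    rw [Real.norm_of_nonneg (degProd_nonneg X p.2)]
    exact degProd_le_one X p.2

theorem approxToOrder_zero : ApproxToOrder 0 := fun X hX => by
  simpa [probError] using (isBigO_one_normProb hX).sub (isBigO_degProd X)

theorem hasExpansion_empty (k : ℕ) : HasExpansion k ∅ := by
  refine ⟨0, 0, IsBigO.congr' (isBigO_zero _ sparse) ?_ EventuallyEq.rfl⟩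
  filter_upwards [eventually_normProb_empty] with p hp
  simp [hp, degProd_empty]

theorem approxToOrder_one (h : ∀ X, Loopless X → HasExpansion 1 X) : ApproxToOrder 1 := by
  intro X hX
  obtain ⟨A, B, hAB⟩ := h X hX
  have hcorr : (fun p : ℕ × ℕ => degProd X p.2 * (A + B / p.2) * (p.1 : ℝ)⁻¹) =O[sparse]
      fun p => density p ^ 1 := by
    have hcoeff := (isBigO_degProd X).mul
      ((isBigO_const_const A one_ne_zero sparse).add (isBigO_const_div_snd B))
    simpa using hcoeff.mul isBigO_inv_density
  refine (hAB.add hcorr).congr_left fun p => ?_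
  unfold probError
  ring

theorem HasExpansion.of_isBigO {c : ℝ} (hX : HasExpansion k X)
    (hP : ∀ d : ℕ, 0 < d → degProd Y d = degProd X d * (1 - c / d))
    (h : ∃ A B : ℝ, (fun p : ℕ × ℕ => normProb Y p - (1 - c / p.2) * normProb X p -
      degProd Y p.2 * ((A + B / p.2) / p.1)) =O[sparse] fun p => density p ^ k) :
    HasExpansion k Y := by
  obtain ⟨A, B, hAB⟩ := hX
  obtain ⟨A', B', hAB'⟩ := h
  have hfactor : (fun p : ℕ × ℕ => 1 - c / p.2) =O[sparse] (fun _ => (1 : ℝ)) :=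
    (isBigO_refl _ _).sub (isBigO_const_div_snd c)
  have hscaled := hfactor.mul hAB
  simp only [one_mul] at hscaled
  refine ⟨A + A', B + B', (hAB'.add hscaled).congr' ?_ EventuallyEq.rfl⟩
  filter_upwards [eventually_sparse] with p hp
  rw [hP p.2 hp.2.1]
  ring

theorem isBigO_normProb_sub_attach (hk : ApproxToOrder k) (hX : Loopless X)
    (hu : u ∉ insert v (verts X)) :
    ∃ A B : ℝ, (fun p : ℕ × ℕ => (1 - degIn X v / p.2) * normProb X p -
      normProb (insert s(v, u) X) p - degProd (insert s(v, u) X) p.2 * ((A + B / p.2) / p.1))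
        =O[sparse] fun p => density p ^ (k + 1) := by
  obtain ⟨huv, huX⟩ : u ≠ v ∧ u ∉ verts X := by simpa using hu
  refine ⟨#(nonNbrs X v) - #(insert v (verts X)), -∑ z ∈ nonNbrs X v, (degIn X z : ℝ), ?_⟩
  have herror : (fun p => ∑ z ∈ nonNbrs X v, probError (insert s(v, z) X) p -
      #(insert v (verts X)) * probError (insert s(v, u) X) p) =O[sparse]
      fun p => density p ^ k :=
    (IsBigO.fun_sum fun z hz => hk _ (hX.insert (mem_filter.1 hz).2.1.symm)).sub
      ((hk _ (hX.insert huv.symm)).const_mul_left _)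
  refine (isBigO_inv_density.mul herror).congr' ?_ (by simp [pow_succ'])
  filter_upwards [eventually_normProb_attach hu, eventually_sparse] with p hp hpos
  have hfresh := degProd_insert huv.symm (mk_notMem_of_notMem_verts huX v) hpos.2.1
  rw [degIn_eq_zero huX] at hfresh
  have hnbrs : ∑ z ∈ nonNbrs X v, degProd (insert s(v, z) X) p.2 =
      degProd (insert s(v, u) X) p.2 *
        (#(nonNbrs X v) - (∑ z ∈ nonNbrs X v, (degIn X z : ℝ)) / p.2) := by
    rw [← nsmul_one #(nonNbrs X v), ← sum_const, sum_div, ← sum_sub_distrib, mul_sum]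
    refine sum_congr rfl fun z hz => ?_
    obtain ⟨-, hzv, hz⟩ := mem_filter.1 hz
    rw [degProd_insert hzv.symm hz hpos.2.1, hfresh]
    simp
  simp only [probError, sum_sub_distrib]
  rw [hnbrs, hp]
  ring

theorem HasExpansion.attach (hk : ApproxToOrder k) (h : HasExpansion (k + 1) X) (hX : Loopless X)
    (hu : u ∉ insert v (verts X)) : HasExpansion (k + 1) (insert s(v, u) X) := by
  obtain ⟨huv, huX⟩ : u ≠ v ∧ u ∉ verts X := by simpa using hu
  obtain ⟨A, B, hAB⟩ := isBigO_normProb_sub_attach hk hX hu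
  refine h.of_isBigO (c := degIn X v) (fun d hd => ?_) ⟨-A, -B, hAB.neg_left.congr_left ?_⟩
  · rw [degProd_insert huv.symm (mk_notMem_of_notMem_verts huX v) hd, degIn_eq_zero huX]
    simp
  · intro p
    ring

theorem HasExpansion.of_attach (hk : ApproxToOrder k) (hX : Loopless X)
    (h : HasExpansion (k + 1) (insert s(x, y) X)) (hx : x ∉ verts X)
    (hy : y ∉ insert x (verts X)) : HasExpansion (k + 1) X := by
  obtain ⟨hyx, hyX⟩ : y ≠ x ∧ y ∉ verts X := by simpa using hy
  have hP {d : ℕ} (hd : 0 < d) : degProd (insert s(x, y) X) d = degProd X d := by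
    rw [degProd_insert hyx.symm (mk_notMem_of_notMem_verts hyX x) hd, degIn_eq_zero hx,
      degIn_eq_zero hyX]
    simp
  obtain ⟨A, B, hAB⟩ := isBigO_normProb_sub_attach hk hX hy
  refine h.of_isBigO (c := 0) (fun d hd => by simp [hP hd])
    ⟨A, B, hAB.congr' ?_ EventuallyEq.rfl⟩
  filter_upwards [eventually_sparse] with p hp
  rw [hP hp.2.1, degIn_eq_zero hx]
  simp

theorem Switchable.degProd_balance (h : Switchable X v w x y) {d : ℕ} (hd : 0 < d) :
    degProd (insert s(v, x) (insert s(v, w) (insert s(x, y) X))) d +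
        degProd (insert s(w, y) (insert s(v, w) (insert s(x, y) X))) d -
        degProd (insert s(v, w) (insert s(v, x) (insert s(w, y) X))) d -
        degProd (insert s(x, y) (insert s(v, x) (insert s(w, y) X))) d =
      degProd (insert s(v, w) (insert s(x, y) X)) d * (-(degIn X v * degIn X w) / d ^ 2) := by
  have hsnd := h.flip.degProd_insert_fst_left hd
  rw [Sym2.eq_swap (a := w) (b := v), Sym2.eq_swap (a := y) (b := x)] at hsnd
  rw [h.degProd_insert_fst_left hd, hsnd, h.degProd_insert_left_right hd,
    h.degProd_insert_right_right hd, h.degProd_right hd]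
  field_simp
  ring

theorem Switchable.isBigO_normProb_sub (hk : ApproxToOrder k) (hX : Loopless X)
    (h : Switchable X v w x y) :
    (fun p : ℕ × ℕ => normProb (insert s(v, w) (insert s(x, y) X)) p -
      normProb (insert s(v, x) (insert s(w, y) X)) p -
      degProd (insert s(v, w) (insert s(x, y) X)) p.2 * (-(degIn X v * degIn X w) / p.2 / p.1))
        =O[sparse] fun p => density p ^ (k + 1) := by
  have hY := (hX.insert h.right_ne).insert h.left_ne
  have hZ := (hX.insert h.snd_fresh.2.1.symm).insert h.fst_fresh.1.symm
  have herror := (((hk _ (hY.insert h.fst_fresh.1.symm)).add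
    (hk _ (hY.insert h.snd_fresh.2.1.symm))).sub (hk _ (hZ.insert h.left_ne))).sub
    (hk _ (hZ.insert h.right_ne))
  refine ((isBigO_refl density sparse).mul herror).congr' ?_ (by simp [pow_succ'])
  filter_upwards [eventually_sparse] with p hp
  have hn : (p.1 : ℝ) ≠ 0 := by exact_mod_cast hp.1.ne'
  have hd : (p.2 : ℝ) ≠ 0 := by exact_mod_cast hp.2.1.ne'
  have hmain : (-(degIn X v * degIn X w) / p.2 / p.1 : ℝ) =
      density p * (-(degIn X v * degIn X w) / p.2 ^ 2) := by
    rw [density]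
    field_simp
  rw [hmain]
  unfold probError
  linear_combination density p * -h.degProd_balance hp.2.1 - h.normProb_sub hp.1 hp.2.1

theorem HasExpansion.switch (hk : ApproxToOrder k) (hX : Loopless X) (h : Switchable X v w x y)
    (hZ : HasExpansion (k + 1) (insert s(v, x) (insert s(w, y) X))) :
    HasExpansion (k + 1) (insert s(v, w) (insert s(x, y) X)) := by
  refine hZ.of_isBigO (c := 0) (fun d hd => by simp [h.degProd_right hd])
    ⟨0, -(degIn X v * degIn X w), ?_⟩
  simpa using h.isBigO_normProb_sub hk hX

theorem HasExpansion.insert_edge (hk : ApproxToOrder k) (h : HasExpansion (k + 1) X)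
    (hX : Loopless X) (hvw : v ≠ w) (hmem : s(v, w) ∉ X) :
    HasExpansion (k + 1) (insert s(v, w) X) := by
  obtain ⟨x, y, hxy⟩ := exists_switchable hvw hmem
  obtain ⟨hxv, hxw, hxX⟩ := hxy.fst_fresh
  obtain ⟨hyv, hyw, hyX⟩ := hxy.snd_fresh
  have hne := hxy.right_ne
  have hZ : HasExpansion (k + 1) (insert s(v, x) (insert s(w, y) X)) :=
    (h.attach hk hX (by simp [*])).attach hk (hX.insert hyw.symm) (by simp [verts_insert, *])
  have hY := HasExpansion.switch hk hX hxy hZ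
  rw [Finset.insert_comm] at hY
  exact hY.of_attach hk (hX.insert hvw) (by simp [verts_insert, *])
    (by simp [verts_insert, *, hne.symm])

theorem hasExpansion_succ (hk : ApproxToOrder k) (hX : Loopless X) : HasExpansion (k + 1) X := by
  refine loopless_induction ?_ (fun X v w hX hvw hmem ih => ?_) hX
  · exact hasExpansion_empty _
  · exact ih.insert_edge hk hX hvw hmem

theorem hasExpansion_two (hX : Loopless X) : HasExpansion 2 X :=
  hasExpansion_succ (approxToOrder_one fun _ => hasExpansion_succ approxToOrder_zero) hX

end Expansion

theorem expect_copyCount_eq_mul_div {t : ℕ} (H : SimpleGraph (Fin t)) [DecidableRel H.Adj]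
    {n d : ℕ} (hn : 0 < n) (hd : 0 < d) (hH : degProd (natEdges H) d ≠ 0) :
    expect (fun G : SimpleGraph (Fin n) => ∀ i, deg G i = d) (copyCount H) =
      (n.descFactorial t : ℝ) / (Nat.card (H ≃g H) : ℝ) *
        ((∏ v : Fin t, (d.descFactorial (deg H v) : ℝ)) / ((d : ℝ) * n) ^ nedges H) *
        (normProb (natEdges H) (n, d) / degProd (natEdges H) d) := by
  rw [expect_copyCount, prod_descFactorial_deg H hd, normProb, card_natEdges, density,
    div_pow]
  field_simp
  ring

/-- Expected number of copies of a fixed graph `H` in the random `d`-regular graph. -/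
theorem stmt4 (t h : ℕ) (hh : 1 ≤ h) (H : SimpleGraph (Fin t)) (hEdges : nedges H = h) :
    ∃ A B C δ : ℝ, 0 < C ∧ 0 < δ ∧
      ∀ n d : ℕ, 0 < n → 0 < d → Even (d * n) → maxDeg H ≤ d → (d : ℝ) ≤ δ * n →
        ∃ θ : ℝ, |θ| ≤ C * (d : ℝ) ^ 2 / (n : ℝ) ^ 2 ∧
          expect (fun G : SimpleGraph (Fin n) => ∀ i, deg G i = d) (copyCount H)
            = ((n.descFactorial t : ℝ) / (Nat.card (H ≃g H) : ℝ))
              * ((∏ v : Fin t, (d.descFactorial (deg H v) : ℝ)) / ((d : ℝ) * n) ^ h)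
              * (1 - (A * d + B) / ((d : ℝ) * n) + θ) := by
  classical
  obtain ⟨A, B, hAB⟩ := hasExpansion_two (loopless_natEdges H)
  obtain ⟨C, hC, hbound⟩ := hAB.exists_pos
  obtain ⟨c, hc, hcH⟩ := exists_pos_le_degProd (natEdges H)
  obtain ⟨δ, hδ, hP⟩ := exists_of_eventually_sparse hbound.bound
  refine ⟨-A, -B, C / c, δ, by positivity, hδ, fun n d hn hd heven hH hle => ?_⟩
  have herror := hP n d hn hd heven hle
  have hcd := hcH d hd fun v => (degIn_natEdges_le H v).trans hH
  have hpos : 0 < degProd (natEdges H) d := hc.trans_le hcd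
  refine ⟨(normProb (natEdges H) (n, d) - degProd (natEdges H) d * (1 + (A + B / d) / n)) /
    degProd (natEdges H) d, ?_, ?_⟩
  · rw [abs_div, abs_of_pos hpos, div_le_iff₀ hpos]
    rw [Real.norm_eq_abs, Real.norm_of_nonneg (sq_nonneg _), density, div_pow] at herror
    calc
      _ ≤ C * ((d : ℝ) ^ 2 / n ^ 2) := herror
      _ = C / c * d ^ 2 / n ^ 2 * c := by field_simp
      _ ≤ _ := by gcongr
  · rw [expect_copyCount_eq_mul_div H hn hd hpos.ne', hEdges]
    field_simp
    ring
end
end
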